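/- arXiv:2308.04357 — 6 statements merged into one kernel-verified Lean document; each statement's English description precedes it below -/
import Mathlib

section
/- For all positive integers s, t and n, the ordered Ramsey number satisfies R_<(K_{s+1}, P_n^t) ≤ (24 s^3)^{s t} · n. -/
/-- `χ i j` is the color of the edge `{i, j}` for `i < j`: `true` = red, `false` = blue.
A red ordered copy of the complete ordered graph `K_s`. -/
def ContainsRedClique (N s : ℕ) (χ : Fin N → Fin N → Bool) : Prop :=
  ∃ f : Fin s → Fin N, StrictMono f ∧ ∀ i j : Fin s, i < j → χ (f i) (f j) = true

/-- A blue ordered copy of `P_n^t`, the `t`-th power of the monotone path: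
vertices `1, …, n` and edges `(i, j)` with `i < j ≤ i + t`. -/
def ContainsBluePathPow (N n t : ℕ) (χ : Fin N → Fin N → Bool) : Prop :=
  ∃ f : Fin n → Fin N, StrictMono f ∧
    ∀ i j : Fin n, i < j → (j : ℕ) ≤ (i : ℕ) + t → χ (f i) (f j) = false

/-- The ordered Ramsey number `R_<(K_s, P_n^t)`: the minimum `N` such that every
red/blue coloring of the edges of the complete graph on `{1, …, N}` contains a red
copy of `K_s` or a blue copy of `P_n^t` (order-preservingly). -/
noncomputable def ordRamseyCliquePathPow (s t n : ℕ) : ℕ :=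
  sInf {N | ∀ χ : Fin N → Fin N → Bool,
    ContainsRedClique N s χ ∨ ContainsBluePathPow N n t χ}

theorem inner_le_of_pm (m k : ℕ) (d : Fin m → ℕ) :
    (∑ y, d y) ^ (k + 1) ≤ m ^ k * ∑ y, d y ^ (k + 1) := by
  have h := pow_sum_le_card_mul_sum_pow (s := (Finset.univ : Finset (Fin m)))
    (f := fun y => (d y : ℤ)) (fun _ _ => Int.natCast_nonneg _) k
  simp only [Finset.card_univ, Fintype.card_fin] at h
  exact_mod_cast h

/-- A finset whose increasing pairs all have colour `c`. -/
def MonoClq {V : Type*} [LinearOrder V] (χ : V → V → Bool) (c : Bool) (T : Finset V) : Prop :=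
  ∀ x ∈ T, ∀ y ∈ T, x < y → χ x y = c

theorem MonoClq.cons {V : Type*} [LinearOrder V] {χ : V → V → Bool} {c : Bool} {T : Finset V}
    (h : MonoClq χ c T) (v : V) (hv : ∀ x ∈ T, v < x ∧ χ v x = c) :
    MonoClq χ c (insert v T) := by
  intro x hx y hy hxy
  rw [Finset.mem_insert] at hx hy
  rcases hx with rfl | hx <;> rcases hy with rfl | hy
  · exact absurd hxy (lt_irrefl _)
  · exact (hv y hy).2
  · exact absurd hxy (not_lt.mpr (hv x hx).1.le)
  · exact h x hx y hy hxy

theorem ramsey_aux {V : Type*} [LinearOrder V] (χ : V → V → Bool) (M : ℕ) (hM : 1 ≤ M) (s : ℕ) :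
    ∀ S : Finset V, M ^ s ≤ S.card →
      (∃ T ⊆ S, T.card = s + 1 ∧ MonoClq χ true T) ∨
      (∃ T ⊆ S, T.card = M ∧ MonoClq χ false T) := by
  induction s with
  | zero =>
    intro S hS
    left
    obtain ⟨x, hx⟩ : S.Nonempty := by
      rw [← Finset.card_pos]; rw [pow_zero] at hS; omega
    refine ⟨{x}, by simpa using hx, by simp, ?_⟩
    intro a ha b hb hab
    simp at ha hb
    subst ha; subst hb
    exact absurd hab (lt_irrefl _)
  | succ s ih =>
    have key : ∀ b : ℕ, ∀ S : Finset V, b * M ^ s ≤ S.card →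
      (∃ T ⊆ S, T.card = s + 1 + 1 ∧ MonoClq χ true T) ∨
      (∃ T ⊆ S, T.card = M ∧ MonoClq χ false T) ∨
      (∃ T ⊆ S, T.card = b ∧ MonoClq χ false T) := by
      intro b
      induction b with
      | zero =>
        intro S _
        right; right
        exact ⟨∅, by simp, by simp, by intro x hx; simp at hx⟩
      | succ b ihb =>
        intro S hS
        have hpos : 0 < M ^ s := Nat.pow_pos hM
        have hne : S.Nonempty := by
          rw [← Finset.card_pos]
          have : 0 < (b + 1) * M ^ s := by positivity
          omega
        set v := S.min' hne with hv
        have hvS : v ∈ S := S.min'_mem hne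
        set R := (S.erase v).filter (fun x => χ v x = true) with hR
        set B := (S.erase v).filter (fun x => ¬ χ v x = true) with hB
        have hcard : R.card + B.card = (S.erase v).card :=
          Finset.card_filter_add_card_filter_not _
        have hce : (S.erase v).card = S.card - 1 := Finset.card_erase_of_mem hvS
        have hlt : ∀ x ∈ S.erase v, v < x := by
          intro x hx
          rw [Finset.mem_erase] at hx
          exact lt_of_le_of_ne (S.min'_le x hx.2) (Ne.symm hx.1)
        have hRS : R ⊆ S := (Finset.filter_subset _ _).trans (Finset.erase_subset _ _)
        have hBS : B ⊆ S := (Finset.filter_subset _ _).trans (Finset.erase_subset _ _)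
        by_cases hRc : M ^ s ≤ R.card
        · rcases ih R hRc with ⟨T, hT, hc, hm⟩ | ⟨T, hT, hc, hm⟩
          · left
            have hT' : ∀ x ∈ T, v < x ∧ χ v x = true := by
              intro x hx
              have := Finset.mem_filter.mp (hT hx)
              exact ⟨hlt x this.1, this.2⟩
            refine ⟨insert v T, ?_, ?_, hm.cons v hT'⟩
            · exact Finset.insert_subset hvS (hT.trans hRS)
            · rw [Finset.card_insert_of_notMem, hc]
              intro h; exact lt_irrefl _ (hT' v h).1
          · right; left
            exact ⟨T, hT.trans hRS, hc, hm⟩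
        · have hBc : b * M ^ s ≤ B.card := by
            rw [Nat.add_mul] at hS
            omega
          rcases ihb B hBc with ⟨T, hT, hc, hm⟩ | ⟨T, hT, hc, hm⟩ | ⟨T, hT, hc, hm⟩
          · left; exact ⟨T, hT.trans hBS, hc, hm⟩
          · right; left; exact ⟨T, hT.trans hBS, hc, hm⟩
          · right; right
            have hT' : ∀ x ∈ T, v < x ∧ χ v x = false := by
              intro x hx
              have := Finset.mem_filter.mp (hT hx)
              exact ⟨hlt x this.1, by simpa using this.2⟩
            refine ⟨insert v T, ?_, ?_, hm.cons v hT'⟩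
            · exact Finset.insert_subset hvS (hT.trans hBS)
            · rw [Finset.card_insert_of_notMem, hc]
              intro h; exact lt_irrefl _ (hT' v h).1
    intro S hS
    rcases key M S (by rw [pow_succ] at hS; linarith) with h | h | h
    · exact Or.inl h
    · exact Or.inr h
    · exact Or.inr h

theorem desc_bound (m t : ℕ) : m ^ (t + 1) ≤ m * m.descFactorial t + t ^ 2 * m ^ t := by
  induction t with
  | zero => simp
  | succ t ih =>
    have h1 : m.descFactorial t ≤ m ^ t := Nat.descFactorial_le_pow m t
    rw [Nat.descFactorial_succ]
    have h2 : m * m.descFactorial t ≤ (m - t) * m.descFactorial t + t * m.descFactorial t := by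
      rw [← Nat.add_mul]; exact Nat.mul_le_mul_right _ (by omega)
    have h3 : t * m.descFactorial t ≤ t * m ^ t := Nat.mul_le_mul_left _ h1
    calc m ^ (t + 1 + 1) = m * m ^ (t + 1) := by ring
      _ ≤ m * (m * m.descFactorial t + t ^ 2 * m ^ t) := Nat.mul_le_mul_left _ ih
      _ ≤ m * ((m - t) * m.descFactorial t + t * m ^ t + t ^ 2 * m ^ t) := by
        apply Nat.mul_le_mul_left; omega
      _ = m * ((m - t) * m.descFactorial t) + (t + t ^ 2) * m ^ (t + 1) := by ring
      _ ≤ m * ((m - t) * m.descFactorial t) + (t + 1) ^ 2 * m ^ (t + 1) := by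
        apply Nat.add_le_add_left; apply Nat.mul_le_mul_right; nlinarith

theorem sq_lt_three_pow (t : ℕ) (ht : 1 ≤ t) : t ^ 2 + t - 1 < 3 ^ t := by
  induction t, ht using Nat.le_induction with
  | base => norm_num
  | succ t ht ih =>
    have : t ^ 2 + t < 3 ^ t + 1 := by omega
    have : (t + 1) ^ 2 + (t + 1) < 3 ^ (t + 1) + 1 := by rw [pow_succ 3]; nlinarith
    omega

theorem kst (s t m : ℕ) (hs : 1 ≤ s) (ht : 1 ≤ t) (hm : m = (6 * s ^ 2) ^ t)
    (P : Fin m → Fin m → Bool)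
    (hP : m ^ 2 ≤ (Finset.univ.filter (fun p : Fin m × Fin m => P p.1 p.2 = true)).card
      * (2 * s ^ 2)) :
    ∃ X Y : Finset (Fin m), X.card = t ∧ Y.card = t ∧ ∀ x ∈ X, ∀ y ∈ Y, P x y = true := by
  classical
  by_contra hcon
  push Not at hcon
  have hm0 : 0 < m := by rw [hm]; positivity
  let deg : Fin m → ℕ := fun y => (Finset.univ.filter (fun x => P x y = true)).card
  let com : (Fin t → Fin m) → ℕ := fun f => (Finset.univ.filter (fun y => ∀ i, P (f i) y = true)).card
  have he : (Finset.univ.filter (fun p : Fin m × Fin m => P p.1 p.2 = true)).card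
      = ∑ y, deg y := by
    simp only [deg, Finset.card_filter]
    rw [Fintype.sum_prod_type_right]
  have hdc : ∑ y, deg y ^ t = ∑ f, com f := by
    have h1 : ∀ y, deg y ^ t =
        (Finset.univ.filter (fun f : Fin t → Fin m => ∀ i, P (f i) y = true)).card := by
      intro y
      have : Finset.univ.filter (fun f : Fin t → Fin m => ∀ i, P (f i) y = true)
          = Fintype.piFinset (fun _ => Finset.univ.filter (fun x => P x y = true)) := by
        ext f; simp
      rw [this]; simp [deg]
    simp only [h1, com, Finset.card_filter]
    rw [Finset.sum_comm]
  have hinj : ∀ f : Fin t → Fin m, Function.Injective f → com f ≤ t - 1 := by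
    intro f hf
    by_contra hlt
    have hle : t ≤ (Finset.univ.filter (fun y => ∀ i, P (f i) y = true)).card := by
      simp only [com] at hlt; omega
    obtain ⟨Y, hY, hYc⟩ := Finset.exists_subset_card_eq hle
    obtain ⟨x, hx, y, hy, hxy⟩ := hcon (Finset.univ.image f) Y
      (by rw [Finset.card_image_of_injective _ hf]; simp) hYc
    obtain ⟨i, -, rfl⟩ := Finset.mem_image.mp hx
    exact hxy ((Finset.mem_filter.mp (hY hy)).2 i)
  have hall : ∀ f, com f ≤ m := fun f => by
    simpa using Finset.card_le_univ (Finset.univ.filter (fun y => ∀ i, P (f i) y = true))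
  have hcinj : (Finset.univ.filter (fun f : Fin t → Fin m => Function.Injective f)).card
      = m.descFactorial t := by
    rw [← Fintype.card_subtype, Fintype.card_congr (Equiv.subtypeInjectiveEquivEmbedding _ _),
      Fintype.card_embedding_eq]
    simp
  have hsum : (∑ f, com f) ≤ m.descFactorial t * (t - 1) + (m ^ t - m.descFactorial t) * m := by
    rw [← Finset.sum_filter_add_sum_filter_not Finset.univ (fun f => Function.Injective f)]
    apply Nat.add_le_add
    · rw [← hcinj]
      apply Finset.sum_le_card_nsmul
      intro f hf; exact hinj f (Finset.mem_filter.mp hf).2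
    · have : (Finset.univ.filter (fun f : Fin t → Fin m => ¬ Function.Injective f)).card
          = m ^ t - m.descFactorial t := by
        have := Finset.card_filter_add_card_filter_not (s := Finset.univ)
          (fun f : Fin t → Fin m => Function.Injective f)
        rw [hcinj] at this
        simp only [Finset.card_univ, Fintype.card_fun, Fintype.card_fin] at this
        omega
      rw [← this]
      apply Finset.sum_le_card_nsmul
      intro f _; exact hall f
  have hup : (∑ f, com f) ≤ (t ^ 2 + t - 1) * m ^ t := by
    have h1 := desc_bound m t
    have h2 : m.descFactorial t ≤ m ^ t := Nat.descFactorial_le_pow m t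
    have h3 : (m ^ t - m.descFactorial t) * m ≤ t ^ 2 * m ^ t := by
      rw [Nat.sub_mul, ← pow_succ]
      rw [mul_comm m] at h1
      omega
    have h4 : m.descFactorial t * (t - 1) ≤ m ^ t * (t - 1) := Nat.mul_le_mul_right _ h2
    have h5 : t ^ 2 + t - 1 = t ^ 2 + (t - 1) := by omega
    rw [h5, Nat.add_mul]
    linarith [mul_comm (m ^ t) (t - 1)]
  have hpm : (∑ y, deg y) ^ t ≤ m ^ (t - 1) * ∑ y, deg y ^ t := by
    obtain ⟨k, rfl⟩ : ∃ k, t = k + 1 := ⟨t - 1, by omega⟩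
    have := inner_le_of_pm m k deg
    simpa using this
  rw [he] at hP
  have hlow : 3 ^ t * m ^ t ≤ ∑ y, deg y ^ t := by
    have h1 : (m ^ 2) ^ t ≤ ((∑ y, deg y) * (2 * s ^ 2)) ^ t := Nat.pow_le_pow_left hP t
    rw [mul_pow] at h1
    have h2 : (m ^ 2) ^ t ≤ m ^ (t - 1) * (∑ y, deg y ^ t) * (2 * s ^ 2) ^ t :=
      h1.trans (Nat.mul_le_mul_right _ hpm)
    have h3 : (m ^ 2) ^ t = m ^ (t - 1) * (m * m ^ t) := by
      obtain ⟨k, rfl⟩ : ∃ k, t = k + 1 := ⟨t - 1, by omega⟩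
      simp; ring
    rw [h3, mul_assoc] at h2
    have h4 := Nat.le_of_mul_le_mul_left h2 (Nat.pow_pos hm0)
    have h5 : m * m ^ t = (3 ^ t * m ^ t) * (2 * s ^ 2) ^ t := by
      have : m = 3 ^ t * (2 * s ^ 2) ^ t := by rw [hm, ← mul_pow]; ring_nf
      calc m * m ^ t = (3 ^ t * (2 * s ^ 2) ^ t) * m ^ t := by rw [← this]
        _ = _ := by ring
    rw [h5] at h4
    exact Nat.le_of_mul_le_mul_right h4 (by positivity)
  have := sq_lt_three_pow t ht
  have h6 : (t ^ 2 + t - 1) * m ^ t < 3 ^ t * m ^ t :=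
    Nat.mul_lt_mul_of_pos_right this (Nat.pow_pos hm0)
  omega

/-- Transversal lemma. -/
theorem transversal (s m : ℕ) (hs : 1 ≤ s) (hm : 0 < m)
    (P : Fin (s + 1) → Fin (s + 1) → Fin m → Fin m → Bool)
    (hP : ∀ i k, i < k →
      (Finset.univ.filter (fun p : Fin m × Fin m => P i k p.1 p.2 = true)).card * (2 * s ^ 2)
        < m ^ 2) :
    ∃ x : Fin (s + 1) → Fin m, ∀ i k, i < k → P i k (x i) (x k) = false := by
  classical
  by_contra hcon
  push Not at hcon
  let bad : Fin (s + 1) × Fin (s + 1) → Finset (Fin (s + 1) → Fin m) := fun q =>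
    Finset.univ.filter (fun x => q.1 < q.2 ∧ P q.1 q.2 (x q.1) (x q.2) = true)
  have hbad : ∀ q, (bad q).card * (2 * s ^ 2) < m ^ (s + 1) := by
    intro q
    by_cases hq : q.1 < q.2
    · have h1 := hP q.1 q.2 hq
      have h2 : (bad q).card * m ^ 2 ≤
          (Finset.univ.filter (fun p : Fin m × Fin m => P q.1 q.2 p.1 p.2 = true)).card
            * m ^ (s + 1) := by
        have h3 : ((bad q) ×ˢ (Finset.univ : Finset (Fin m × Fin m))).card ≤
            ((Finset.univ.filter (fun p : Fin m × Fin m => P q.1 q.2 p.1 p.2 = true)) ×ˢ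
              (Finset.univ : Finset (Fin (s + 1) → Fin m))).card := by
          apply Finset.card_le_card_of_injOn
            (fun z => ((z.1 q.1, z.1 q.2),
              Function.update (Function.update z.1 q.1 z.2.1) q.2 z.2.2))
          · intro z hz
            simp [bad] at hz ⊢
            exact hz.2
          · rintro ⟨x, a, b⟩ _ ⟨x', a', b'⟩ _ h
            simp only [Prod.mk.injEq] at h
            obtain ⟨⟨h1, h2⟩, h3⟩ := h
            have hb : b = b' := by simpa using congrFun h3 q.2
            have ha : a = a' := by
              have := congrFun h3 q.1
              simpa [Function.update_of_ne hq.ne] using this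
            have hx : x = x' := by
              funext l
              by_cases hl2 : l = q.2
              · subst hl2; exact h2
              by_cases hl1 : l = q.1
              · subst hl1; exact h1
              have := congrFun h3 l
              simpa [Function.update_of_ne hl1, Function.update_of_ne hl2] using this
            rw [hx, ha, hb]
        rw [Finset.card_product, Finset.card_product] at h3
        simpa [sq] using h3
      have hm2 : 0 < m ^ 2 := by positivity
      have hms : 0 < m ^ (s + 1) := by positivity
      have h4 : (bad q).card * (2 * s ^ 2) * m ^ 2 < m ^ (s + 1) * m ^ 2 := by
        calc (bad q).card * (2 * s ^ 2) * m ^ 2 = (bad q).card * m ^ 2 * (2 * s ^ 2) := by ring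
          _ ≤ _ := Nat.mul_le_mul_right _ h2
          _ = (Finset.univ.filter (fun p : Fin m × Fin m => P q.1 q.2 p.1 p.2 = true)).card
            * (2 * s ^ 2) * m ^ (s + 1) := by ring
          _ < m ^ 2 * m ^ (s + 1) := Nat.mul_lt_mul_of_pos_right h1 hms
          _ = _ := by ring
      exact Nat.lt_of_mul_lt_mul_right h4
    · have : bad q = ∅ := by
        ext x; simp [bad, hq]
      rw [this]; simp; positivity
  have hcov : (Finset.univ : Finset (Fin (s + 1) → Fin m)) ⊆
      (Finset.univ : Finset (Fin (s + 1))).offDiag.biUnion bad := by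
    intro x _
    obtain ⟨i, k, hik, h⟩ := hcon x
    rw [Finset.mem_biUnion]
    refine ⟨(i, k), by simp [hik.ne], ?_⟩
    simp [bad, hik]
    simpa using h
  have h1 := (Finset.card_le_card hcov).trans Finset.card_biUnion_le
  have h2 : (Finset.univ : Finset (Fin (s + 1))).offDiag.card = s * (s + 1) := by
    rw [Finset.offDiag_card]; simp; rw [← Nat.sub_one_mul]; simp
  have h3 : (∑ q ∈ (Finset.univ : Finset (Fin (s + 1))).offDiag, (bad q).card * (2 * s ^ 2))
      < ∑ q ∈ (Finset.univ : Finset (Fin (s + 1))).offDiag, m ^ (s + 1) := by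
    apply Finset.sum_lt_sum_of_nonempty
    · rw [← Finset.card_pos, h2]; positivity
    · intro q _; exact hbad q
  rw [← Finset.sum_mul, Finset.sum_const, h2, smul_eq_mul] at h3
  simp only [Finset.card_univ, Fintype.card_fun, Fintype.card_fin] at h1
  have h4 : s * (s + 1) * m ^ (s + 1) ≤ m ^ (s + 1) * (2 * s ^ 2) := by
    rw [mul_comm]; apply Nat.mul_le_mul_left; nlinarith
  have h5 := Nat.mul_le_mul_right (2 * s ^ 2) h1
  omega

/-- Records lemma. -/
theorem records (n : ℕ) (L : ℕ → ℕ → ℕ) (r : ℕ) :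
    ∀ S : Finset ℕ, (∀ j ∈ S, ∀ b ≤ r, L j b < n) → r * n < S.card →
    ∃ j : ℕ → ℕ, (∀ i ≤ r, j i ∈ S) ∧
      ∀ i < r, j i < j (i + 1) ∧ L (j (i + 1)) (r - i) ≤ L (j i) (r - i) := by
  classical
  induction r with
  | zero =>
    intro S _ hS
    obtain ⟨x, hx⟩ : S.Nonempty := by rw [← Finset.card_pos]; omega
    exact ⟨fun _ => x, fun _ _ => hx, fun i hi => absurd hi (by omega)⟩
  | succ r ih =>
    intro S hL hS
    let p : ℕ → Prop := fun j => ∃ j' ∈ S, j' < j ∧ L j (r + 1) ≤ L j' (r + 1)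
    have hc := Finset.card_filter_add_card_filter_not (s := S) p
    have hrec : (S.filter (fun j => ¬ p j)).card ≤ n := by
      have : (S.filter (fun j => ¬ p j)).card ≤ (Finset.range n).card := by
        apply Finset.card_le_card_of_injOn (fun j => L j (r + 1))
        · intro j hj
          have := Finset.mem_filter.mp hj
          simpa using hL j this.1 (r + 1) le_rfl
        · intro a ha b hb hab
          have ha := Finset.mem_filter.mp ha
          have hb := Finset.mem_filter.mp hb
          simp only at hab
          rcases lt_trichotomy a b with h | h | h
          · exact absurd ⟨a, ha.1, h, hab.ge⟩ hb.2
          · exact h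
          · exact absurd ⟨b, hb.1, h, hab.le⟩ ha.2
      simpa using this
    have hB : r * n < (S.filter p).card := by
      rw [Nat.add_mul] at hS; omega
    obtain ⟨j, hj, hj'⟩ := ih (S.filter p)
      (fun j hj b hb => hL j (Finset.mem_filter.mp hj).1 b (by omega)) hB
    obtain ⟨x, hxS, hx, hxL⟩ := (Finset.mem_filter.mp (hj 0 (by omega))).2
    refine ⟨fun i => Nat.casesOn i x j, ?_, ?_⟩
    · intro i hi
      cases i with
      | zero => exact hxS
      | succ i => exact (Finset.mem_filter.mp (hj i (by omega))).1
    · intro i hi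
      cases i with
      | zero => exact ⟨hx, hxL⟩
      | succ i =>
        have := hj' i (by omega)
        simpa using this

/-- There is a blue path power with `q` vertices whose last `t` vertices lie among
the first `c` vertices of the clique `K j`. -/
def Reach {V : Type*} [LinearOrder V] (χ : V → V → Bool) (K : ℕ → ℕ → V) (t : ℕ)
    (j c q : ℕ) : Prop :=
  ∃ f : ℕ → V, (∀ i i', i < i' → i' < q → f i < f i' ∧ (i' ≤ i + t → χ (f i) (f i') = false)) ∧
    ∀ i < q, q ≤ i + t → ∃ a < c, f i = K j a

theorem Reach.extend {V : Type*} [LinearOrder V] {χ : V → V → Bool} {K : ℕ → ℕ → V} {t : ℕ}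
    {j c q : ℕ} (ht : 1 ≤ t) (h : Reach χ K t j c q) (k c' M J : ℕ) (hj : j < J) (hk : k < J)
    (hjk : j < k)
    (hK1 : ∀ j < J, ∀ a b, a < b → b < M → K j a < K j b ∧ χ (K j a) (K j b) = false)
    (hK2 : ∀ j k, j < k → k < J → ∀ a < M, ∀ b < M, K j a < K k b)
    (x y : ℕ → ℕ) (hx : ∀ i i', i < i' → i' < t → x i < x i') (hxc : ∀ i < t, c ≤ x i ∧ x i < M)
    (hy : ∀ i i', i < i' → i' < t → y i < y i') (hyc : ∀ i < t, y i < c' ∧ y i < M)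
    (hxy : ∀ i < t, ∀ i' < t, χ (K j (x i)) (K k (y i')) = false) :
    Reach χ K t k c' (q + t + t) := by
  obtain ⟨f, hf, hl⟩ := h
  -- every vertex of the old path precedes `K j (x i)`
  have hfx : ∀ i < q, ∀ i' < t, f i < K j (x i') := by
    intro i hi i' hi'
    obtain ⟨a, ha, hfa⟩ := hl (q - 1) (by omega) (by omega)
    have h1 : f (q - 1) < K j (x i') := by
      rw [hfa]
      exact (hK1 j hj a _ (lt_of_lt_of_le ha (hxc i' hi').1) (hxc i' hi').2).1
    rcases Nat.lt_or_ge i (q - 1) with h | h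
    · exact (hf i (q - 1) h (by omega)).1.trans h1
    · have : i = q - 1 := by omega
      rw [this]; exact h1
  have hxy' : ∀ i < t, ∀ i' < t, K j (x i) < K k (y i') := fun i hi i' hi' =>
    hK2 j k hjk hk _ (hxc i hi).2 _ (hyc i' hi').2
  refine ⟨fun i => if i < q then f i else if i < q + t then K j (x (i - q))
    else K k (y (i - q - t)), ?_, ?_⟩
  · intro i i' hii' hi'
    simp only
    by_cases h1' : i' < q
    · have h1 : i < q := by omega
      rw [if_pos h1, if_pos h1']
      exact hf i i' hii' h1'
    · rw [if_neg h1']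
      by_cases h2' : i' < q + t
      · rw [if_pos h2']
        by_cases h1 : i < q
        · rw [if_pos h1]
          refine ⟨hfx i h1 _ (by omega), fun hle => ?_⟩
          obtain ⟨a, ha, hfa⟩ := hl i h1 (by omega)
          rw [hfa]
          have := hxc (i' - q) (by omega)
          exact (hK1 j hj a _ (lt_of_lt_of_le ha this.1) this.2).2
        · rw [if_neg h1, if_pos (by omega)]
          have := hK1 j hj _ _ (hx (i - q) (i' - q) (by omega) (by omega))
            (hxc (i' - q) (by omega)).2
          exact ⟨this.1, fun _ => this.2⟩
      · rw [if_neg h2']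
        by_cases h1 : i < q
        · rw [if_pos h1]
          refine ⟨(hfx i h1 0 (by omega)).trans (hxy' 0 (by omega) _ (by omega)), fun hle => ?_⟩
          omega
        · rw [if_neg h1]
          by_cases h2 : i < q + t
          · rw [if_pos h2]
            exact ⟨hxy' _ (by omega) _ (by omega), fun _ => hxy _ (by omega) _ (by omega)⟩
          · rw [if_neg h2]
            have := hK1 k hk _ _ (hy (i - q - t) (i' - q - t) (by omega) (by omega))
              (hyc (i' - q - t) (by omega)).2
            exact ⟨this.1, fun _ => this.2⟩
  · intro i hi hi'
    simp only
    rw [if_neg (by omega), if_neg (by omega)]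
    exact ⟨_, (hyc (i - q - t) (by omega)).1, rfl⟩

/-- Enumerate a finset of `Fin m` increasingly, shifted by `d`. -/
theorem enum_finset {m t : ℕ} (d : ℕ) (X : Finset (Fin m)) (hX : X.card = t) :
    ∃ x : ℕ → ℕ, (∀ i i', i < i' → i' < t → x i < x i') ∧
      ∀ i < t, ∃ a ∈ X, x i = d + (a : ℕ) := by
  refine ⟨fun i => if h : i < t then d + (X.orderEmbOfFin hX ⟨i, h⟩ : ℕ) else 0, ?_, ?_⟩
  · intro i i' h h'
    simp only
    rw [dif_pos (h.trans h'), dif_pos h']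
    have : X.orderEmbOfFin hX ⟨i, h.trans h'⟩ < X.orderEmbOfFin hX ⟨i', h'⟩ := by
      rw [OrderEmbedding.lt_iff_lt]; exact h
    have : (X.orderEmbOfFin hX ⟨i, h.trans h'⟩ : ℕ) < X.orderEmbOfFin hX ⟨i', h'⟩ := this
    omega
  · intro i h
    exact ⟨_, X.orderEmbOfFin_mem hX ⟨i, h⟩, by simp [h]⟩

theorem core {N : ℕ} (χ : Fin N → Fin N → Bool) (s t n m J : ℕ) (hs : 1 ≤ s) (ht : 1 ≤ t)
    (hm : m = (6 * s ^ 2) ^ t) (hJ : s * n < J)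
    (K : ℕ → ℕ → Fin N)
    (hK1 : ∀ j < J, ∀ a b, a < b → b < (s + 1) * m →
      K j a < K j b ∧ χ (K j a) (K j b) = false)
    (hK2 : ∀ j k, j < k → k < J → ∀ a < (s + 1) * m, ∀ b < (s + 1) * m, K j a < K k b) :
    ContainsRedClique N (s + 1) χ ∨ ContainsBluePathPow N n t χ := by
  classical
  by_cases hblue : ∃ j c q, n ≤ q ∧ Reach χ K t j c q
  · right
    obtain ⟨j, c, q, hq, f, hf, -⟩ := hblue
    refine ⟨fun i => f i, ?_, ?_⟩
    · intro i i' h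
      exact (hf i i' h (by have := i'.2; omega)).1
    · intro i i' h hle
      exact (hf i i' h (by have := i'.2; omega)).2 hle
  left
  push Not at hblue
  have hm0 : 0 < m := by rw [hm]; positivity
  have hn : 1 ≤ n := by
    by_contra h
    exact hblue 0 0 0 (by omega) ⟨fun _ => K 0 0, by intros; omega, by intros; omega⟩
  let L : ℕ → ℕ → ℕ := fun j b => Nat.findGreatest (Reach χ K t j (b * m)) n
  have hreach0 : ∀ j c, Reach χ K t j c 0 := fun j c =>
    ⟨fun _ => K 0 0, by intros; omega, by intros; omega⟩
  have hLr : ∀ j b, Reach χ K t j (b * m) (L j b) := fun j b =>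
    Nat.findGreatest_spec (P := Reach χ K t j (b * m)) (Nat.zero_le n) (hreach0 _ _)
  have hLn : ∀ j b, L j b < n := by
    intro j b
    by_contra h
    exact hblue _ _ _ (by omega) (hLr j b)
  have hLmax : ∀ j b q, Reach χ K t j (b * m) q → q ≤ L j b := by
    intro j b q h
    apply Nat.le_findGreatest _ h
    by_contra h'
    exact hblue _ _ _ (by omega) h
  have hLmono : ∀ j b b', b ≤ b' → L j b ≤ L j b' := by
    intro j b b' hb
    apply hLmax
    obtain ⟨f, h1, h2⟩ := hLr j b
    refine ⟨f, h1, fun i hi hi' => ?_⟩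
    obtain ⟨a, ha, h⟩ := h2 i hi hi'
    exact ⟨a, lt_of_lt_of_le ha (Nat.mul_le_mul_right _ hb), h⟩
  obtain ⟨j, hjS, hj⟩ := records n L s (Finset.range J) (fun _ _ _ _ => hLn _ _) (by simpa using hJ)
  have hjJ : ∀ i ≤ s, j i < J := fun i hi => by simpa using hjS i hi
  have hpair : ∀ i d, i + d + 1 ≤ s →
      j i < j (i + d + 1) ∧ L (j (i + d + 1)) (s - (i + d)) ≤ L (j i) (s - i) := by
    intro i d
    induction d with
    | zero => intro h; exact hj i (by omega)
    | succ d ih =>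
      intro h
      have h1 := ih (by omega)
      have h2 := hj (i + d + 1) (by omega)
      refine ⟨h1.1.trans h2.1, ?_⟩
      have h3 := hLmono (j (i + d + 1)) (s - (i + d + 1)) (s - (i + d)) (by omega)
      exact (h2.2.trans h3).trans h1.2
  let P : Fin (s + 1) → Fin (s + 1) → Fin m → Fin m → Bool := fun i k a b =>
    ! χ (K (j i) ((s - i) * m + a)) (K (j k) ((s - k) * m + b))
  have hidx : ∀ i ≤ s, ∀ a < m, (s - i) * m + a < (s + 1) * m := by
    intro i hi a ha
    have : (s - i) * m ≤ s * m := Nat.mul_le_mul_right _ (by omega)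
    rw [Nat.add_mul]; omega
  have hjk : ∀ i k, i < k → k ≤ s → j i < j k ∧ L (j k) (s - k + 1) ≤ L (j i) (s - i) := by
    intro i k hik hk
    have := hpair i (k - i - 1) (by omega)
    have e1 : i + (k - i - 1) + 1 = k := by omega
    have e2 : s - (i + (k - i - 1)) = s - k + 1 := by omega
    rwa [e1, e2] at this
  obtain ⟨x, hx⟩ := transversal s m hs hm0 P (by
    intro i k hik
    by_contra hcon
    obtain ⟨X, Y, hX, hY, hXY⟩ := kst s t m hs ht hm (P i k) (by omega)
    have hik' : (i : ℕ) < k := hik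
    have hks : (k : ℕ) ≤ s := by have := k.2; omega
    obtain ⟨hjl, hL⟩ := hjk i k hik' hks
    obtain ⟨x, hx1, hx2⟩ := enum_finset ((s - i) * m) X hX
    obtain ⟨y, hy1, hy2⟩ := enum_finset ((s - k) * m) Y hY
    have := (hLr (j i) (s - i)).extend ht (j k) ((s - k + 1) * m) ((s + 1) * m) J
      (hjJ _ (by omega)) (hjJ _ hks) hjl hK1 hK2 x y hx1 (by
        intro l hl
        obtain ⟨a, _, ha⟩ := hx2 l hl
        rw [ha]
        exact ⟨by omega, hidx _ (by omega) _ a.2⟩) hy1 (by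
        intro l hl
        obtain ⟨a, _, ha⟩ := hy2 l hl
        rw [ha]
        refine ⟨?_, hidx _ hks _ a.2⟩
        rw [Nat.add_mul]; have := a.2; omega) (by
        intro l hl l' hl'
        obtain ⟨a, haX, ha⟩ := hx2 l hl
        obtain ⟨b, hbY, hb⟩ := hy2 l' hl'
        rw [ha, hb]
        simpa [P] using hXY a haX b hbY)
    have := hLmax _ _ _ this
    omega)
  have hred : ∀ i k : Fin (s + 1), i < k →
      χ (K (j i) ((s - i) * m + x i)) (K (j k) ((s - k) * m + x k)) = true := by
    intro i k hik
    simpa [P] using hx i k hik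
  refine ⟨fun i => K (j i) ((s - i) * m + x i), ?_, hred⟩
  intro i k hik
  have hks : (k : ℕ) ≤ s := by have := k.2; omega
  have his : (i : ℕ) ≤ s := by have := i.2; omega
  exact hK2 _ _ (hjk i k hik hks).1 (hjJ _ hks) _ (hidx _ his _ (x i).2) _ (hidx _ hks _ (x k).2)

theorem two_mul_le_two_pow (s : ℕ) (hs : 1 ≤ s) : 2 * s ≤ 2 ^ s := by
  induction s, hs using Nat.le_induction with
  | base => norm_num
  | succ s hs ih => rw [pow_succ]; omega

theorem size_bound (s t n : ℕ) (hs : 1 ≤ s) (ht : 1 ≤ t) :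
    (2 * s * n) * ((s + 1) * (6 * s ^ 2) ^ t) ^ s ≤ (24 * s ^ 3) ^ (s * t) * n := by
  have h1 : 2 * s ≤ 2 ^ (s * t) :=
    (two_mul_le_two_pow s hs).trans (Nat.pow_le_pow_right (by norm_num) (Nat.le_mul_of_pos_right s ht))
  have h2 : s + 1 ≤ (2 * s) ^ t := by
    calc s + 1 ≤ (2 * s) ^ 1 := by rw [pow_one]; omega
      _ ≤ _ := Nat.pow_le_pow_right (by omega) ht
  have h3 : ((s + 1) * (6 * s ^ 2) ^ t) ^ s ≤ (12 * s ^ 3) ^ (s * t) := by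
    calc ((s + 1) * (6 * s ^ 2) ^ t) ^ s ≤ ((2 * s) ^ t * (6 * s ^ 2) ^ t) ^ s :=
          Nat.pow_le_pow_left (Nat.mul_le_mul_right _ h2) _
      _ = (12 * s ^ 3) ^ (s * t) := by
          rw [← mul_pow, ← pow_mul, mul_comm t s]; congr 1; ring
  calc (2 * s * n) * ((s + 1) * (6 * s ^ 2) ^ t) ^ s
      ≤ (2 ^ (s * t) * n) * (12 * s ^ 3) ^ (s * t) :=
        Nat.mul_le_mul (Nat.mul_le_mul_right _ h1) h3
    _ = (2 * (12 * s ^ 3)) ^ (s * t) * n := by rw [mul_pow 2]; ring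
    _ = _ := by rw [← mul_assoc]; norm_num

/-- `R_<(K_{s+1}, P_n^t) ≤ (24 s^3)^(s t) · n`. -/
theorem stmt0 (s t n : ℕ) (hs : 1 ≤ s) (ht : 1 ≤ t) (hn : 1 ≤ n) :
    ordRamseyCliquePathPow (s + 1) t n ≤ (24 * s ^ 3) ^ (s * t) * n := by
  classical
  apply Nat.sInf_le
  intro χ
  have hsize := size_bound s t n hs ht
  generalize (24 * s ^ 3) ^ (s * t) * n = N at χ hsize ⊢
  obtain ⟨m, hm⟩ : ∃ m, m = (6 * s ^ 2) ^ t := ⟨_, rfl⟩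
  rw [← hm] at hsize
  have hm0 : 0 < m := by rw [hm]; positivity
  by_cases hred : ContainsRedClique N (s + 1) χ
  · exact Or.inl hred
  set M := (s + 1) * m with hM
  have hM0 : 1 ≤ M := by rw [hM]; exact Nat.mul_pos (by omega) hm0
  set C := M ^ s with hC
  have hC0 : 0 < C := Nat.pow_pos hM0
  have hblock : ∀ j, j < 2 * s * n → ∃ T : Finset (Fin N), T.card = M ∧ MonoClq χ false T ∧
      ∀ v ∈ T, j * C ≤ (v : ℕ) ∧ (v : ℕ) < (j + 1) * C := by
    intro j hj
    have hle : (j + 1) * C ≤ N := (Nat.mul_le_mul_right _ hj).trans hsize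
    have hb : ∀ v ∈ Finset.Ico (j * C) ((j + 1) * C), v < N := by
      intro v hv
      rw [Finset.mem_Ico] at hv; omega
    have hcard : ((Finset.Ico (j * C) ((j + 1) * C)).attachFin hb).card = C := by
      rw [Finset.card_attachFin, Nat.card_Ico, Nat.add_mul]; omega
    rcases ramsey_aux χ M hM0 s _ hcard.ge with ⟨T, hT, hc, hmono⟩ | ⟨T, hT, hc, hmono⟩
    · exfalso
      apply hred
      refine ⟨T.orderEmbOfFin hc, (T.orderEmbOfFin hc).strictMono, ?_⟩
      intro i k hik
      exact hmono _ (T.orderEmbOfFin_mem hc i) _ (T.orderEmbOfFin_mem hc k)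
        ((T.orderEmbOfFin hc).strictMono hik)
    · refine ⟨T, hc, hmono, ?_⟩
      intro v hv
      have := hT hv
      rw [Finset.mem_attachFin, Finset.mem_Ico] at this
      exact this
  have hNpos : 0 < N := by
    have : 0 < (2 * s * n) * C := by positivity
    omega
  choose! T hTc hTm hTb using hblock
  let K : ℕ → ℕ → Fin N := fun j a =>
    if h : (T j).card = M ∧ a < M then (T j).orderEmbOfFin h.1 ⟨a, h.2⟩ else ⟨0, hNpos⟩
  have hKdef : ∀ j (hj : j < 2 * s * n) a (ha : a < M),
      K j a = (T j).orderEmbOfFin (hTc j hj) ⟨a, ha⟩ := by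
    intro j hj a ha
    simp only [K]
    rw [dif_pos ⟨hTc j hj, ha⟩]
  have hKmem : ∀ j < 2 * s * n, ∀ a < M, K j a ∈ T j := by
    intro j hj a ha
    rw [hKdef j hj a ha]
    exact Finset.orderEmbOfFin_mem _ _ _
  refine core χ s t n m (2 * s * n) hs ht hm ?_ K ?_ ?_
  · have : 0 < s * n := by positivity
    rw [mul_assoc]; omega
  · intro j hj a b hab hb
    have hlt : K j a < K j b := by
      rw [hKdef j hj a (hab.trans hb), hKdef j hj b hb, OrderEmbedding.lt_iff_lt]
      exact hab
    exact ⟨hlt, hTm j hj _ (hKmem j hj a (hab.trans hb)) _ (hKmem j hj b hb) hlt⟩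
  · intro j k hjk hk a ha b hb
    have h1 := (hTb j (hjk.trans hk) _ (hKmem j (hjk.trans hk) a ha)).2
    have h2 := (hTb k hk _ (hKmem k hk b hb)).1
    have h3 : (j + 1) * C ≤ k * C := Nat.mul_le_mul_right _ hjk
    exact Fin.lt_def.mpr (by omega)
end

section
/- For all positive integers t and n, the ordered Ramsey number satisfies R_<(P_n^t, P_n^t) ≤ (400 t^3)^{t^2} · n^{4t−2}. -/
/-- `χ i j` is the color of the edge `{i, j}` for `i < j`: `true` = red, `false` = blue.
A red ordered copy of `P_n^t`, the `t`-th power of the monotone path: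
vertices `1, …, n` and edges `(i, j)` with `i < j ≤ i + t`. -/
def ContainsRedPathPow (N n t : ℕ) (χ : Fin N → Fin N → Bool) : Prop :=
  ∃ f : Fin n → Fin N, StrictMono f ∧
    ∀ i j : Fin n, i < j → (j : ℕ) ≤ (i : ℕ) + t → χ (f i) (f j) = true

/-- The ordered Ramsey number `R_<(P_n^t, P_n^t)`. -/
noncomputable def ordRamseyPathPowSelf (n t : ℕ) : ℕ :=
  sInf {N | ∀ χ : Fin N → Fin N → Bool,
    ContainsRedPathPow N n t χ ∨ ContainsBluePathPow N n t χ}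

namespace PP

def IsPath (c : ℕ → ℕ → Bool) (x : Bool) (t : ℕ) : List ℕ → Prop
  | [] => True
  | v :: l => (∀ u ∈ l, u < v) ∧ (∀ u ∈ l.take t, c u v = x) ∧ IsPath c x t l

def Clique (c : ℕ → ℕ → Bool) (x : Bool) (Q : Finset ℕ) : Prop :=
  ∀ u ∈ Q, ∀ v ∈ Q, u < v → c u v = x

def NoPath (c : ℕ → ℕ → Bool) (x : Bool) (t n N : ℕ) : Prop :=
  ∀ l, IsPath c x t l → (∀ u ∈ l, u < N) → l.length < n

def Reach (c : ℕ → ℕ → Bool) (x : Bool) (t r : ℕ) (X : Finset ℕ) : Prop :=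
  ∃ l, IsPath c x t l ∧ r ≤ l.length ∧ (∀ u ∈ l, ∀ w ∈ X, u < w) ∧
    (∀ u ∈ l.take t, ∀ w ∈ X, c u w = x)

lemma Clique.mono {c x} {Q R : Finset ℕ} (h : Clique c x R) (hs : Q ⊆ R) : Clique c x Q :=
  fun u hu v hv huv => h u (hs hu) v (hs hv) huv

lemma Reach.mono {c x t r} {Q R : Finset ℕ} (h : Reach c x t r R) (hs : Q ⊆ R) :
    Reach c x t r Q := by
  obtain ⟨l, h1, h2, h3, h4⟩ := h
  exact ⟨l, h1, h2, fun u hu w hw => h3 u hu w (hs hw), fun u hu w hw => h4 u hu w (hs hw)⟩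

lemma IsPath.get {c x t} : ∀ {l : List ℕ}, IsPath c x t l → ∀ a b (hab : a < b) (hb : b < l.length),
    l[b] < l[a]'(hab.trans hb) ∧ (b ≤ a + t → c l[b] (l[a]'(hab.trans hb)) = x)
  | [], _, a, b, hab, hb => by simp at hb
  | v :: l, h, 0, b + 1, hab, hb => by
      obtain ⟨h1, h2, h3⟩ := h
      simp only [List.getElem_cons_succ, List.getElem_cons_zero]
      have hb' : b < l.length := by simpa using hb
      refine ⟨h1 _ (List.getElem_mem hb'), fun hbt => h2 _ ?_⟩
      rw [List.mem_take_iff_getElem]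
      exact ⟨b, by omega, rfl⟩
  | v :: l, h, a + 1, b + 1, hab, hb => by
      obtain ⟨h1, h2, h3⟩ := h
      have := IsPath.get h3 a b (by omega) (by simpa using hb)
      simp only [List.getElem_cons_succ]
      exact ⟨this.1, fun h => this.2 (by omega)⟩

lemma IsPath.append {c x t} {l : List ℕ} (hl : IsPath c x t l) :
    ∀ (q : List ℕ), q.Pairwise (fun v u => u < v ∧ c u v = x) →
      (∀ u ∈ l, ∀ v ∈ q, u < v) → (∀ u ∈ l.take t, ∀ v ∈ q, c u v = x) →
      IsPath c x t (q ++ l)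
  | [], _, _, _ => hl
  | v :: q, hq, h1, h2 => by
      rw [List.pairwise_cons] at hq
      refine ⟨?_, ?_, IsPath.append hl q hq.2 (fun u hu w hw => h1 u hu w (by simp [hw]))
        (fun u hu w hw => h2 u hu w (by simp [hw]))⟩
      · intro u hu
        rcases List.mem_append.1 hu with hu | hu
        · exact (hq.1 u hu).1
        · exact h1 u hu v (by simp)
      · intro u hu
        replace hu : u ∈ List.take t (q ++ l) := hu
        rw [List.take_append] at hu
        rcases List.mem_append.1 hu with hu | hu
        · exact (hq.1 u (List.mem_of_mem_take hu)).2
        · exact h2 u ((List.take_subset_take_left l (by omega)) hu) v (by simp)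

/-- append a clique of size exactly `t`. -/
lemma append_clique {c x t} {l : List ℕ} (hl : IsPath c x t l) (Q : Finset ℕ)
    (hQ : Clique c x Q) (hc : Q.card = t)
    (h1 : ∀ u ∈ l, ∀ v ∈ Q, u < v) (h2 : ∀ u ∈ l.take t, ∀ v ∈ Q, c u v = x) :
    ∃ l', IsPath c x t l' ∧ l'.length = l.length + t ∧ (∀ u, u ∈ l' ↔ u ∈ Q ∨ u ∈ l) ∧
      (∀ u ∈ l'.take t, u ∈ Q) := by
  have hlen : (Q.sort (· ≥ ·)).length = t := by rw [Finset.length_sort, hc]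
  refine ⟨Q.sort (· ≥ ·) ++ l, hl.append _ ?_ ?_ ?_, ?_, ?_, ?_⟩
  · have h : (Q.sort (· ≥ ·)).Pairwise (fun v u => u < v) := by
      have := Finset.sortedGT_sort Q
      exact this.pairwise
    refine h.imp_of_mem ?_
    intro a b ha hb hab
    exact ⟨hab, hQ b (by simpa using hb) a (by simpa using ha) hab⟩
  · intro u hu v hv; exact h1 u hu v (by simpa using hv)
  · intro u hu v hv; exact h2 u hu v (by simpa using hv)
  · rw [List.length_append, hlen]; omega
  · intro u; simp
  · intro u hu
    rw [List.take_append_of_le_length (by omega), List.take_of_length_le (by omega)] at hu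
    simpa using hu

lemma chop (U : Finset ℕ) (a b : ℕ) (h : a * b ≤ U.card) :
    ∃ f : ℕ → Finset ℕ, (∀ i < a, f i ⊆ U ∧ (f i).card = b) ∧
      ∀ i j, i < j → j < a → ∀ u ∈ f i, ∀ v ∈ f j, u < v := by
  induction a generalizing U with
  | zero => exact ⟨fun _ => ∅, by simp, by simp⟩
  | succ a ih =>
    -- take the top `b` elements as last block
    have hb : b ≤ U.card := by nlinarith
    have key : ∃ L R : Finset ℕ, L ⊆ U ∧ R ⊆ U ∧ R.card = b ∧ L.card = U.card - b ∧
        ∀ u ∈ L, ∀ v ∈ R, u < v := by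
      let e := U.orderEmbOfFin rfl
      refine ⟨(Finset.univ.filter (fun i : Fin U.card => (i : ℕ) < U.card - b)).map e.toEmbedding,
        (Finset.univ.filter (fun i : Fin U.card => ¬ (i : ℕ) < U.card - b)).map e.toEmbedding,
        ?_, ?_, ?_, ?_, ?_⟩
      · intro u hu
        simp only [Finset.mem_map] at hu
        obtain ⟨i, -, rfl⟩ := hu
        exact Finset.orderEmbOfFin_mem U rfl i
      · intro u hu
        simp only [Finset.mem_map] at hu
        obtain ⟨i, -, rfl⟩ := hu
        exact Finset.orderEmbOfFin_mem U rfl i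
      · rw [Finset.card_map]
        have h1 := Finset.card_filter_add_card_filter_not (s := (Finset.univ : Finset (Fin U.card)))
          (fun i : Fin U.card => (i : ℕ) < U.card - b)
        rw [Fin.card_filter_val_lt] at h1
        simp at h1
        simp
        omega
      · rw [Finset.card_map, Fin.card_filter_val_lt]; omega
      · intro u hu v hv
        simp only [Finset.mem_map, Finset.mem_filter] at hu hv
        obtain ⟨i, hi, rfl⟩ := hu
        obtain ⟨j, hj, rfl⟩ := hv
        have : i < j := by rw [Fin.lt_def]; omega
        exact e.strictMono this
    obtain ⟨L, R, hL, hR, hRc, hLc, hLR⟩ := key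
    obtain ⟨f, hf1, hf2⟩ := ih L (by rw [hLc]; have : (a+1)*b = a*b+b := by ring
                                     omega)
    refine ⟨fun i => if i < a then f i else R, ?_, ?_⟩
    · intro i hi
      by_cases hia : i < a
      · simp only [hia, if_true]; exact ⟨(hf1 i hia).1.trans hL, (hf1 i hia).2⟩
      · simp only [hia, if_false]; exact ⟨hR, hRc⟩
    · intro i j hij hj u hu v hv
      have hia : i < a := by omega
      simp only [hia, if_true] at hu
      by_cases hja : j < a
      · simp only [hja, if_true] at hv; exact hf2 i j hij hja u hu v hv
      · simp only [hja, if_false] at hv; exact hLR u ((hf1 i hia).1 hu) v hv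

lemma ramsey (c : ℕ → ℕ → Bool) (x : Bool) (b : ℕ) (a : ℕ) (U : Finset ℕ) (h : b ^ a ≤ U.card)
    (hb : 1 ≤ b) :
    ∃ K ⊆ U, (K.card = a + 1 ∧ Clique c x K) ∨ (K.card = b ∧ Clique c (!x) K) := by
  induction a generalizing U with
  | zero =>
    have : U.Nonempty := Finset.card_pos.1 (by simpa using h)
    obtain ⟨v, hv⟩ := this
    refine ⟨{v}, by simpa using hv, Or.inl ⟨by simp, ?_⟩⟩
    intro u hu w hw huw
    simp at hu hw; omega
  | succ a ih =>
    -- greedy: build a `!x`-clique of size d or find an `x`-clique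
    have key : ∀ d : ℕ, ∀ U : Finset ℕ, d * b ^ a ≤ U.card →
        ∃ K ⊆ U, (K.card = a + 2 ∧ Clique c x K) ∨ (K.card = b ∧ Clique c (!x) K)
          ∨ (K.card = d ∧ Clique c (!x) K) := by
      intro d
      induction d with
      | zero => intro U _; exact ⟨∅, by simp, Or.inr (Or.inr ⟨rfl, by intro u hu; simp at hu⟩)⟩
      | succ d ihd =>
        intro U hU
        have hpos : 1 ≤ b ^ a := Nat.one_le_pow _ _ hb
        have hexp : (d + 1) * b ^ a = d * b ^ a + b ^ a := by ring
        have hne : U.Nonempty := Finset.card_pos.1 (by omega)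
        set v := U.min' hne with hv
        have hvU : v ∈ U := U.min'_mem hne
        have hlt : ∀ w ∈ U.erase v, v < w := fun w hw => U.min'_lt_of_mem_erase_min' hne hw
        have hsplit := Finset.card_filter_add_card_filter_not (s := U.erase v) (fun w => c v w = x)
        rw [Finset.card_erase_of_mem hvU] at hsplit
        by_cases hbig : b ^ a ≤ ((U.erase v).filter (fun w => c v w = x)).card
        · obtain ⟨K, hK, h | h⟩ := ih _ hbig
          · refine ⟨insert v K, ?_, Or.inl ⟨?_, ?_⟩⟩
            · intro w hw
              rcases Finset.mem_insert.1 hw with rfl | hw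
              · exact hvU
              · exact Finset.mem_of_mem_erase (Finset.mem_filter.1 (hK hw)).1
            · rw [Finset.card_insert_of_notMem, h.1]
              intro hvK
              have := Finset.mem_filter.1 (hK hvK)
              simp at this
            · intro u hu w hw huw
              rcases Finset.mem_insert.1 hw with rfl | hw
              · rcases Finset.mem_insert.1 hu with rfl | hu
                · omega
                · have := hlt u (Finset.mem_filter.1 (hK hu)).1; omega
              · rcases Finset.mem_insert.1 hu with rfl | hu
                · exact (Finset.mem_filter.1 (hK hw)).2
                · exact h.2 u hu w hw huw
          · exact ⟨K, hK.trans ((Finset.filter_subset _ _).trans (Finset.erase_subset _ _)),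
              Or.inr (Or.inl h)⟩
        · obtain ⟨K, hK, h⟩ := ihd ((U.erase v).filter (fun w => ¬ c v w = x)) (by omega)
          have hKU : K ⊆ U := hK.trans ((Finset.filter_subset _ _).trans (Finset.erase_subset _ _))
          rcases h with h | h | h
          · exact ⟨K, hKU, Or.inl h⟩
          · exact ⟨K, hKU, Or.inr (Or.inl h)⟩
          · refine ⟨insert v K, ?_, Or.inr (Or.inr ⟨?_, ?_⟩)⟩
            · intro w hw
              rcases Finset.mem_insert.1 hw with rfl | hw
              · exact hvU
              · exact hKU hw
            · rw [Finset.card_insert_of_notMem, h.1]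
              intro hvK
              have := Finset.mem_filter.1 (hK hvK)
              simp at this
            · intro u hu w hw huw
              rcases Finset.mem_insert.1 hw with rfl | hw
              · rcases Finset.mem_insert.1 hu with rfl | hu
                · omega
                · have := hlt u (Finset.mem_filter.1 (hK hu)).1; omega
              · rcases Finset.mem_insert.1 hu with rfl | hu
                · have := (Finset.mem_filter.1 (hK hw)).2
                  cases hcv : c v w <;> cases x <;> simp_all
                · exact h.2 u hu w hw huw
    obtain ⟨K, hK, h⟩ := key b U (by rw [pow_succ] at h; linarith [mul_comm b (b ^ a)])
    refine ⟨K, hK, ?_⟩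
    rcases h with h | h | h
    · exact Or.inl h
    · exact Or.inr h
    · exact Or.inr h

lemma record (n : ℕ) : ∀ (s : ℕ) (f : ℕ → ℕ → ℕ) (I : Finset ℕ),
    (∀ i ∈ I, ∀ p q, p ≤ q → f i p ≤ f i q) → (∀ i ∈ I, ∀ p, f i p < n) → s * n < I.card →
    ∃ e : ℕ → ℕ, (∀ p ≤ s, e p ∈ I) ∧
      ∀ p q, p < q → q ≤ s → e q < e p ∧ f (e p) p ≤ f (e q) (q - 1) := by
  intro s
  induction s with
  | zero =>
    intro f I _ _ h
    obtain ⟨v, hv⟩ := Finset.card_pos.1 (by omega : 0 < I.card)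
    exact ⟨fun _ => v, fun _ _ => hv, fun p q h1 h2 => by omega⟩
  | succ s ih =>
    intro f I hmono hlt hc
    set P : ℕ → Prop := fun j => ∀ i ∈ I, i < j → f i s < f j s with hP
    classical
    have hrec : (I.filter P).card ≤ n := by
      rw [← Finset.card_range n]
      refine Finset.card_le_card_of_injOn (fun j => f j s) ?_ ?_
      · intro j hj
        have hj' := Finset.mem_filter.1 (Finset.mem_coe.1 hj)
        simpa using hlt j hj'.1 s
      · intro i hi j hj hij
        have hi' := Finset.mem_filter.1 (Finset.mem_coe.1 hi)
        have hj' := Finset.mem_filter.1 (Finset.mem_coe.1 hj)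
        simp only at hij
        rcases lt_trichotomy i j with h | h | h
        · have := hj'.2 i hi'.1 h; omega
        · exact h
        · have := hi'.2 j hj'.1 h; omega
    have hsplit := Finset.card_filter_add_card_filter_not (s := I) P
    have hexp : (s + 1) * n = s * n + n := by ring
    obtain ⟨e, he1, he2⟩ := ih f (I.filter (fun j => ¬ P j))
      (fun i hi => hmono i (Finset.mem_filter.1 hi).1) (fun i hi => hlt i (Finset.mem_filter.1 hi).1)
      (by omega)
    have hes := Finset.mem_filter.1 (he1 s le_rfl)
    have hnp := hes.2
    simp only [hP, not_forall, not_lt] at hnp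
    obtain ⟨i, hiI, hie, hfi⟩ := hnp
    refine ⟨fun p => if p ≤ s then e p else i, ?_, ?_⟩
    · intro p _
      by_cases hp : p ≤ s
      · simp only [hp, if_true]; exact (Finset.mem_filter.1 (he1 p hp)).1
      · simp only [hp, if_false]; exact hiI
    · intro p q hpq hq
      have hp : p ≤ s := by omega
      by_cases hqs : q ≤ s
      · simp only [hp, hqs, if_true]; exact he2 p q hpq hqs
      · have hq' : q = s + 1 := by omega
        subst hq'
        simp only [hp, if_true, show ¬ (s + 1 ≤ s) by omega, if_false, Nat.add_sub_cancel]
        rcases Nat.lt_or_ge p s with h | h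
        · have h2 := he2 p s h le_rfl
          refine ⟨by omega, h2.2.trans ((hmono _ hes.1 (s - 1) s (by omega)).trans hfi)⟩
        · have : p = s := by omega
          subst this
          exact ⟨hie, hfi⟩

lemma choose_ge (d t : ℕ) (ht : 1 ≤ t) : d ≤ d.choose t + (t - 1) := by
  rcases Nat.lt_or_ge d t with h | h
  · omega
  · have : d - (t - 1) ≤ d.choose t := by
      induction d, h using Nat.le_induction with
      | base => simp; omega
      | succ d hd ih =>
        obtain ⟨t, rfl⟩ : ∃ t', t = t' + 1 := ⟨t - 1, by omega⟩
        rw [Nat.choose_succ_succ]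
        have : 1 ≤ d.choose t := Nat.choose_pos (by omega)
        simp at ih ⊢
        omega
    omega

lemma avg (t : ℕ) (ht : 1 ≤ t) (K T : Finset ℕ) (R : ℕ → ℕ → Bool) (hK : K.card = 2 * t - 1)
    (h : ∀ v ∈ K, T.card ≤ 2 * (T.filter (fun w => R v w = true)).card) :
    ∃ Q ⊆ K, Q.card = t ∧
      T.card ≤ 2 * 4 ^ (t - 1) * (T.filter (fun w => ∀ v ∈ Q, R v w = true)).card := by
  classical
  by_contra hcon
  push Not at hcon
  have hnum : (2 * t - 1).choose t ≤ 4 ^ (t - 1) := by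
    obtain ⟨s, rfl⟩ : ∃ s, t = s + 1 := ⟨t - 1, by omega⟩
    have h1 := Nat.choose_middle_le_pow s
    have h2 := Nat.choose_symm_half s
    simp only [Nat.add_sub_cancel, show 2 * (s + 1) - 1 = 2 * s + 1 by omega]
    omega
  set P := K.powersetCard t with hP
  have hPc : P.card = (2 * t - 1).choose t := by rw [hP, Finset.card_powersetCard, hK]
  have hPpos : 0 < P.card := by rw [hPc]; exact Nat.choose_pos (by omega)
  -- double count
  have e1 : ∑ Q ∈ P, (T.filter (fun w => ∀ v ∈ Q, R v w = true)).card
      = ∑ w ∈ T, (P.filter (fun Q => ∀ v ∈ Q, R v w = true)).card := by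
    simp only [Finset.card_filter]
    rw [Finset.sum_comm]
  have e2 : ∀ w ∈ T, (P.filter (fun Q => ∀ v ∈ Q, R v w = true)).card
      = ((K.filter (fun v => R v w = true)).card).choose t := by
    intro w _
    rw [← Finset.card_powersetCard]
    congr 1
    ext Q
    simp only [hP, Finset.mem_filter, Finset.mem_powersetCard]
    constructor
    · rintro ⟨⟨h1, h2⟩, h3⟩
      exact ⟨fun v hv => Finset.mem_filter.2 ⟨h1 hv, h3 v hv⟩, h2⟩
    · rintro ⟨h1, h2⟩
      exact ⟨⟨fun v hv => (Finset.mem_filter.1 (h1 hv)).1, h2⟩,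
        fun v hv => (Finset.mem_filter.1 (h1 hv)).2⟩
  have e3 : ∑ w ∈ T, (K.filter (fun v => R v w = true)).card
      = ∑ v ∈ K, (T.filter (fun w => R v w = true)).card := by
    simp only [Finset.card_filter]
    rw [Finset.sum_comm]
  have e4 : (2 * t - 1) * T.card ≤ 2 * ∑ w ∈ T, (K.filter (fun v => R v w = true)).card := by
    rw [e3, Finset.mul_sum, ← hK]
    have := Finset.card_nsmul_le_sum K (fun v => 2 * (T.filter (fun w => R v w = true)).card) T.card h
    simpa using this
  have e5 : ∑ w ∈ T, (K.filter (fun v => R v w = true)).card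
      ≤ (∑ w ∈ T, ((K.filter (fun v => R v w = true)).card).choose t) + (t - 1) * T.card := by
    calc _ ≤ ∑ w ∈ T, (((K.filter (fun v => R v w = true)).card).choose t + (t - 1)) :=
          Finset.sum_le_sum (fun w _ => choose_ge _ t ht)
      _ = _ := by rw [Finset.sum_add_distrib]; simp [mul_comm]
  rw [← Finset.sum_congr rfl e2, ← e1] at e5
  have e6 : T.card ≤ 2 * ∑ Q ∈ P, (T.filter (fun w => ∀ v ∈ Q, R v w = true)).card := by
    obtain ⟨s, rfl⟩ : ∃ s, t = s + 1 := ⟨t - 1, by omega⟩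
    simp only [Nat.add_sub_cancel, show 2 * (s + 1) - 1 = 2 * s + 1 by omega] at e4 e5
    nlinarith
  have e7 : ∀ Q ∈ P, 2 * 4 ^ (t - 1) * (T.filter (fun w => ∀ v ∈ Q, R v w = true)).card < T.card := by
    intro Q hQ
    have := Finset.mem_powersetCard.1 hQ
    exact hcon Q this.1 this.2
  have e8 : ∑ Q ∈ P, 2 * 4 ^ (t - 1) * (T.filter (fun w => ∀ v ∈ Q, R v w = true)).card
      < ∑ Q ∈ P, T.card := Finset.sum_lt_sum_of_nonempty (Finset.card_pos.1 hPpos) e7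
  rw [← Finset.mul_sum, Finset.sum_const, smul_eq_mul] at e8
  rw [hPc] at e8
  have : (2 * t - 1).choose t * T.card ≤ 4 ^ (t - 1) * T.card := Nat.mul_le_mul_right _ hnum
  have h4 : 0 < 4 ^ (t - 1) := by positivity
  nlinarith [Nat.mul_le_mul_left (4 ^ (t - 1)) e6]

def Dc (t : ℕ) : ℕ := 2 * 4 ^ (t - 1)
def mc (t : ℕ) : ℕ := t * Dc t * 2 ^ (2 * t - 1)
def Bz (t n : ℕ) : ℕ := ((2 * t - 2) * n + 1) * ((2 * t - 1) * mc t) ^ (2 * t - 2)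

lemma Dc_pos (t : ℕ) : 2 ≤ Dc t := by
  have : 0 < 4 ^ (t - 1) := by positivity
  unfold Dc; omega

lemma transversal (c : ℕ → ℕ → Bool) (x : Bool) (t : ℕ) (ht : 1 ≤ t) : ∀ (s : ℕ) (W : ℕ → Finset ℕ),
    (∀ p q, p < q → q < s → ∀ u ∈ W q, ∀ v ∈ W p, u < v) →
    (∀ p q, p < q → q < s → ∀ Q ⊆ W q, ∀ Y ⊆ W p, Q.card = t → Y.card = t →
      ∃ u ∈ Q, ∃ v ∈ Y, c u v = x) →
    (∀ p < s, t * Dc t * 2 ^ s ≤ (W p).card) →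
    ∃ K : Finset ℕ, K.card = s ∧ Clique c x K ∧ ∀ u ∈ K, ∃ p < s, u ∈ W p := by
  intro s
  induction s with
  | zero => intro W _ _ _; exact ⟨∅, rfl, by intro u hu; simp at hu, by simp⟩
  | succ s ih =>
    intro W hord hno hcard
    classical
    have hDpos := Dc_pos t
    have hpow : s + 1 < 2 ^ (s + 1) := Nat.lt_two_pow_self
    set bad : ℕ → Finset ℕ := fun p => (W s).filter
      (fun v => 2 * ((W p).filter (fun w => c v w = x)).card < (W p).card) with hbad
    have hbadc : ∀ p < s, (bad p).card ≤ 2 * t - 2 := by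
      intro p hp
      by_contra hcon
      obtain ⟨K, hKb, hKc⟩ := Finset.exists_subset_card_eq (show 2 * t - 1 ≤ (bad p).card by omega)
      obtain ⟨Q, hQK, hQc, hT⟩ := avg t ht K (W p) (fun v w => decide (c v w = !x)) hKc (by
        intro v hv
        have h1 := (Finset.mem_filter.1 (hKb hv)).2
        have h2 := Finset.card_filter_add_card_filter_not (s := W p) (fun w => c v w = x)
        have h3 : (W p).filter (fun w => decide (c v w = !x) = true)
            = (W p).filter (fun w => ¬ c v w = x) := by
          apply Finset.filter_congr
          intro w _
          cases c v w <;> cases x <;> simp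
        rw [h3]; omega)
      have h1 := hcard p (by omega)
      change _ ≤ Dc t * _ at hT
      set Cm := (W p).filter (fun w => ∀ v ∈ Q, decide (c v w = !x) = true) with hCm
      have h2 : t ≤ Cm.card := by
        have h5 : Dc t * t ≤ Dc t * Cm.card := by
          have : 1 ≤ 2 ^ (s + 1) := Nat.one_le_two_pow
          nlinarith [Nat.mul_le_mul_left (t * Dc t) this]
        exact Nat.le_of_mul_le_mul_left h5 (by omega)
      obtain ⟨Y, hYC, hYc⟩ := Finset.exists_subset_card_eq h2
      obtain ⟨u, hu, v, hv, huv⟩ := hno p s hp (by omega) Q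
        (fun u hu => (Finset.mem_filter.1 (hKb (hQK hu))).1) Y
        (fun u hu => (Finset.mem_filter.1 (hYC hu)).1) hQc hYc
      have := (Finset.mem_filter.1 (hYC hv)).2 u hu
      rw [huv] at this
      cases x <;> simp at this
    have hun : ((Finset.range s).biUnion bad).card ≤ s * (2 * t - 2) := by
      have := Finset.card_biUnion_le_card_mul (Finset.range s) bad (2 * t - 2)
        (fun p hp => hbadc p (Finset.mem_range.1 hp))
      simpa using this
    have hlt : ((Finset.range s).biUnion bad).card < (W s).card := by
      refine lt_of_le_of_lt hun (lt_of_lt_of_le ?_ (hcard s (by omega)))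
      calc s * (2 * t - 2) ≤ s * (2 * t) := Nat.mul_le_mul_left _ (by omega)
        _ < (s + 1) * (2 * t) := by nlinarith
        _ ≤ 2 ^ (s + 1) * (t * Dc t) := Nat.mul_le_mul hpow.le (by nlinarith)
        _ = _ := by ring
    obtain ⟨v, hvW, hvb⟩ := Finset.exists_mem_notMem_of_card_lt_card hlt
    have hvb' : ∀ p < s, (W p).card ≤ 2 * ((W p).filter (fun w => c v w = x)).card := by
      intro p hp
      by_contra hcon
      exact hvb (Finset.mem_biUnion.2 ⟨p, Finset.mem_range.2 hp,
        Finset.mem_filter.2 ⟨hvW, by omega⟩⟩)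
    obtain ⟨K, hKc, hKq, hKm⟩ := ih (fun p => (W p).filter (fun w => c v w = x))
      (fun p q hpq hq u hu w hw => hord p q hpq (by omega) u (Finset.mem_filter.1 hu).1 w
        (Finset.mem_filter.1 hw).1)
      (fun p q hpq hq Q hQ Y hY => hno p q hpq (by omega) Q (hQ.trans (Finset.filter_subset _ _)) Y
        (hY.trans (Finset.filter_subset _ _)))
      (fun p hp => by
        have h1 := hvb' p hp
        have h2 := hcard p (by omega)
        rw [pow_succ, ← mul_assoc] at h2
        show t * Dc t * 2 ^ s ≤ ((W p).filter (fun w => c v w = x)).card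
        omega)
    have hKv : ∀ u ∈ K, v < u ∧ c v u = x := by
      intro u hu
      obtain ⟨p, hp, hup⟩ := hKm u hu
      have := Finset.mem_filter.1 hup
      exact ⟨hord p s hp (by omega) v hvW u this.1, this.2⟩
    refine ⟨insert v K, ?_, ?_, ?_⟩
    · rw [Finset.card_insert_of_notMem, hKc]
      intro h; exact absurd (hKv v h).1 (lt_irrefl _)
    · intro u hu w hw huw
      rcases Finset.mem_insert.1 hw with hwv | hw'
      · rcases Finset.mem_insert.1 hu with huv | hu'
        · omega
        · have := (hKv u hu').1; omega
      · rcases Finset.mem_insert.1 hu with huv | hu'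
        · rw [huv]; exact (hKv w hw').2
        · exact hKq u hu' w hw' huw
    · intro u hu
      rcases Finset.mem_insert.1 hu with rfl | hu
      · exact ⟨s, by omega, hvW⟩
      · obtain ⟨p, hp, hup⟩ := hKm u hu
        exact ⟨p, by omega, (Finset.mem_filter.1 hup).1⟩

set_option maxHeartbeats 2000000 in
lemma linear (c : ℕ → ℕ → Bool) (x : Bool) (t n N : ℕ) (ht : 1 ≤ t)
    (hnp : NoPath c (!x) t n N) (U : Finset ℕ) (hUN : ∀ u ∈ U, u < N) (hU : Bz t n ≤ U.card) :
    ∃ K ⊆ U, K.card = 2 * t - 1 ∧ Clique c x K := by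
  classical
  by_contra hcon
  push Not at hcon
  obtain ⟨σ, hσ⟩ : ∃ σ, σ = 2 * t - 2 := ⟨_, rfl⟩
  have hσ1 : 2 * t - 1 = σ + 1 := by omega
  have hDpos := Dc_pos t
  have hmt : t ≤ mc t := by
    unfold mc
    have : 1 ≤ 2 ^ (2 * t - 1) := Nat.one_le_two_pow
    calc t = t * 1 * 1 := by ring
      _ ≤ _ := Nat.mul_le_mul (Nat.mul_le_mul_left _ (by omega)) this
  obtain ⟨m, hm⟩ : ∃ m, m = mc t := ⟨_, rfl⟩
  unfold Bz at hU
  rw [hσ1, ← hσ, ← hm] at hU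
  rw [← hm] at hmt
  obtain ⟨f, hf1, hf2⟩ := chop U _ _ hU
  have hcl : ∀ i, ∃ q : ℕ → Finset ℕ, i < σ * n + 1 → ∃ Kc ⊆ f i, Clique c (!x) Kc ∧
      (∀ p < σ + 1, q p ⊆ Kc ∧ (q p).card = m) ∧
      ∀ p p', p < p' → p' < σ + 1 → ∀ u ∈ q p, ∀ v ∈ q p', u < v := by
    intro i
    by_cases hi : i < σ * n + 1
    · obtain ⟨K, hK, h | h⟩ := ramsey c x ((σ + 1) * m) σ (f i) (hf1 i hi).2.ge
        (by nlinarith)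
      · exact absurd h.2 (hcon K (hK.trans (hf1 i hi).1) (by omega))
      · obtain ⟨q, hq1, hq2⟩ := chop K (σ + 1) m h.1.ge
        exact ⟨q, fun _ => ⟨K, hK, h.2, hq1, hq2⟩⟩
    · exact ⟨fun _ => ∅, fun h => absurd h hi⟩
  choose Q hQ using hcl
  have hQf : ∀ i p, i < σ * n + 1 → p ≤ σ → Q i p ⊆ f i ∧ (Q i p).card = m := by
    intro i p hi hp
    obtain ⟨Kc, h1, h2, h3, h4⟩ := hQ i hi
    exact ⟨(h3 p (by omega)).1.trans h1, (h3 p (by omega)).2⟩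
  have hQc : ∀ i p p', i < σ * n + 1 → p ≤ σ → p' ≤ σ → ∀ u ∈ Q i p, ∀ v ∈ Q i p', u < v →
      c u v = !x := by
    intro i p p' hi hp hp' u hu v hv huv
    obtain ⟨Kc, h1, h2, h3, h4⟩ := hQ i hi
    exact h2 u ((h3 p (by omega)).1 hu) v ((h3 p' (by omega)).1 hv) huv
  have hQo : ∀ i p p', i < σ * n + 1 → p < p' → p' ≤ σ → ∀ u ∈ Q i p, ∀ v ∈ Q i p', u < v := by
    intro i p p' hi hpp hp' u hu v hv
    obtain ⟨Kc, h1, h2, h3, h4⟩ := hQ i hi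
    exact h4 p p' hpp (by omega) u hu v hv
  set A : ℕ → ℕ → ℕ → Prop := fun i p ℓ => ∃ l, IsPath c (!x) t l ∧ ℓ ≤ l.length ∧
    (∀ u ∈ l, ∃ v ∈ Q i p, u ≤ v) ∧ (∀ u ∈ l.take t, u ∈ Q i p) with hA
  have hA0 : ∀ i p, A i p 0 := fun i p => ⟨[], trivial, by simp, by simp, by simp⟩
  have hAn : ∀ i p ℓ, i < σ * n + 1 → p ≤ σ → A i p ℓ → ℓ < n := by
    rintro i p ℓ hi hp ⟨l, h1, h2, h3, h4⟩
    refine lt_of_le_of_lt h2 (hnp l h1 ?_)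
    intro u hu
    obtain ⟨v, hv, huv⟩ := h3 u hu
    exact lt_of_le_of_lt huv (hUN v ((hf1 i hi).1 ((hQf i p hi hp).1 hv)))
  -- extending a path by a clique inside the block of the same chunk
  have hext : ∀ i p ℓ X, i < σ * n + 1 → p + 1 ≤ σ → X ⊆ Q i (p + 1) → X.card = t → A i p ℓ →
      ∃ l, IsPath c (!x) t l ∧ ℓ + t ≤ l.length ∧
        (∀ u ∈ l, ∃ v ∈ X, u ≤ v) ∧ (∀ u ∈ l.take t, u ∈ X) := by
    rintro i p ℓ X hi hp hX hXc ⟨l, h1, h2, h3, h4⟩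
    obtain ⟨l', g1, g2, g3, g4⟩ := append_clique h1 X
      (fun u hu v hv huv => hQc i (p+1) (p+1) hi hp hp u (hX hu) v (hX hv) huv) hXc
      (fun u hu v hv => by
        obtain ⟨w, hw, huw⟩ := h3 u hu
        exact lt_of_le_of_lt huw (hQo i p (p+1) hi (by omega) hp w hw v (hX hv)))
      (fun u hu v hv => hQc i p (p+1) hi (by omega) hp u (h4 u hu) v (hX hv)
        (hQo i p (p+1) hi (by omega) hp u (h4 u hu) v (hX hv)))
    refine ⟨l', g1, by omega, ?_, g4⟩
    intro u hu
    rcases (g3 u).1 hu with hu | hu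
    · exact ⟨u, hu, le_rfl⟩
    · obtain ⟨w, hw, huw⟩ := h3 u hu
      obtain ⟨v, hv⟩ := Finset.card_pos.1 (by omega : 0 < X.card)
      exact ⟨v, hv, huw.trans (hQo i p (p+1) hi (by omega) hp w hw v (hX hv)).le⟩
  set lam : ℕ → ℕ → ℕ := fun i p => Nat.findGreatest (A i p) n with hlam
  have hlamA : ∀ i p, A i p (lam i p) := fun i p => Nat.findGreatest_spec (Nat.zero_le n) (hA0 i p)
  have hlamle : ∀ i p ℓ, i < σ * n + 1 → p ≤ σ → A i p ℓ → ℓ ≤ lam i p := fun i p ℓ hi hp h =>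
    Nat.le_findGreatest (hAn i p ℓ hi hp h).le h
  have hstep : ∀ i p, i < σ * n + 1 → p + 1 ≤ σ → lam i p ≤ lam i (p + 1) := by
    intro i p hi hp
    obtain ⟨X, hX, hXc⟩ := Finset.exists_subset_card_eq
      (show t ≤ (Q i (p+1)).card by rw [(hQf i (p+1) hi hp).2]; exact hmt)
    obtain ⟨l, g1, g2, g3, g4⟩ := hext i p _ X hi hp hX hXc (hlamA i p)
    refine hlamle i (p+1) _ hi hp ⟨l, g1, by omega, ?_, fun u hu => hX (g4 u hu)⟩
    intro u hu
    obtain ⟨v, hv, huv⟩ := g3 u hu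
    exact ⟨v, hX hv, huv⟩
  have hlink : ∀ i j p q X Y, i < j → j < σ * n + 1 → p + 1 ≤ σ → q ≤ σ → X ⊆ Q i (p + 1) →
      Y ⊆ Q j q → X.card = t → Y.card = t → (∀ u ∈ X, ∀ v ∈ Y, c u v = !x) →
      lam i p < lam j q := by
    intro i j p q X Y hij hj hp hq hX hY hXc hYc hXY
    have hi : i < σ * n + 1 := by omega
    obtain ⟨l, g1, g2, g3, g4⟩ := hext i p _ X hi hp hX hXc (hlamA i p)
    have hlt : ∀ u ∈ X, ∀ v ∈ Y, u < v := fun u hu v hv =>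
      hf2 i j hij hj u ((hQf i (p+1) hi hp).1 (hX hu)) v ((hQf j q hj hq).1 (hY hv))
    have hlt' : ∀ u ∈ l, ∀ v ∈ Y, u < v := by
      intro u hu v hv
      obtain ⟨w, hw, huw⟩ := g3 u hu
      exact lt_of_le_of_lt huw (hlt w hw v hv)
    obtain ⟨l', k1, k2, k3, k4⟩ := append_clique g1 Y
      (fun u hu v hv huv => hQc j q q hj hq hq u (hY hu) v (hY hv) huv) hYc hlt'
      (fun u hu v hv => hXY u (g4 u hu) v hv)
    have : lam i p + t ≤ lam j q := by
      refine hlamle j q _ hj hq ⟨l', k1, by omega, ?_, fun u hu => hY (k4 u hu)⟩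
      intro u hu
      rcases (k3 u).1 hu with hu | hu
      · exact ⟨u, hY hu, le_rfl⟩
      · obtain ⟨v, hv⟩ := Finset.card_pos.1 (by omega : 0 < Y.card)
        exact ⟨v, hY hv, (hlt' u hu v hv).le⟩
    omega
  obtain ⟨e, he1, he2⟩ := record n σ (fun i p => lam i (min p σ)) (Finset.range (σ * n + 1))
    (by
      intro i hi
      have : Monotone (fun p => lam i (min p σ)) := by
        apply monotone_nat_of_le_succ
        intro p
        rcases Nat.lt_or_ge p σ with h | h
        · simp only [min_eq_left h.le, min_eq_left (show p + 1 ≤ σ from h)]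
          exact hstep i p (Finset.mem_range.1 hi) h
        · simp only [min_eq_right h, min_eq_right (show σ ≤ p + 1 by omega)]; exact le_rfl
      intro p q hpq
      exact this hpq)
    (fun i hi p => hAn i _ _ (Finset.mem_range.1 hi) (min_le_right _ _) (hlamA i _))
    (by simp)
  have he1' : ∀ p ≤ σ, e p < σ * n + 1 := fun p hp => Finset.mem_range.1 (he1 p hp)
  obtain ⟨K, hKc, hKq, hKm⟩ := transversal c x t ht (σ + 1) (fun p => Q (e p) p)
    (by
      intro p q hpq hq u hu v hv
      exact hf2 (e q) (e p) (he2 p q hpq (by omega)).1 (he1' p (by omega)) u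
        ((hQf (e q) q (he1' q (by omega)) (by omega)).1 hu) v
        ((hQf (e p) p (he1' p (by omega)) (by omega)).1 hv))
    (by
      intro p q hpq hq X hX Y hY hXc hYc
      by_contra hno
      push Not at hno
      have h2 := he2 p q hpq (by omega)
      have h3 := hlink (e q) (e p) (q - 1) p X Y h2.1 (he1' p (by omega)) (by omega) (by omega)
        (by rw [show q - 1 + 1 = q by omega]; exact hX) hY hXc hYc
        (fun u hu v hv => by
          exact Bool.eq_not.2 (hno u hu v hv))
      have h4 := h2.2
      simp only [min_eq_left (show p ≤ σ by omega), min_eq_left (show q - 1 ≤ σ by omega)] at h4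
      omega)
    (by
      intro p hp
      have h5 := (hQf (e p) p (he1' p (by omega)) (by omega)).2
      simp only [h5, hm, mc, hσ1]
      exact le_rfl)
  refine hcon K ?_ (by omega) hKq
  intro u hu
  obtain ⟨p, hp, hup⟩ := hKm u hu
  exact (hf1 _ (he1' p (by omega))).1 ((hQf (e p) p (he1' p (by omega)) (by omega)).1 hup)

lemma link (c : ℕ → ℕ → Bool) (t n N : ℕ) (ht : 1 ≤ t) (hnp : ∀ x, NoPath c x t n N)
    (X T : Finset ℕ) (hXN : ∀ u ∈ X, u < N) (hX : 2 * Bz t n - 1 ≤ X.card) :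
    ∃ x, ∃ Q ⊆ X, Q.card = t ∧ Clique c x Q ∧ ∃ T' ⊆ T, (∀ u ∈ Q, ∀ w ∈ T', c u w = x) ∧
      T.card ≤ Dc t * T'.card := by
  classical
  have key : ∀ x, ∀ U ⊆ X, Bz t n ≤ U.card →
      (∀ v ∈ U, T.card ≤ 2 * (T.filter (fun w => c v w = x)).card) → 
      ∃ Q ⊆ X, Q.card = t ∧ Clique c x Q ∧ ∃ T' ⊆ T, (∀ u ∈ Q, ∀ w ∈ T', c u w = x) ∧
      T.card ≤ Dc t * T'.card := by
    intro x U hUX hU hmaj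
    obtain ⟨K, hKU, hKc, hKq⟩ := linear c x t n N ht (hnp _) U (fun u hu => hXN u (hUX hu)) hU
    obtain ⟨Q, hQK, hQc, hT⟩ := avg t ht K T (fun v w => decide (c v w = x)) hKc (by
      intro v hv
      simpa using hmaj v (hKU hv))
    refine ⟨Q, (hQK.trans hKU).trans hUX, hQc, hKq.mono hQK, _, Finset.filter_subset _ _, ?_, hT⟩
    intro u hu w hw
    simpa using (Finset.mem_filter.1 hw).2 u hu
  have hsplit := Finset.card_filter_add_card_filter_not (s := X)
    (fun v => T.card ≤ 2 * (T.filter (fun w => c v w = true)).card)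
  by_cases h : Bz t n ≤ (X.filter (fun v => T.card ≤ 2 * (T.filter (fun w => c v w = true)).card)).card
  · exact ⟨true, key true _ (Finset.filter_subset _ _) h (fun v hv => (Finset.mem_filter.1 hv).2)⟩
  · refine ⟨false, key false
      (X.filter (fun v => ¬ T.card ≤ 2 * (T.filter (fun w => c v w = true)).card))
      (Finset.filter_subset _ _) (by omega) (fun v hv => ?_)⟩
    have h1 := (Finset.mem_filter.1 hv).2
    have h2 := Finset.card_filter_add_card_filter_not (s := T) (fun w => c v w = true)
    simp only [Bool.not_eq_true] at h2
    omega

lemma Bz_pos (t n : ℕ) (ht : 1 ≤ t) : 1 ≤ Bz t n := by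
  have hD := Dc_pos t
  have h1 : 0 < mc t := by unfold mc; positivity
  have h2 : 0 < (2 * t - 1) * mc t := Nat.mul_pos (by omega) h1
  unfold Bz
  exact Nat.mul_pos (by omega) (pow_pos h2 _)

lemma Reach.extend {c x t r} {X Q T : Finset ℕ} (ht : 1 ≤ t) (h : Reach c x t r X) (hQX : Q ⊆ X)
    (hQc : Q.card = t) (hQ : Clique c x Q) (hXT : ∀ u ∈ X, ∀ v ∈ T, u < v)
    (hQT : ∀ u ∈ Q, ∀ w ∈ T, c u w = x) : Reach c x t (r + 1) T := by
  obtain ⟨l, h1, h2, h3, h4⟩ := h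
  obtain ⟨l', g1, g2, g3, g4⟩ := append_clique h1 Q hQ hQc
    (fun u hu v hv => h3 u hu v (hQX hv)) (fun u hu v hv => h4 u hu v (hQX hv))
  refine ⟨l', g1, by omega, ?_, fun u hu w hw => hQT u (g4 u hu) w hw⟩
  intro u hu w hw
  rcases (g3 u).1 hu with hu | hu
  · exact hXT u (hQX hu) w hw
  · obtain ⟨v, hv⟩ := Finset.card_pos.1 (by omega : 0 < Q.card)
    exact (h3 u hu v (hQX hv)).trans (hXT v (hQX hv) w hw)

lemma step (c : ℕ → ℕ → Bool) (t n N : ℕ) (ht : 1 ≤ t) (hnp : ∀ x, NoPath c x t n N)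
    (g : ℕ → ℕ) (hg0 : 2 * Bz t n - 1 ≤ g 0)
    (hg : ∀ w, 1 ≤ w → ∀ y, g w ≤ Dc t * y → g (w / 2) ≤ y)
    (J : Finset ℕ) (X : ℕ → Finset ℕ) (r b : ℕ → ℕ)
    (hXc : ∀ j ∈ J, 2 * Bz t n - 1 ≤ (X j).card)
    (hXN : ∀ j ∈ J, ∀ u ∈ X j, u < N)
    (hXr : ∀ j ∈ J, Reach c true t (r j) (X j))
    (hXb : ∀ j ∈ J, Reach c false t (b j) (X j)) :
    ∀ (w : ℕ) (T : Finset ℕ) (ρ β : ℕ), (∀ j ∈ J, ∀ u ∈ X j, ∀ v ∈ T, u < v) →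
      (∀ j ∈ J, ρ ≤ r j → β ≤ b j → r j < ρ + w) → g w ≤ T.card →
      Reach c true t ρ T → Reach c false t β T →
      ∃ T' ⊆ T, ∃ ρ' β', 2 * Bz t n - 1 ≤ T'.card ∧ Reach c true t ρ' T' ∧ Reach c false t β' T' ∧
        ∀ j ∈ J, r j < ρ' ∨ b j < β' := by
  intro w
  induction w using Nat.strong_induction_on with
  | _ w ih =>
  intro T ρ β hXT hw hgT hρ hβ
  rcases Nat.eq_zero_or_pos w with rfl | hwpos
  · refine ⟨T, subset_rfl, ρ, β, hg0.trans hgT, hρ, hβ, ?_⟩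
    intro j hj
    by_contra hcon
    push Not at hcon
    have := hw j hj hcon.1 hcon.2
    omega
  · have hD := Dc_pos t
    have hlt : w / 2 < w := Nat.div_lt_self hwpos (by omega)
    by_cases hS : (J.filter (fun j => ρ + w / 2 ≤ r j ∧ β ≤ b j)).Nonempty
    · obtain ⟨j, hjS, hmax⟩ := Finset.exists_max_image _ b hS
      obtain ⟨hjJ, hj1, hj2⟩ := Finset.mem_filter.1 hjS
      obtain ⟨x, Q, hQX, hQc, hQ, T', hT', hQT, hcard⟩ :=
        link c t n N ht hnp (X j) T (hXN j hjJ) (hXc j hjJ)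
      have hgT' := hg w hwpos T'.card (hgT.trans hcard)
      have hXT' : ∀ j ∈ J, ∀ u ∈ X j, ∀ v ∈ T', u < v := fun i hi u hu v hv =>
        hXT i hi u hu v (hT' hv)
      cases x with
      | true =>
        obtain ⟨T'', hT'', res⟩ := ih (w / 2) hlt T' (r j + 1) β hXT' (by
          intro i hi h1 h2
          have := hw i hi (by omega) h2
          omega) hgT'
          ((hXr j hjJ).extend ht hQX hQc hQ (hXT' j hjJ) hQT) (hβ.mono hT')
        exact ⟨T'', hT''.trans hT', res⟩
      | false =>
        obtain ⟨T'', hT'', res⟩ := ih (w / 2) hlt T' ρ (b j + 1) hXT' (by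
          intro i hi h1 h2
          by_contra hcon
          have := hmax i (Finset.mem_filter.2 ⟨hi, by omega, by omega⟩)
          omega) hgT' (hρ.mono hT')
          ((hXb j hjJ).extend ht hQX hQc hQ (hXT' j hjJ) hQT)
        exact ⟨T'', hT''.trans hT', res⟩
    · refine ih (w / 2) hlt T ρ β hXT ?_ (hg w hwpos _ (hgT.trans ?_)) hρ hβ
      · intro i hi h1 h2
        by_contra hcon
        exact hS ⟨i, Finset.mem_filter.2 ⟨hi, by omega, h2⟩⟩
      · nlinarith

lemma Reach.lt {c x t r n N} {X : Finset ℕ} (h : Reach c x t r X) (hne : X.Nonempty)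
    (hXN : ∀ u ∈ X, u < N) (hnp : NoPath c x t n N) : r < n := by
  obtain ⟨l, h1, h2, h3, h4⟩ := h
  obtain ⟨w, hw⟩ := hne
  exact lt_of_le_of_lt h2 (hnp l h1 (fun u hu => (h3 u hu w hw).trans (hXN w hw)))

lemma main (c : ℕ → ℕ → Bool) (t n : ℕ) (ht : 1 ≤ t)
    (g : ℕ → ℕ) (hg0 : 2 * Bz t n - 1 ≤ g 0)
    (hg : ∀ w, 1 ≤ w → ∀ y, g w ≤ Dc t * y → g (w / 2) ≤ y)
    (hnp : ∀ x, NoPath c x t n ((n ^ 2 + 1) * g n)) : False := by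
  have hB := Bz_pos t n ht
  have key : ∀ K, K ≤ n ^ 2 + 1 → ∃ (X : ℕ → Finset ℕ) (r b : ℕ → ℕ), ∀ j < K,
      X j ⊆ Finset.Ico (j * g n) ((j + 1) * g n) ∧ 2 * Bz t n - 1 ≤ (X j).card ∧
      Reach c true t (r j) (X j) ∧ Reach c false t (b j) (X j) ∧
      ∀ i < j, r i < r j ∨ b i < b j := by
    intro K
    induction K with
    | zero => intro _; exact ⟨fun _ => ∅, fun _ => 0, fun _ => 0, by simp⟩
    | succ K ih =>
      intro hK
      obtain ⟨X, r, b, h⟩ := ih (by omega)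
      have hXN : ∀ j ∈ Finset.range K, ∀ u ∈ X j, u < (n ^ 2 + 1) * g n := by
        intro j hj u hu
        have hj' := Finset.mem_range.1 hj
        have := Finset.mem_Ico.1 ((h j hj').1 hu)
        exact lt_of_lt_of_le this.2 (Nat.mul_le_mul_right _ (by omega))
      obtain ⟨T', hT', ρ, β, q1, q2, q3, q4⟩ := step c t n _ ht hnp g hg0 hg (Finset.range K) X r b
        (fun j hj => (h j (Finset.mem_range.1 hj)).2.1) hXN
        (fun j hj => (h j (Finset.mem_range.1 hj)).2.2.1)
        (fun j hj => (h j (Finset.mem_range.1 hj)).2.2.2.1) n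
        (Finset.Ico (K * g n) ((K + 1) * g n)) 0 0
        (by
          intro j hj u hu v hv
          have hj' := Finset.mem_range.1 hj
          have h1 := Finset.mem_Ico.1 ((h j hj').1 hu)
          have h2 := Finset.mem_Ico.1 hv
          have h3 : (j + 1) * g n ≤ K * g n := Nat.mul_le_mul_right _ (by omega)
          omega)
        (by
          intro j hj _ _
          have hj' := h j (Finset.mem_range.1 hj)
          have := hj'.2.2.1.lt (Finset.card_pos.1 (by omega)) (hXN j hj) (hnp true)
          omega)
        (by rw [Nat.card_Ico]; have : (K + 1) * g n = K * g n + g n := by ring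
            omega)
        ⟨[], trivial, by simp, by simp, by simp⟩ ⟨[], trivial, by simp, by simp, by simp⟩
      refine ⟨fun j => if j < K then X j else T', fun j => if j < K then r j else ρ,
        fun j => if j < K then b j else β, ?_⟩
      intro j hj
      by_cases hjK : j < K
      · simp only [hjK, if_true]
        obtain ⟨k1, k2, k3, k4, k5⟩ := h j hjK
        refine ⟨k1, k2, k3, k4, ?_⟩
        intro i hi
        simp only [hi.trans hjK, if_true]
        exact k5 i hi
      · have : j = K := by omega
        subst this
        simp only [lt_irrefl, if_false]
        refine ⟨hT', q1, q2, q3, ?_⟩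
        intro i hi
        simp only [hi, if_true]
        exact q4 i (Finset.mem_range.2 hi)
  obtain ⟨X, r, b, h⟩ := key (n ^ 2 + 1) le_rfl
  have hlt : ∀ j < n ^ 2 + 1, r j < n ∧ b j < n := by
    intro j hj
    obtain ⟨k1, k2, k3, k4, k5⟩ := h j hj
    have hne : (X j).Nonempty := Finset.card_pos.1 (by omega)
    have hXN : ∀ u ∈ X j, u < (n ^ 2 + 1) * g n := fun u hu =>
      lt_of_lt_of_le (Finset.mem_Ico.1 (k1 hu)).2 (Nat.mul_le_mul_right _ (by omega))
    exact ⟨k3.lt hne hXN (hnp true), k4.lt hne hXN (hnp false)⟩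
  obtain ⟨i, hi, j, hj, hne, heq⟩ := Finset.exists_ne_map_eq_of_card_lt_of_maps_to
    (s := Finset.range (n ^ 2 + 1)) (t := Finset.range n ×ˢ Finset.range n)
    (f := fun j => (r j, b j)) (by simp [pow_two]) (by
      intro j hj
      have := hlt j (by simpa using hj)
      simpa using this)
  simp only [Prod.mk.injEq] at heq
  have hi' := Finset.mem_range.1 hi
  have hj' := Finset.mem_range.1 hj
  rcases Nat.lt_or_gt_of_ne hne with hij | hij
  · have := (h j hj').2.2.2.2 i hij; omega
  · have := (h i hi').2.2.2.2 j hij; omega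

lemma convert_path (c : ℕ → ℕ → Bool) (x : Bool) (t n N : ℕ) (h : ¬ NoPath c x t n N) :
    ∃ f : Fin n → Fin N, StrictMono f ∧
      ∀ i j : Fin n, i < j → (j : ℕ) ≤ (i : ℕ) + t → c (f i) (f j) = x := by
  unfold NoPath at h
  push Not at h
  obtain ⟨l, h1, h2, h3⟩ := h
  refine ⟨fun i => ⟨l[n - 1 - (i : ℕ)]'(by have := i.2; omega), h2 _ (List.getElem_mem _)⟩, ?_, ?_⟩
  · intro i j hij
    rw [Fin.lt_def] at hij ⊢
    have := j.2
    exact (h1.get (n - 1 - j) (n - 1 - i) (by omega) (by omega)).1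
  · intro i j hij hjt
    rw [Fin.lt_def] at hij
    have := j.2
    exact (h1.get (n - 1 - j) (n - 1 - i) (by omega) (by omega)).2 (by omega)

lemma ramsey_le (t n : ℕ) (ht : 1 ≤ t)
    (g : ℕ → ℕ) (hg0 : 2 * Bz t n - 1 ≤ g 0)
    (hg : ∀ w, 1 ≤ w → ∀ y, g w ≤ Dc t * y → g (w / 2) ≤ y) :
    ordRamseyPathPowSelf n t ≤ (n ^ 2 + 1) * g n := by
  apply Nat.sInf_le
  obtain ⟨N, hN⟩ : ∃ N, N = (n ^ 2 + 1) * g n := ⟨_, rfl⟩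
  rw [← hN]
  intro χ
  set c : ℕ → ℕ → Bool := fun i j => if h : i < N ∧ j < N then χ ⟨i, h.1⟩ ⟨j, h.2⟩ else false with hc
  have hcχ : ∀ i j : Fin N, c i j = χ i j := by
    intro i j
    simp [hc]
  by_contra hcon
  push Not at hcon
  apply main c t n ht g hg0 hg
  intro x
  rw [← hN]
  by_contra hx
  obtain ⟨f, hf1, hf2⟩ := convert_path c x t n N hx
  cases x with
  | true => exact hcon.1 ⟨f, hf1, fun i j h1 h2 => by rw [← hcχ]; exact hf2 i j h1 h2⟩
  | false => exact hcon.2 ⟨f, hf1, fun i j h1 h2 => by rw [← hcχ]; exact hf2 i j h1 h2⟩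

lemma Dc_eq (s : ℕ) : Dc (s + 2) = 2 ^ (2 * s + 3) := by
  unfold Dc
  rw [show (4 : ℕ) = 2 ^ 2 by norm_num, ← pow_mul, ← pow_succ']
  congr 1

lemma Bz_le (s n : ℕ) (hn : 1 ≤ n) :
    2 * Bz (s + 2) n ≤ 4 * (s + 2) * n * ((s + 2) ^ 2 * 2 ^ (4 * s + 7)) ^ (2 * s + 2) := by
  have h1 : (2 * (s + 2) - 1) * mc (s + 2) ≤ (s + 2) ^ 2 * 2 ^ (4 * s + 7) := by
    unfold mc
    rw [Dc_eq, show 2 * (s + 2) - 1 = 2 * s + 3 by omega]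
    calc (2 * s + 3) * ((s + 2) * 2 ^ (2 * s + 3) * 2 ^ (2 * s + 3))
        ≤ (2 * (s + 2)) * ((s + 2) * 2 ^ (2 * s + 3) * 2 ^ (2 * s + 3)) :=
          Nat.mul_le_mul_right _ (by omega)
      _ = (s + 2) ^ 2 * (2 ^ (2 * s + 3) * 2 ^ (2 * s + 3) * 2) := by ring
      _ = (s + 2) ^ 2 * 2 ^ (4 * s + 7) := by
          rw [← pow_add, ← pow_succ]; congr 2; omega
  have h2 : (2 * (s + 2) - 2) * n + 1 ≤ 2 * (s + 2) * n := by
    rw [show 2 * (s + 2) - 2 = 2 * s + 2 by omega]; nlinarith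
  unfold Bz
  calc _ ≤ 2 * ((2 * (s + 2) * n) * ((s + 2) ^ 2 * 2 ^ (4 * s + 7)) ^ (2 * (s + 2) - 2)) :=
        Nat.mul_le_mul_left _ (Nat.mul_le_mul h2 (Nat.pow_le_pow_left h1 _))
    _ = _ := by rw [show 2 * (s + 2) - 2 = 2 * s + 2 by omega]; ring

lemma final_bound (s n : ℕ) (hn : 1 ≤ n) :
    (n ^ 2 + 1) * ((2 * Bz (s + 2) n - 1) * max 1 ((2 * n) ^ (2 * s + 3))) ≤
      (400 * (s + 2) ^ 3) ^ ((s + 2) ^ 2) * n ^ (4 * (s + 2) - 2) := by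
  have h1 : n ^ 2 + 1 ≤ 2 * n ^ 2 := by nlinarith
  have h2 : max 1 ((2 * n) ^ (2 * s + 3)) = 2 ^ (2 * s + 3) * n ^ (2 * s + 3) := by
    rw [max_eq_right (Nat.one_le_pow _ _ (by omega)), mul_pow]
  have h3 := Bz_le s n hn
  rw [h2]
  set T := s + 2 with hT
  have hTpos : 1 ≤ T := by omega
  calc _ ≤ (2 * n ^ 2) * ((4 * T * n * (T ^ 2 * 2 ^ (4 * s + 7)) ^ (2 * s + 2))
            * (2 ^ (2 * s + 3) * n ^ (2 * s + 3))) :=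
        Nat.mul_le_mul h1 (Nat.mul_le_mul_right _ (by omega))
    _ = 2 ^ (8 * s ^ 2 + 24 * s + 20) * T ^ (4 * s + 5) * n ^ (2 * s + 6) := by
        rw [mul_pow, ← pow_mul, ← pow_mul]
        ring
    _ ≤ 2 ^ (8 * T ^ 2) * T ^ (3 * T ^ 2) * n ^ (4 * T - 2) := by
        refine Nat.mul_le_mul (Nat.mul_le_mul ?_ ?_) ?_
        · exact Nat.pow_le_pow_right (by norm_num) (by rw [hT]; nlinarith)
        · exact Nat.pow_le_pow_right hTpos (by rw [hT]; nlinarith)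
        · exact Nat.pow_le_pow_right hn (by omega)
    _ ≤ (400 * T ^ 3) ^ (T ^ 2) * n ^ (4 * T - 2) := by
        refine Nat.mul_le_mul_right _ ?_
        rw [mul_pow, ← pow_mul, pow_mul 2 8]
        exact Nat.mul_le_mul_right _ (Nat.pow_le_pow_left (by norm_num) _)

end PP

/-- `R_<(P_n^t, P_n^t) ≤ (400 t^3)^(t^2) · n^(4t−2)`. -/
theorem stmt2 (t n : ℕ) (ht : 1 ≤ t) (hn : 1 ≤ n) :
    ordRamseyPathPowSelf n t ≤ (400 * t ^ 3) ^ (t ^ 2) * n ^ (4 * t - 2) := by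
  rcases Nat.lt_or_ge t 2 with h | h
  · obtain rfl : t = 1 := by omega
    refine (PP.ramsey_le 1 n le_rfl (fun _ => 1) (by simp [PP.Bz]) ?_).trans ?_
    · intro w _ y hy
      simp only [PP.Dc] at hy ⊢
      omega
    · norm_num
      nlinarith
  · obtain ⟨s, rfl⟩ : ∃ s, t = s + 2 := ⟨t - 2, by omega⟩
    refine (PP.ramsey_le (s + 2) n (by omega)
      (fun w => (2 * PP.Bz (s + 2) n - 1) * max 1 ((2 * w) ^ (2 * s + 3))) ?_ ?_).trans
      (PP.final_bound s n hn)
    · exact Nat.le_mul_of_pos_right _ (by positivity)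
    · intro w hw y hy
      rw [PP.Dc_eq, max_eq_right (Nat.one_le_pow _ _ (by omega)), mul_pow, mul_left_comm] at hy
      have h1 := Nat.le_of_mul_le_mul_left hy (by positivity)
      refine le_trans (Nat.mul_le_mul_left _ ?_) h1
      refine max_le (Nat.one_le_pow _ _ hw) (Nat.pow_le_pow_left (by omega) _)
end

section
/- For every integer s ≥ 3, there is a constant C = C(s) such that for all n ≥ 3, the ordered Ramsey number satisfies R_<(K_s^{(3)}, P_n^{(3)}) ≤ C · n^C. -/
/-- `χ x y z` is the color of the triple `{x, y, z}` for `x < y < z`: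
`true` = red, `false` = blue. A red ordered copy of the complete 3-uniform
hypergraph `K_s^(3)`. -/
def ContainsRedClique3 (N s : ℕ) (χ : Fin N → Fin N → Fin N → Bool) : Prop :=
  ∃ f : Fin s → Fin N, StrictMono f ∧
    ∀ i j k : Fin s, i < j → j < k → χ (f i) (f j) (f k) = true

/-- A blue ordered copy of the monotone tight path `P_n^(3)`:
vertices `1, …, n` and edges `{i, i+1, i+2}` for `1 ≤ i ≤ n − 2`. -/
def ContainsBlueTightPath (N n : ℕ) (χ : Fin N → Fin N → Fin N → Bool) : Prop :=
  ∃ f : Fin n → Fin N, StrictMono f ∧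
    ∀ (i : ℕ) (h : i + 2 < n),
      χ (f ⟨i, by omega⟩) (f ⟨i + 1, by omega⟩) (f ⟨i + 2, h⟩) = false

/-- The ordered Ramsey number `R_<(K_s^(3), P_n^(3))`. -/
noncomputable def ordRamsey3 (s n : ℕ) : ℕ :=
  sInf {N | ∀ χ : Fin N → Fin N → Fin N → Bool,
    ContainsRedClique3 N s χ ∨ ContainsBlueTightPath N n χ}

lemma card_supersets (V S : Finset ℕ) (M : ℕ) (hS : S ⊆ V) :
    ((Finset.powersetCard M V).filter (fun A => S ⊆ A)).card ≤ (V.card - S.card).choose (M - S.card) := by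
  rw [← Finset.card_sdiff_of_subset hS, ← Finset.card_powersetCard]
  apply Finset.card_le_card_of_injOn (fun A => A \ S)
  · intro A hA
    simp only [Finset.coe_filter, Finset.mem_powersetCard, Set.mem_ofPred_eq] at hA
    simp only [Finset.mem_coe, Finset.mem_powersetCard]
    refine ⟨Finset.sdiff_subset_sdiff hA.1.1 (le_refl _), ?_⟩
    rw [Finset.card_sdiff_of_subset hA.2, hA.1.2]
  · intro A hA B hB hAB
    simp only [Finset.coe_filter, Finset.mem_powersetCard, Set.mem_ofPred_eq] at hA hB
    have h1 := Finset.sdiff_union_of_subset hA.2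
    have h2 := Finset.sdiff_union_of_subset hB.2
    simp only at hAB
    rw [← h1, ← h2, hAB]

lemma supersat (p M : ℕ) (V : Finset ℕ) (P : (Fin p → ℕ) → Prop) (hpM : p ≤ M)
    (hMV : M ≤ V.card) (h2 : 2 * p ≤ V.card)
    (H : ∀ A ⊆ V, A.card = M → ∃ t : Fin p → ℕ, Function.Injective t ∧ (∀ i, t i ∈ A) ∧ P t) :
    ∃ T : Finset (Fin p → ℕ), (∀ t ∈ T, (∀ i, t i ∈ V) ∧ Function.Injective t ∧ P t) ∧
      V.card ^ p ≤ 2 ^ p * p.factorial * M ^ p * T.card := by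
  classical
  set T := (Fintype.piFinset fun _ : Fin p => V).filter (fun t => Function.Injective t ∧ P t) with hT
  refine ⟨T, ?_, ?_⟩
  · intro t ht
    simp only [hT, Finset.mem_filter, Fintype.mem_piFinset] at ht
    exact ht
  have e1 : V.card.choose M ≤ T.card * (V.card - p).choose (M - p) := by
    rw [← Finset.card_powersetCard]
    have hsub : Finset.powersetCard M V ⊆ T.biUnion (fun t =>
        (Finset.powersetCard M V).filter (fun A => Finset.univ.image t ⊆ A)) := by
      intro A hA
      have hA' := Finset.mem_powersetCard.1 hA
      obtain ⟨t, h1, h2, h3⟩ := H A hA'.1 hA'.2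
      simp only [Finset.mem_biUnion, Finset.mem_filter]
      refine ⟨t, ?_, hA, ?_⟩
      · simp only [hT, Finset.mem_filter, Fintype.mem_piFinset]
        exact ⟨fun i => hA'.1 (h2 i), h1, h3⟩
      · intro x hx
        obtain ⟨i, -, rfl⟩ := Finset.mem_image.1 hx
        exact h2 i
    refine (Finset.card_le_card hsub).trans (Finset.card_biUnion_le_card_mul _ _ _ ?_)
    intro t ht
    simp only [hT, Finset.mem_filter, Fintype.mem_piFinset] at ht
    have hc : (Finset.univ.image t).card = p := by
      rw [Finset.card_image_of_injective _ ht.2.1]; simp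
    have := card_supersets V (Finset.univ.image t) M (by
      intro x hx
      obtain ⟨i, -, rfl⟩ := Finset.mem_image.1 hx
      exact ht.1 i)
    rwa [hc] at this
  have e2 : V.card.choose p ≤ T.card * M ^ p := by
    have hm := Nat.choose_mul (n := V.card) (k := M) (s := p) hpM
    have hpos : 0 < (V.card - p).choose (M - p) := Nat.choose_pos (by omega)
    apply Nat.le_of_mul_le_mul_right _ hpos
    rw [← hm]
    calc V.card.choose M * M.choose p ≤ (T.card * (V.card - p).choose (M - p)) * M ^ p :=
          Nat.mul_le_mul e1 (Nat.choose_le_pow _ _)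
      _ = _ := by ring
  have e3 : V.card ^ p ≤ 2 ^ p * (p.factorial * V.card.choose p) := by
    have : (V.card + 1 - p) ^ p ≤ p.factorial * V.card.choose p := by
      rw [← Nat.descFactorial_eq_factorial_mul_choose]
      exact Nat.pow_sub_le_descFactorial _ _
    calc V.card ^ p ≤ (2 * (V.card + 1 - p)) ^ p := Nat.pow_le_pow_left (by omega) _
      _ = 2 ^ p * (V.card + 1 - p) ^ p := by rw [mul_pow]
      _ ≤ _ := Nat.mul_le_mul_left _ this
  calc _ ≤ _ := e3
    _ ≤ 2 ^ p * (p.factorial * (T.card * M ^ p)) := by gcongr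
    _ = _ := by ring

def IsCh (col l : ℕ → ℕ → ℕ) (c p : ℕ) (f : ℕ → ℕ) : Prop :=
  (∀ i j, i < j → j < p → f i < f j ∧ col (f i) (f j) = c) ∧
  (∀ i j k, i < j → j < k → k < p → l (f j) (f k) ≤ l (f i) (f j))

def Ch (col l : ℕ → ℕ → ℕ) (c p : ℕ) (V : Finset ℕ) : Prop :=
  ∃ f : ℕ → ℕ, (∀ i, i < p → f i ∈ V) ∧ IsCh col l c p f

def Spec (p k n g : ℕ) : Prop :=
  ∀ (V : Finset ℕ) (col l : ℕ → ℕ → ℕ), (∀ x y, l x y < n) → (∀ x y, col x y ≤ k) →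
    g ≤ V.card → Ch col l 0 p V ∨ ∃ c, 1 ≤ c ∧ c ≤ k ∧ Ch col l c 3 V

lemma Ch.mono {col l : ℕ → ℕ → ℕ} {c p : ℕ} {V W : Finset ℕ} (h : Ch col l c p W) (hWV : W ⊆ V) :
    Ch col l c p V := by
  obtain ⟨f, h1, h2⟩ := h
  exact ⟨f, fun i hi => hWV (h1 i hi), h2⟩

lemma Spec.mono {p k n g g' : ℕ} (h : Spec p k n g) (hg : g ≤ g') : Spec p k n g' :=
  fun V col l h1 h2 h3 => h V col l h1 h2 (hg.trans h3)

/-- combining a set `W` of interchangeable second vertices with the rest of a chain -/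
lemma combine (p k n R h : ℕ) (hp : 3 ≤ p) (hR : Spec p (k + 1) n R)
    (V W : Finset ℕ) (col l : ℕ → ℕ → ℕ) (hl : ∀ x y, l x y < n) (hc : ∀ x y, col x y ≤ k)
    (hWV : W ⊆ V) (hWR : R ≤ W.card) (x : ℕ → ℕ) (hx : ∀ i, i < p → x i ∈ V)
    (hW : ∀ w ∈ W, l (x 0) w = h ∧ IsCh col l 0 p (fun i => if i = 1 then w else x i)) :
    Ch col l 0 (p + 1) V ∨ ∃ c, 1 ≤ c ∧ c ≤ k ∧ Ch col l c 3 V := by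
  have a1 : ∀ w ∈ W, x 0 < w ∧ col (x 0) w = 0 := by
    intro w hw
    have := (hW w hw).2.1 0 1 (by omega) (by omega)
    simpa using this
  have a2 : ∀ w ∈ W, ∀ j, 2 ≤ j → j < p → w < x j ∧ col w (x j) = 0 := by
    intro w hw j hj hjp
    have := (hW w hw).2.1 1 j (by omega) (by omega)
    simpa [show j ≠ 1 by omega] using this
  have a3 : ∀ w ∈ W, ∀ j, 2 ≤ j → j < p → l w (x j) ≤ h := by
    intro w hw j hj hjp
    have := (hW w hw).2.2 0 1 j (by omega) (by omega) hjp
    simpa [show j ≠ 1 by omega, (hW w hw).1] using this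
  have a4 : ∀ w ∈ W, ∀ i j, 2 ≤ i → i < j → j < p → x i < x j ∧ col (x i) (x j) = 0 := by
    intro w hw i j hi hij hjp
    have := (hW w hw).2.1 i j (by omega) (by omega)
    simpa [show j ≠ 1 by omega, show i ≠ 1 by omega] using this
  have a5 : ∀ w ∈ W, ∀ i j, 2 ≤ i → i < j → j < p → l (x i) (x j) ≤ l w (x i) := by
    intro w hw i j hi hij hjp
    have := (hW w hw).2.2 1 i j (by omega) (by omega) hjp
    simpa [show j ≠ 1 by omega, show i ≠ 1 by omega] using this
  have a6 : ∀ w ∈ W, ∀ i j m, 2 ≤ i → i < j → j < m → m < p → l (x j) (x m) ≤ l (x i) (x j) := by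
    intro w hw i j m hi hij hjm hmp
    have := (hW w hw).2.2 i j m (by omega) (by omega) hmp
    simpa [show j ≠ 1 by omega, show i ≠ 1 by omega, show m ≠ 1 by omega] using this
  have key := hR W (fun a b => if col a b = 0 ∧ h ≤ l a b then k + 1 else col a b) l hl (by
    intro a b
    have := hc a b
    split_ifs <;> omega) hWR
  rcases key with ⟨f, hf1, hf2, hf3⟩ | ⟨c, hc1, hc2, f, hf1, hf2, hf3⟩
  · left
    have b1 : ∀ i j, i < j → j < p → f i < f j ∧ col (f i) (f j) = 0 ∧ l (f i) (f j) < h := by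
      intro i j hij hj
      have := hf2 i j hij hj
      dsimp only at this
      split_ifs at this with h1
      · exact this.2.elim
      · refine ⟨this.1, this.2, ?_⟩
        by_contra hcon
        exact h1 ⟨this.2, by omega⟩
    refine ⟨fun i => if i = 0 then x 0 else f (i - 1), ?_, ?_, ?_⟩
    · intro i hi
      dsimp only
      split_ifs
      · exact hx 0 (by omega)
      · exact hWV (hf1 _ (by omega))
    · intro i j hij hj
      dsimp only
      rw [if_neg (show j ≠ 0 by omega)]
      split_ifs
      · exact a1 _ (hf1 _ (by omega))
      · have := b1 (i - 1) (j - 1) (by omega) (by omega)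
        exact ⟨this.1, this.2.1⟩
    · intro i j m hij hjm hm
      dsimp only
      rw [if_neg (show j ≠ 0 by omega), if_neg (show m ≠ 0 by omega)]
      split_ifs
      · rw [(hW _ (hf1 (j - 1) (by omega))).1]
        exact (b1 (j - 1) (m - 1) (by omega) (by omega)).2.2.le
      · exact hf3 _ _ _ (by omega) (by omega) (by omega)
  · by_cases hck : c = k + 1
    · left
      have b1 : ∀ i j, i < j → j < 3 → f i < f j ∧ col (f i) (f j) = 0 ∧ h ≤ l (f i) (f j) := by
        intro i j hij hj
        have := hf2 i j hij hj
        dsimp only at this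
        split_ifs at this with h1
        · exact ⟨this.1, h1⟩
        · have := hc (f i) (f j)
          omega
      have w0 := hf1 0 (by omega)
      refine ⟨fun i => if i < 3 then f i else x (i - 1), ?_, ?_, ?_⟩
      · intro i hi
        dsimp only
        split_ifs
        · exact hWV (hf1 _ (by omega))
        · exact hx _ (by omega)
      · intro i j hij hj
        dsimp only
        split_ifs
        · have := b1 i j hij (by omega)
          exact ⟨this.1, this.2.1⟩
        · exact a2 _ (hf1 _ (by omega)) _ (by omega) (by omega)
        · omega
        · exact a4 _ w0 _ _ (by omega) (by omega) (by omega)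
      · intro i j m hij hjm hm
        dsimp only
        split_ifs <;> try omega
        · exact hf3 _ _ _ hij hjm (by omega)
        · exact (a3 _ (hf1 _ (by omega)) _ (by omega) (by omega)).trans
            (b1 i j hij (by omega)).2.2
        · exact a5 _ (hf1 _ (by omega)) _ _ (by omega) (by omega) (by omega)
        · exact a6 _ w0 _ _ _ (by omega) (by omega) (by omega) (by omega)
    · right
      refine ⟨c, hc1, by omega, f, fun i hi => hWV (hf1 i hi), ?_, hf3⟩
      intro i j hij hj
      have := hf2 i j hij hj
      dsimp only at this
      split_ifs at this
      · omega
      · exact this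

lemma step_core (q k n M R : ℕ) (hqM : q + 3 ≤ M) (hM : Spec (q + 3) k n M)
    (hR : Spec (q + 3) (k + 1) n R) :
    Spec (q + 3 + 1) k n (2 ^ (q + 3) * (q + 3).factorial * M ^ (q + 3) * n * R + 2 * M + 1) := by
  classical
  intro V col l hl hc hV
  by_cases hno : ∃ c, 1 ≤ c ∧ c ≤ k ∧ Ch col l c 3 V
  · exact Or.inr hno
  set K := 2 ^ (q + 3) * (q + 3).factorial * M ^ (q + 3) with hK
  obtain ⟨T, hT1, hT2⟩ := supersat (q + 3) M V
    (fun t => IsCh col l 0 (q + 3) (fun i => if h : i < q + 3 then t ⟨i, h⟩ else 0))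
    hqM (by omega) (by omega) (by
      intro A hA hAM
      rcases hM A col l hl hc hAM.ge with ⟨f, hf1, hf2⟩ | ⟨c, h1, h2, h3⟩
      · refine ⟨fun i => f i, ?_, fun i => hf1 i i.2, ?_⟩
        · intro a b hab
          dsimp only at hab
          rcases lt_trichotomy a b with h | h | h
          · have := (hf2.1 a b h b.2).1
            omega
          · exact h
          · have := (hf2.1 b a h a.2).1
            omega
        · constructor
          · intro i j hij hj
            simpa [hj, hij.trans hj] using hf2.1 i j hij hj
          · intro i j m hij hjm hm
            simpa [hm, hjm.trans hm, hij.trans (hjm.trans hm)] using hf2.2 i j m hij hjm hm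
      · exact absurd ⟨c, h1, h2, h3.mono hA⟩ hno)
  have hmaps : ∀ t ∈ T, ((Fin.removeNth (1 : Fin (q + 3)) t, l (t 0) (t 1)) : (Fin (q + 2) → ℕ) × ℕ) ∈
      (Fintype.piFinset fun _ : Fin (q + 2) => V) ×ˢ Finset.range n := by
    intro t ht
    simp only [Finset.mem_product, Fintype.mem_piFinset, Finset.mem_range]
    exact ⟨fun i => (hT1 t ht).1 _, hl _ _⟩
  have hcard : ((Fintype.piFinset fun _ : Fin (q + 2) => V) ×ˢ Finset.range n).card * R < T.card := by
    simp only [Finset.card_product, Fintype.card_piFinset, Finset.prod_const, Finset.card_univ,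
      Fintype.card_fin, Finset.card_range]
    by_contra hcon
    push Not at hcon
    have hVpos : 0 < V.card ^ (q + 2) := pow_pos (by omega) _
    have h1 : V.card ^ (q + 3) ≤ V.card ^ (q + 2) * (K * n * R) := by
      calc _ ≤ K * T.card := hT2
        _ ≤ K * (V.card ^ (q + 2) * n * R) := Nat.mul_le_mul_left _ hcon
        _ = _ := by ring
    rw [show q + 3 = (q + 2) + 1 by ring, pow_succ] at h1
    have := Nat.le_of_mul_le_mul_left h1 hVpos
    omega
  obtain ⟨y, -, hy⟩ := Finset.exists_lt_card_fiber_of_mul_lt_card_of_maps_to hmaps hcard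
  set F := T.filter (fun t => ((Fin.removeNth (1 : Fin (q + 3)) t, l (t 0) (t 1)) : (Fin (q + 2) → ℕ) × ℕ) = y) with hF
  obtain ⟨t0, ht0⟩ : F.Nonempty := Finset.card_pos.1 (by omega)
  have hF1 : ∀ t ∈ F, t ∈ T ∧ (∀ i, i ≠ 1 → t i = t0 i) ∧ l (t 0) (t 1) = y.2 := by
    intro t ht
    have e1 := Finset.mem_filter.1 ht
    have e2 := Finset.mem_filter.1 ht0
    refine ⟨e1.1, ?_, by rw [← e1.2]⟩
    intro i hi
    obtain ⟨j, rfl⟩ := Fin.exists_succAbove_eq hi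
    have e3 := congrFun (congrArg Prod.fst (e1.2.trans e2.2.symm)) j
    exact e3
  have hinj : Set.InjOn (fun t : Fin (q + 3) → ℕ => t 1) F := by
    intro a ha b hb hab
    funext i
    by_cases hi : i = 1
    · subst hi; exact hab
    · rw [(hF1 a ha).2.1 i hi, (hF1 b hb).2.1 i hi]
  have h01 : (0 : Fin (q + 3)) ≠ 1 := by simp
  refine combine (q + 3) k n R y.2 (by omega) hR V (F.image (fun t => t 1)) col l hl hc ?_ ?_
    (fun i => if h : i < q + 3 then t0 ⟨i, h⟩ else 0) ?_ ?_
  · intro w hw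
    obtain ⟨t, ht, rfl⟩ := Finset.mem_image.1 hw
    exact (hT1 t (hF1 t ht).1).1 1
  · rw [Finset.card_image_of_injOn hinj]
    omega
  · intro i hi
    simp only [hi, dif_pos]
    exact (hT1 t0 (hF1 t0 ht0).1).1 _
  · intro w hw
    obtain ⟨t, ht, rfl⟩ := Finset.mem_image.1 hw
    obtain ⟨g1, g2, g3⟩ := hF1 t ht
    constructor
    · rw [← g3, g2 0 h01]
      simp
    · have := (hT1 t g1).2.2
      convert this using 2 with i
      by_cases hi : i = 1
      · subst hi
        simp
      · by_cases hi2 : i < q + 3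
        · simp only [hi, if_false, hi2, dif_pos]
          exact (g2 ⟨i, hi2⟩ (by simpa [Fin.ext_iff] using hi)).symm
        · simp [hi, hi2]

lemma ram_seq (k m : ℕ) : ∃ N, ∀ (V : Finset ℕ) (col : ℕ → ℕ → ℕ), (∀ x y, col x y ≤ k) →
    N ≤ V.card → ∃ f c : ℕ → ℕ, (∀ i, i < m → f i ∈ V) ∧
      (∀ i j, i < j → j < m → f i < f j ∧ col (f i) (f j) = c i) ∧ ∀ i, c i ≤ k := by
  induction m with
  | zero =>
    refine ⟨0, fun V col _ _ => ⟨fun _ => 0, fun _ => 0, by simp, by simp, by simp⟩⟩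
  | succ m ih =>
    obtain ⟨N, hN⟩ := ih
    refine ⟨1 + (k + 1) * N, ?_⟩
    intro V col hc hV
    have hne : V.Nonempty := Finset.card_pos.1 (by omega)
    set v := V.min' hne with hv
    have hvV : v ∈ V := Finset.min'_mem _ _
    have hlt : ∀ x ∈ V.erase v, v < x := by
      intro x hx
      have h1 := Finset.mem_erase.1 hx
      have h2 := Finset.min'_le V x h1.2
      omega
    have hcard := Finset.card_erase_of_mem hvV
    obtain ⟨d, hd, hd2⟩ := Finset.exists_le_card_fiber_of_mul_le_card_of_maps_to
      (s := V.erase v) (t := Finset.range (k + 1)) (f := fun x => col v x) (n := N)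
      (by intro x _; simp only [Finset.mem_range]; have := hc v x; omega)
      (by simp) (by simp only [Finset.card_range]; omega)
    obtain ⟨f, c, h1, h2, h3⟩ := hN _ col hc hd2
    refine ⟨fun i => if i = 0 then v else f (i - 1), fun i => if i = 0 then d else c (i - 1),
      ?_, ?_, ?_⟩
    · intro i hi
      dsimp only
      split_ifs
      · exact hvV
      · exact Finset.mem_of_mem_erase (Finset.mem_filter.1 (h1 (i - 1) (by omega))).1
    · intro i j hij hj
      dsimp only
      rw [if_neg (show j ≠ 0 by omega)]
      have hj' := Finset.mem_filter.1 (h1 (j - 1) (by omega))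
      split_ifs
      · exact ⟨hlt _ hj'.1, hj'.2⟩
      · exact h2 _ _ (by omega) (by omega)
    · intro i
      dsimp only
      split_ifs
      · have := Finset.mem_range.1 hd
        omega
      · exact h3 _

lemma ram4 (k : ℕ) : ∃ N, 4 ≤ N ∧ ∀ (V : Finset ℕ) (col : ℕ → ℕ → ℕ), (∀ x y, col x y ≤ k) →
    N ≤ V.card → ∃ t : Fin 4 → ℕ, Function.Injective t ∧ (∀ i, t i ∈ V) ∧
      ∃ c, ∀ i j, i < j → t i < t j ∧ col (t i) (t j) = c := by
  obtain ⟨N, hN⟩ := ram_seq k ((k + 1) * 3 + 1)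
  refine ⟨N + 4, by omega, ?_⟩
  intro V col hc hV
  obtain ⟨f, c, h1, h2, h3⟩ := hN V col hc (by omega)
  obtain ⟨d, hd, hd2⟩ := Finset.exists_lt_card_fiber_of_mul_lt_card_of_maps_to
      (s := Finset.range ((k + 1) * 3 + 1)) (t := Finset.range (k + 1)) (f := c) (n := 3)
      (by intro x _; simp only [Finset.mem_range]; have := h3 x; omega)
      (by simp only [Finset.card_range]; omega)
  obtain ⟨S, hS, hS4⟩ := Finset.exists_subset_card_eq (show 4 ≤ _ from hd2)
  have hmem : ∀ i, S.orderEmbOfFin hS4 i < (k + 1) * 3 + 1 ∧ c (S.orderEmbOfFin hS4 i) = d := by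
    intro i
    have := Finset.mem_filter.1 (hS (Finset.orderEmbOfFin_mem S hS4 i))
    exact ⟨Finset.mem_range.1 this.1, this.2⟩
  have hmain : ∀ i j, i < j → f (S.orderEmbOfFin hS4 i) < f (S.orderEmbOfFin hS4 j) ∧
      col (f (S.orderEmbOfFin hS4 i)) (f (S.orderEmbOfFin hS4 j)) = d := by
    intro i j hij
    have := h2 _ _ ((S.orderEmbOfFin hS4).strictMono hij) (hmem j).1
    rwa [(hmem i).2] at this
  refine ⟨fun i => f (S.orderEmbOfFin hS4 i), ?_, fun i => h1 _ (hmem i).1, d, hmain⟩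
  have : StrictMono (fun i => f (S.orderEmbOfFin hS4 i)) := fun i j hij => (hmain i j hij).1
  exact this.injective

def Split (B : ℕ) (col : ℕ → ℕ → ℕ) : Prop :=
  ∀ V : Finset ℕ, B ≤ V.card → ∃ u ∈ V, ∃ v ∈ V, u < v ∧
    V.card ≤ B * (V.filter (fun x => x < u ∧ col x u = col u v ∧ col x v = col u v)).card ∧
    V.card ≤ B * (V.filter (fun z => v < z ∧ col u z = col u v ∧ col v z = col u v)).card

lemma split_lemma (k : ℕ) : ∃ B, 1 ≤ B ∧ ∀ col : ℕ → ℕ → ℕ, (∀ x y, col x y ≤ k) → Split B col := by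
  classical
  obtain ⟨M, hM4, hM⟩ := ram4 k
  set K := 2 ^ 4 * Nat.factorial 4 * M ^ 4 with hK
  refine ⟨K + M + 8, by omega, ?_⟩
  intro col hc V hV
  obtain ⟨T, hT1, hT2⟩ := supersat 4 M V
    (fun t => ∃ c, ∀ i j, i < j → t i < t j ∧ col (t i) (t j) = c) hM4 (by omega) (by omega)
    (fun A _ hAM => hM A col hc hAM.ge)
  rw [← hK] at hT2
  have hVpos : 0 < V.card := by omega
  have hTpos : 0 < T.card := by
    rcases Nat.eq_zero_or_pos T.card with h | h
    · rw [h] at hT2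
      have : 0 < V.card ^ 4 := pow_pos hVpos 4
      omega
    · exact h
  set r := (T.card - 1) / (V.card * V.card) with hr
  have hVV : 0 < V.card * V.card := Nat.mul_pos hVpos hVpos
  obtain ⟨⟨u, v⟩, huv, hy⟩ := Finset.exists_lt_card_fiber_of_mul_lt_card_of_maps_to
    (s := T) (t := V ×ˢ V) (f := fun t => (t 1, t 2)) (n := r)
    (by
      intro t ht
      simp only [Finset.mem_product]
      exact ⟨(hT1 t ht).1 _, (hT1 t ht).1 _⟩)
    (by
      rw [Finset.card_product]
      have := Nat.mul_div_le (T.card - 1) (V.card * V.card)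
      rw [← hr] at this
      omega)
  have hr2 : T.card ≤ (V.card * V.card) * (r + 1) := by
    have := Nat.lt_mul_div_succ (T.card - 1) hVV
    rw [← hr] at this
    omega
  set F := T.filter (fun t => (t 1, t 2) = (u, v)) with hF
  have hFK : V.card * V.card ≤ K * F.card := by
    have : (V.card * V.card) * (V.card * V.card) ≤ (V.card * V.card) * (K * F.card) := by
      calc (V.card * V.card) * (V.card * V.card) = V.card ^ 4 := by ring
        _ ≤ K * T.card := hT2
        _ ≤ K * ((V.card * V.card) * (r + 1)) := Nat.mul_le_mul_left _ hr2
        _ ≤ K * ((V.card * V.card) * F.card) := by gcongr; exact hy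
        _ = _ := by ring
    exact Nat.le_of_mul_le_mul_left this hVV
  have hFp : ∀ t ∈ F, t 1 = u ∧ t 2 = v ∧ (∀ i, t i ∈ V) ∧
      ∀ i j, i < j → t i < t j ∧ col (t i) (t j) = col u v := by
    intro t ht
    obtain ⟨g1, g2⟩ := Finset.mem_filter.1 ht
    obtain ⟨g3, g4, c, g5⟩ := hT1 t g1
    have e1 : t 1 = u := congrArg Prod.fst g2
    have e2 : t 2 = v := congrArg Prod.snd g2
    have e3 := (g5 1 2 (by decide)).2
    rw [e1, e2] at e3
    exact ⟨e1, e2, g3, by rw [e3]; exact g5⟩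
  obtain ⟨t0, ht0⟩ : F.Nonempty := Finset.card_pos.1 (lt_of_le_of_lt (Nat.zero_le _) hy)
  obtain ⟨b1, b2, b3, b4⟩ := hFp t0 ht0
  refine ⟨u, b1 ▸ b3 1, v, b2 ▸ b3 2, ?_, ?_⟩
  · have := (b4 1 2 (by decide)).1
    rwa [b1, b2] at this
  set Lf := V.filter (fun x => x < u ∧ col x u = col u v ∧ col x v = col u v) with hLf
  set Rt := V.filter (fun z => v < z ∧ col u z = col u v ∧ col v z = col u v) with hRt
  have hFLR : F.card ≤ Lf.card * Rt.card := by
    rw [← Finset.card_product]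
    apply Finset.card_le_card_of_injOn (fun t => (t 0, t 3))
    · intro t ht
      obtain ⟨c1, c2, c3, c4⟩ := hFp t ht
      have d01 := c4 0 1 (by decide)
      have d02 := c4 0 2 (by decide)
      have d13 := c4 1 3 (by decide)
      have d23 := c4 2 3 (by decide)
      rw [c1] at d01 d13
      rw [c2] at d02 d23
      simp only [Finset.coe_product, Set.mem_prod, Finset.mem_coe, hLf, hRt, Finset.mem_filter]
      exact ⟨⟨c3 0, d01.1, d01.2, d02.2⟩, ⟨c3 3, d23.1, d13.2, d23.2⟩⟩
    · intro a ha b hb hab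
      obtain ⟨c1, c2, -, -⟩ := hFp a ha
      obtain ⟨c1', c2', -, -⟩ := hFp b hb
      have e0 : a 0 = b 0 := congrArg Prod.fst hab
      have e3 : a 3 = b 3 := congrArg Prod.snd hab
      funext i
      fin_cases i
      · exact e0
      · exact c1.trans c1'.symm
      · exact c2.trans c2'.symm
      · exact e3
  have hL : Lf.card ≤ V.card := Finset.card_filter_le _ _
  have hR : Rt.card ≤ V.card := Finset.card_filter_le _ _
  have k1 : V.card ≤ K * Lf.card := by
    have : V.card * V.card ≤ V.card * (K * Lf.card) := by
      calc _ ≤ K * F.card := hFK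
        _ ≤ K * (Lf.card * V.card) := by gcongr; exact hFLR.trans (Nat.mul_le_mul_left _ hR)
        _ = _ := by ring
    exact Nat.le_of_mul_le_mul_left this hVpos
  have k2 : V.card ≤ K * Rt.card := by
    have : V.card * V.card ≤ V.card * (K * Rt.card) := by
      calc _ ≤ K * F.card := hFK
        _ ≤ K * (V.card * Rt.card) := by gcongr; exact hFLR.trans (Nat.mul_le_mul_right _ hL)
        _ = _ := by ring
    exact Nat.le_of_mul_le_mul_left this hVpos
  exact ⟨k1.trans (Nat.mul_le_mul_right _ (by omega)), k2.trans (Nat.mul_le_mul_right _ (by omega))⟩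

def HasP2 (col : ℕ → ℕ → ℕ) (c L : ℕ) (V : Finset ℕ) : Prop :=
  ∃ f : ℕ → ℕ, (∀ i, i < L → f i ∈ V) ∧
    ∀ i j, i < j → j ≤ i + 2 → j < L → f i < f j ∧ col (f i) (f j) = c

lemma HasP2.mono {col : ℕ → ℕ → ℕ} {c L : ℕ} {V W : Finset ℕ} (h : HasP2 col c L W) (hWV : W ⊆ V) :
    HasP2 col c L V := by
  obtain ⟨f, h1, h2⟩ := h
  exact ⟨f, fun i hi => hWV (h1 i hi), h2⟩

lemma HasP2.concat {col : ℕ → ℕ → ℕ} {a b u v : ℕ} {V : Finset ℕ} (hu : u ∈ V) (hv : v ∈ V)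
    (huv : u < v)
    (h1 : HasP2 col (col u v) a
      (V.filter (fun x => x < u ∧ col x u = col u v ∧ col x v = col u v)))
    (h2 : HasP2 col (col u v) b
      (V.filter (fun z => v < z ∧ col u z = col u v ∧ col v z = col u v))) :
    HasP2 col (col u v) (a + b + 2) V := by
  obtain ⟨f, f1, f2⟩ := h1
  obtain ⟨g, g1, g2⟩ := h2
  simp only [Finset.mem_filter] at f1 g1
  refine ⟨fun i => if i < a then f i else if i = a then u else if i = a + 1 then v else g (i - a - 2),
    ?_, ?_⟩
  · intro i hi
    dsimp only
    split_ifs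
    · exact (f1 i (by omega)).1
    · exact hu
    · exact hv
    · exact (g1 _ (by omega)).1
  · intro i j hij hj2 hj
    dsimp only
    split_ifs <;> try omega
    · exact f2 _ _ hij hj2 (by omega)
    · have := f1 i (by omega)
      exact ⟨this.2.1, this.2.2.1⟩
    · have := f1 i (by omega)
      exact ⟨this.2.1.trans huv, this.2.2.2⟩
    · have := g1 (j - a - 2) (by omega)
      exact ⟨huv.trans this.2.1, this.2.2.1⟩
    · have := g1 (j - a - 2) (by omega)
      exact ⟨this.2.1, this.2.2.2⟩
    · exact g2 _ _ (by omega) (by omega) (by omega)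

lemma tree (k B : ℕ) (hB : 1 ≤ B) (col : ℕ → ℕ → ℕ) (hc : ∀ x y, col x y ≤ k) (hS : Split B col)
    (m : ℕ) : ∀ (d : ℕ → ℕ), ∑ c ∈ Finset.range (k + 1), d c = m → ∀ V : Finset ℕ,
      B ^ m ≤ V.card → ∃ c, c ≤ k ∧ HasP2 col c (2 * 2 ^ d c - 2) V := by
  induction m with
  | zero =>
    intro d hd V hV
    have := (Finset.sum_eq_zero_iff.1 hd) 0 (by simp)
    exact ⟨0, by omega, fun _ => 0, by simp [this], by simp [this]⟩
  | succ m ih =>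
    intro d hd V hV
    by_cases hz : ∃ c, c ≤ k ∧ d c = 0
    · obtain ⟨c, h1, h2⟩ := hz
      exact ⟨c, h1, fun _ => 0, by simp [h2], by simp [h2]⟩
    push Not at hz
    have hBV : B ≤ V.card := by
      refine le_trans ?_ hV
      exact Nat.le_self_pow (by omega) B
    obtain ⟨u, hu, v, hv, huv, hL, hR⟩ := hS V hBV
    have hcuv := hc u v
    have hdc := hz _ hcuv
    set c := col u v with hcdef
    have hsum : ∑ i ∈ Finset.range (k + 1), Function.update d c (d c - 1) i = m := by
      rw [Finset.sum_update_of_mem (by simp; omega)]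
      have : c ∈ Finset.range (k + 1) := by simp; omega
      have e := Finset.add_sum_erase _ d this
      rw [Finset.sdiff_singleton_eq_erase]
      omega
    have conv : ∀ X : ℕ, V.card ≤ B * X → B ^ m ≤ X := by
      intro X hX
      rw [pow_succ'] at hV
      exact Nat.le_of_mul_le_mul_left (hV.trans hX) hB
    obtain ⟨c1, hc1, p1⟩ := ih _ hsum _ (conv _ hL)
    obtain ⟨c2, hc2, p2⟩ := ih _ hsum _ (conv _ hR)
    by_cases e1 : c1 = c
    · by_cases e2 : c2 = c
      · subst e1
        rw [e2] at p2
        rw [Function.update_self] at p1 p2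
        refine ⟨_, hc1, ?_⟩
        have := HasP2.concat hu hv huv p1 p2
        convert this using 1
        obtain ⟨e, he⟩ := Nat.exists_eq_succ_of_ne_zero hdc
        rw [he]
        have : 0 < 2 ^ e := by positivity
        simp only [Nat.succ_eq_add_one, Nat.add_sub_cancel, pow_succ]
        omega
      · rw [Function.update_of_ne e2] at p2
        exact ⟨c2, hc2, p2.mono (Finset.filter_subset _ _)⟩
    · rw [Function.update_of_ne e1] at p1
      exact ⟨c1, hc1, p1.mono (Finset.filter_subset _ _)⟩

lemma HasP2.ch {col l : ℕ → ℕ → ℕ} {c L n : ℕ} {V : Finset ℕ} (h : HasP2 col c L V)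
    (hl : ∀ x y, l x y < n) (hL : n + 2 ≤ L) : Ch col l c 3 V := by
  obtain ⟨f, h1, h2⟩ := h
  by_contra hno
  have hinc : ∀ i, i + 2 < L → l (f i) (f (i + 1)) < l (f (i + 1)) (f (i + 2)) := by
    intro i hi
    by_contra hcon
    apply hno
    refine ⟨fun j => f (i + j), fun j hj => h1 _ (by omega), ?_, ?_⟩
    · intro a b hab hb
      exact h2 _ _ (by omega) (by omega) (by omega)
    · intro a b e hab hbe he
      obtain rfl : a = 0 := by omega
      obtain rfl : b = 1 := by omega
      obtain rfl : e = 2 := by omega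
      simpa using hcon
  have hge : ∀ i, i + 1 < L → i ≤ l (f i) (f (i + 1)) := by
    intro i
    induction i with
    | zero => intro _; omega
    | succ i ih =>
      intro hi
      have a1 := ih (by omega)
      have a2 := hinc i (by omega)
      have a3 : i + 1 + 1 = i + 2 := by omega
      rw [a3]
      omega
  have a1 := hge n (by omega)
  have a2 := hl (f n) (f (n + 1))
  omega

def PB (g : ℕ → ℕ) : Prop := ∃ C, ∀ n, 1 ≤ n → g n ≤ C * n ^ C

lemma base (k : ℕ) : ∃ g, PB g ∧ ∀ n, 1 ≤ n → Spec 3 k n (g n) := by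
  obtain ⟨B, hB, hsp⟩ := split_lemma k
  refine ⟨fun n => B ^ ((k + 1) * (Nat.log 2 n + 2)), ?_, ?_⟩
  · refine ⟨4 ^ (B * (k + 1)), ?_⟩
    intro n hn
    have hlog : 2 ^ Nat.log 2 n ≤ n := Nat.pow_log_le_self 2 (by omega)
    calc B ^ ((k + 1) * (Nat.log 2 n + 2)) ≤ (2 ^ B) ^ ((k + 1) * (Nat.log 2 n + 2)) :=
          Nat.pow_le_pow_left Nat.lt_two_pow_self.le _
      _ = 4 ^ (B * (k + 1)) * (2 ^ Nat.log 2 n) ^ (B * (k + 1)) := by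
          rw [show (4 : ℕ) = 2 ^ 2 by norm_num, ← pow_mul, ← pow_mul, ← pow_mul, ← pow_add]
          congr 1
          ring
      _ ≤ 4 ^ (B * (k + 1)) * n ^ (B * (k + 1)) := by gcongr
      _ ≤ 4 ^ (B * (k + 1)) * n ^ (4 ^ (B * (k + 1))) := by
          exact Nat.mul_le_mul_left _ (Nat.pow_le_pow_right hn (Nat.lt_pow_self (by norm_num)).le)
  · intro n hn V col l hl hc hV
    obtain ⟨c, hck, hP⟩ := tree k B hB col hc (hsp col hc) ((k + 1) * (Nat.log 2 n + 2))
      (fun _ => Nat.log 2 n + 2) (by simp) V hV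
    have hlen : n + 2 ≤ 2 * 2 ^ (Nat.log 2 n + 2) - 2 := by
      have := Nat.lt_pow_succ_log_self (b := 2) (by norm_num) n
      rw [pow_succ] at this ⊢
      rw [pow_succ]
      omega
    have hch : Ch col l c 3 V := hP.ch hl hlen
    rcases Nat.eq_zero_or_pos c with h0 | h0
    · subst h0; exact Or.inl hch
    · exact Or.inr ⟨c, h0, hck, hch⟩

lemma PB.const (a : ℕ) : PB (fun _ => a) :=
  ⟨a, fun n hn => Nat.le_mul_of_pos_right _ (pow_pos hn _)⟩

lemma PB.id : PB (fun n => n) := ⟨1, fun _ _ => by simp⟩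

lemma PB.mul {f g : ℕ → ℕ} (hf : PB f) (hg : PB g) : PB (fun n => f n * g n) := by
  obtain ⟨C, hC⟩ := hf
  obtain ⟨D, hD⟩ := hg
  refine ⟨C * D + C + D, fun n hn => ?_⟩
  calc f n * g n ≤ (C * n ^ C) * (D * n ^ D) := Nat.mul_le_mul (hC n hn) (hD n hn)
    _ = (C * D) * n ^ (C + D) := by ring
    _ ≤ _ := Nat.mul_le_mul (by omega) (Nat.pow_le_pow_right hn (by omega))

lemma PB.add {f g : ℕ → ℕ} (hf : PB f) (hg : PB g) : PB (fun n => f n + g n) := by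
  obtain ⟨C, hC⟩ := hf
  obtain ⟨D, hD⟩ := hg
  refine ⟨C + D, fun n hn => ?_⟩
  calc f n + g n ≤ C * n ^ C + D * n ^ D := Nat.add_le_add (hC n hn) (hD n hn)
    _ ≤ C * n ^ (C + D) + D * n ^ (C + D) := by
        exact Nat.add_le_add
          (Nat.mul_le_mul_left _ (Nat.pow_le_pow_right hn (by omega)))
          (Nat.mul_le_mul_left _ (Nat.pow_le_pow_right hn (by omega)))
    _ = _ := by ring

lemma PB.pow {f : ℕ → ℕ} (hf : PB f) (e : ℕ) : PB (fun n => f n ^ e) := by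
  induction e with
  | zero => simpa using PB.const 1
  | succ e ih => simpa [pow_succ] using ih.mul hf

lemma main_spec (q : ℕ) : ∀ k, ∃ g, PB g ∧ ∀ n, 1 ≤ n → Spec (q + 3) k n (g n) := by
  induction q with
  | zero => exact base
  | succ q ih =>
    intro k
    obtain ⟨g, hg1, hg2⟩ := ih k
    obtain ⟨r, hr1, hr2⟩ := ih (k + 1)
    refine ⟨fun n => 2 ^ (q + 3) * (q + 3).factorial * (g n + (q + 3)) ^ (q + 3) * n * r n +
      2 * (g n + (q + 3)) + 1, ?_, ?_⟩
    · have hM : PB (fun n => g n + (q + 3)) := hg1.add (PB.const _)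
      exact (((((PB.const (2 ^ (q + 3) * (q + 3).factorial)).mul (hM.pow (q + 3))).mul PB.id).mul
        hr1).add ((PB.const 2).mul hM)).add (PB.const 1)
    · intro n hn
      have := step_core q k n (g n + (q + 3)) (r n) (by omega) ((hg2 n hn).mono (by omega)) (hr2 n hn)
      rw [show q + 1 + 3 = q + 3 + 1 by ring]
      exact this

def PathEnd (N : ℕ) (χ : Fin N → Fin N → Fin N → Bool) (L x y : ℕ) : Prop :=
  ∃ f : ℕ → ℕ, (∀ i, i < L + 1 → f i < f (i + 1)) ∧ (∀ i, i < L + 2 → f i < N) ∧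
    (∀ i, i < L → ∃ (h1 : f i < N) (h2 : f (i + 1) < N) (h3 : f (i + 2) < N),
      χ ⟨f i, h1⟩ ⟨f (i + 1), h2⟩ ⟨f (i + 2), h3⟩ = false) ∧ f L = x ∧ f (L + 1) = y

lemma PathEnd.blue {N : ℕ} {χ : Fin N → Fin N → Fin N → Bool} {L x y n : ℕ}
    (h : PathEnd N χ L x y) (hn : n ≤ L + 2) : ContainsBlueTightPath N n χ := by
  obtain ⟨f, h1, h2, h3, -, -⟩ := h
  have hmono : ∀ d i, i + d < L + 2 → 0 < d → f i < f (i + d) := by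
    intro d
    induction d with
    | zero => intro i _ h; omega
    | succ d ih =>
      intro i hi _
      have a := h1 (i + d) (by omega)
      rcases Nat.eq_zero_or_pos d with h0 | h0
      · subst h0
        exact a
      · exact (ih i (by omega) h0).trans a
  refine ⟨fun i => ⟨f i, h2 i (by omega)⟩, ?_, ?_⟩
  · intro i j hij
    have hij' : (i : ℕ) < j := hij
    have := hmono (j - i) i (by omega) (by omega)
    rw [show (i : ℕ) + (j - i) = j by omega] at this
    exact this
  · intro i hi
    obtain ⟨_, _, _, h⟩ := h3 i (by omega)
    exact h

/-- for every `s ≥ 3` there is `C = C(s)` such that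
`R_<(K_s^(3), P_n^(3)) ≤ C · n^C` for all `n ≥ 3`. -/
theorem stmt3 (s : ℕ) (hs : 3 ≤ s) :
    ∃ C : ℕ, ∀ n : ℕ, 3 ≤ n → ordRamsey3 s n ≤ C * n ^ C := by
  classical
  obtain ⟨q, rfl⟩ : ∃ q, s = q + 3 := ⟨s - 3, by omega⟩
  obtain ⟨g, ⟨C, hC⟩, hg⟩ := main_spec q 0
  refine ⟨C, fun n hn => Nat.sInf_le ?_⟩
  have hC' := hC n (by omega)
  generalize C * n ^ C = N at hC'
  intro χ
  by_cases hblue : ContainsBlueTightPath N n χ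
  · exact Or.inr hblue
  left
  set l : ℕ → ℕ → ℕ := fun x y => Nat.findGreatest (fun L => PathEnd N χ L x y) (n - 1) with hl
  have hln : ∀ x y, l x y < n := by
    intro x y
    have : l x y ≤ n - 1 := Nat.findGreatest_le _
    omega
  have hend : ∀ x y, x < y → y < N → PathEnd N χ (l x y) x y := by
    intro x y hxy hy
    refine Nat.findGreatest_spec (P := fun L => PathEnd N χ L x y) (Nat.zero_le (n - 1)) ?_
    refine ⟨fun i => if i = 0 then x else y, ?_, ?_, ?_, by simp, by simp⟩
    · intro i hi
      obtain rfl : i = 0 := by omega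
      simpa using hxy
    · intro i hi
      dsimp only
      split_ifs <;> omega
    · intro i hi
      omega
  have hstep : ∀ x y z (hx : x < N) (hy : y < N) (hz : z < N), x < y → y < z →
      χ ⟨x, hx⟩ ⟨y, hy⟩ ⟨z, hz⟩ = false → l x y < l y z := by
    intro x y z hx hy hz hxy hyz hb
    have hE := hend x y hxy hy
    have hlt : l x y + 2 < n := by
      by_contra hcon
      exact hblue (hE.blue (by omega))
    have hnew : PathEnd N χ (l x y + 1) y z := by
      obtain ⟨f, h1, h2, h3, h4, h5⟩ := hE
      generalize l x y = L at *
      have hf : ∀ i, i < L + 2 → (if i = L + 2 then z else f i) = f i := by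
        intro i hi
        rw [if_neg (by omega)]
      refine ⟨fun i => if i = L + 2 then z else f i, ?_, ?_, ?_, ?_, ?_⟩
      · intro i hi
        dsimp only
        split_ifs
        · omega
        · omega
        · obtain rfl : i = L + 1 := by omega
          rw [h5]
          exact hyz
        · exact h1 i (by omega)
      · intro i hi
        dsimp only
        split_ifs
        · exact hz
        · exact h2 i (by omega)
      · intro i hi
        dsimp only
        by_cases hiL : i = L
        · subst hiL
          simp only [show i ≠ i + 2 by omega, show i + 1 ≠ i + 2 by omega, if_false, if_true, h4, h5]
          exact ⟨hx, hy, hz, hb⟩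
        · simp only [hf i (by omega), hf (i + 1) (by omega), hf (i + 2) (by omega)]
          exact h3 i (by omega)
      · simp [h5]
      · simp
    have : l x y + 1 ≤ l y z := Nat.le_findGreatest (by omega) hnew
    omega
  have hspec := hg n (by omega) (Finset.range N) (fun _ _ => 0) l hln (by simp)
    (by rw [Finset.card_range]; exact hC')
  rcases hspec with ⟨f, h1, h2, h3⟩ | ⟨c, hc1, hc2, -⟩
  · simp only [Finset.mem_range] at h1
    refine ⟨fun i => ⟨f i, h1 i i.2⟩, ?_, ?_⟩
    · intro i j hij
      exact (h2 i j hij j.2).1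
    · intro i j k hij hjk
      by_contra hcon
      have a := hstep _ _ _ (h1 i i.2) (h1 j j.2) (h1 k k.2) (h2 i j hij j.2).1 (h2 j k hjk k.2).1
        (by simpa using hcon)
      have b := h3 i j k hij hjk k.2
      omega
  · omega
end

section
/- For every integer s ≥ 2, there is a constant C = C(s) such that for every n ≥ 1 and every coloring χ of the pairs of {1,…,N} with colors from {1,…,n}, where N ≥ C·n^C, there exists a lexicographic set of size s whose associated colors satisfy c_1 ≥ c_2 ≥ … ≥ c_{s−1} (a non-increasing lexicographic set). -/
open Classical in
/-- `S` contains a forward chain of length `k`, non-increasing, with colors at most `c`. -/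
def Fwd {N n : ℕ} (χ : Fin N → Fin N → Fin n) : ℕ → Fin n → Finset (Fin N) → Prop
  | 0, _, _ => True
  | k + 1, c, S => ∃ v ∈ S, ∃ c', c' ≤ c ∧
      Fwd χ k c' (S.filter fun w => v < w ∧ χ v w = c')

open Classical in
/-- `S` contains a backward chain of length `k`, non-increasing, with colors at least `c`. -/
def Bwd {N n : ℕ} (χ : Fin N → Fin N → Fin n) : ℕ → Fin n → Finset (Fin N) → Prop
  | 0, _, _ => True
  | k + 1, c, S => ∃ v ∈ S, ∃ c', c ≤ c' ∧
      Bwd χ k c' (S.filter fun w => w < v ∧ χ w v = c')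

lemma Fwd.mono {N n : ℕ} {χ : Fin N → Fin N → Fin n} (k : ℕ) : ∀ {c d : Fin n}
    {S T : Finset (Fin N)}, c ≤ d → S ⊆ T → Fwd χ k c S → Fwd χ k d T := by
  induction k with
  | zero => intros; trivial
  | succ k ih =>
    rintro c d S T hcd hST ⟨v, hv, c', hc', h⟩
    exact ⟨v, hST hv, c', hc'.trans hcd, ih le_rfl (Finset.filter_subset_filter _ hST) h⟩

lemma Bwd.mono {N n : ℕ} {χ : Fin N → Fin N → Fin n} (k : ℕ) : ∀ {c d : Fin n}
    {S T : Finset (Fin N)}, d ≤ c → S ⊆ T → Bwd χ k c S → Bwd χ k d T := by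
  induction k with
  | zero => intros; trivial
  | succ k ih =>
    rintro c d S T hcd hST ⟨v, hv, c', hc', h⟩
    exact ⟨v, hST hv, c', hcd.trans hc', ih le_rfl (Finset.filter_subset_filter _ hST) h⟩

lemma Fwd.extract {N n : ℕ} {χ : Fin N → Fin N → Fin n} (hN : Nonempty (Fin N)) (k : ℕ) :
    ∀ {c : Fin n} {S : Finset (Fin N)}, Fwd χ k c S →
    ∃ f : ℕ → Fin N, ∃ d : ℕ → Fin n, (∀ i < k, f i ∈ S) ∧ (∀ i, d i ≤ c) ∧
      (∀ i j, i < j → j < k → f i < f j ∧ χ (f i) (f j) = d i) ∧ (∀ i j, i ≤ j → d j ≤ d i) := by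
  induction k with
  | zero =>
    intro c S _
    exact ⟨fun _ => hN.some, fun _ => c, by simp, by simp, by simp, by simp⟩
  | succ k ih =>
    rintro c S ⟨v, hv, c', hc', h⟩
    obtain ⟨f, d, hf, hd, hfd, had⟩ := ih h
    refine ⟨fun i => if i = 0 then v else f (i - 1), fun i => if i = 0 then c' else d (i - 1),
      ?_, ?_, ?_, ?_⟩
    · intro i hi
      by_cases h0 : i = 0
      · simpa [h0] using hv
      · simp only [h0, if_false]
        exact (Finset.mem_filter.1 (hf (i - 1) (by omega))).1
    · intro i
      by_cases h0 : i = 0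
      · simpa [h0] using hc'
      · simp only [h0, if_false]
        exact (hd _).trans hc'
    · intro i j hij hj
      have hj0 : j ≠ 0 := by omega
      by_cases h0 : i = 0
      · simp only [h0, hj0, if_false, if_true]
        exact (Finset.mem_filter.1 (hf (j - 1) (by omega))).2
      · simp only [h0, hj0, if_false]
        exact hfd _ _ (by omega) (by omega)
    · intro i j hij
      by_cases hj0 : j = 0
      · have : i = 0 := by omega
        simp [hj0, this]
      · by_cases h0 : i = 0
        · simp only [h0, hj0, if_false, if_true]
          exact hd _
        · simp only [h0, hj0, if_false]
          exact had _ _ (by omega)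

lemma Bwd.extract {N n : ℕ} {χ : Fin N → Fin N → Fin n} (hN : Nonempty (Fin N)) (k : ℕ) :
    ∀ {c : Fin n} {S : Finset (Fin N)}, Bwd χ k c S →
    ∃ f : ℕ → Fin N, ∃ d : ℕ → Fin n, (∀ i < k, f i ∈ S) ∧ (∀ i, c ≤ d i) ∧
      (∀ i j, i < j → j < k → f i < f j ∧ χ (f i) (f j) = d j) ∧ (∀ i j, i ≤ j → d j ≤ d i) := by
  induction k with
  | zero =>
    intro c S _
    exact ⟨fun _ => hN.some, fun _ => c, by simp, by simp, by simp, by simp⟩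
  | succ k ih =>
    rintro c S ⟨v, hv, c', hc', h⟩
    obtain ⟨f, d, hf, hd, hfd, had⟩ := ih h
    refine ⟨fun i => if i < k then f i else v, fun i => if i < k then d i else c',
      ?_, ?_, ?_, ?_⟩
    · intro i hi
      by_cases h0 : i < k
      · simp only [h0, if_true]
        exact (Finset.mem_filter.1 (hf i h0)).1
      · simpa [h0] using hv
    · intro i
      by_cases h0 : i < k
      · simp only [h0, if_true]
        exact hc'.trans (hd _)
      · simpa [h0] using hc'
    · intro i j hij hj
      have hi0 : i < k := by omega
      by_cases h0 : j < k
      · simp only [h0, hi0, if_true]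
        exact hfd _ _ (by omega) (by omega)
      · simp only [h0, hi0, if_false, if_true]
        exact (Finset.mem_filter.1 (hf i (by omega))).2
    · intro i j hij
      by_cases hj0 : j < k
      · have : i < k := by omega
        simp only [hj0, this, if_true]
        exact had _ _ hij
      · by_cases h0 : i < k
        · simp only [h0, hj0, if_false, if_true]
          exact hd _
        · simp [h0, hj0]

/-- Packing: greedily remove sets of size `L` with property `p`. -/
lemma packing {V : Type*} [DecidableEq V] (p : Finset V → Prop) (L : ℕ) (hL : 0 < L) (m : ℕ) :
    ∀ S : Finset V, S.card ≤ m → ∃ F : Finset (Finset V),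
      (∀ Q ∈ F, Q ⊆ S ∧ Q.card = L ∧ p Q) ∧ F.card * L ≤ S.card ∧
      ∀ T ⊆ S \ F.biUnion id, T.card = L → ¬ p T := by
  induction m with
  | zero =>
    intro S hS
    refine ⟨∅, by simp, by simp, ?_⟩
    intro T hT hc
    have := Finset.card_le_card (hT.trans Finset.sdiff_subset)
    omega
  | succ m ih =>
    intro S hS
    by_cases h : ∃ T ⊆ S, T.card = L ∧ p T
    · obtain ⟨Q, hQS, hQL, hQp⟩ := h
      have hcard : (S \ Q).card + L = S.card := by
        rw [← hQL]; exact Finset.card_sdiff_add_card_eq_card hQS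
      obtain ⟨F, h1, h2, h3⟩ := ih (S \ Q) (by omega)
      refine ⟨insert Q F, ?_, ?_, ?_⟩
      · intro P hP
        rcases Finset.mem_insert.1 hP with rfl | hP
        · exact ⟨hQS, hQL, hQp⟩
        · exact ⟨(h1 P hP).1.trans Finset.sdiff_subset, (h1 P hP).2⟩
      · have := Finset.card_insert_le Q F
        nlinarith
      · intro T hT
        apply h3
        intro x hx
        have := hT hx
        simp only [Finset.mem_sdiff, Finset.mem_biUnion, Finset.mem_insert, id] at this ⊢
        grind
    · push Not at h
      refine ⟨∅, by simp, by simp, ?_⟩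
      intro T hT hc hp
      exact h T (hT.trans Finset.sdiff_subset) hc hp

open Classical in
lemma greedy_ind {V : Type*} (E : V → V → Prop) (hsym : ∀ x y, E x y → E y x) (d k : ℕ) :
    ∀ W : Finset V, (∀ x ∈ W, (W.filter (E x)).card ≤ d) → k * (d + 1) ≤ W.card →
    ∃ I ⊆ W, I.card = k ∧ ∀ x ∈ I, ∀ y ∈ I, x ≠ y → ¬ E x y := by
  induction k with
  | zero => intro W _ _; exact ⟨∅, by simp, by simp, by simp⟩
  | succ k ih =>
    intro W hd hW
    have hne : W.Nonempty := by
      rw [← Finset.card_pos]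
      have : (k + 1) * (d + 1) ≥ 1 := Nat.succ_le_of_lt (by positivity)
      omega
    obtain ⟨v, hv⟩ := hne
    set R := insert v (W.filter (E v)) with hR
    have hRc : R.card ≤ d + 1 := (Finset.card_insert_le _ _).trans (by have := hd v hv; omega)
    have hWR : W.card ≤ (W \ R).card + R.card := Finset.card_le_card_sdiff_add_card
    obtain ⟨I, hI, hc, hE⟩ := ih (W \ R)
      (fun x hx => (Finset.card_le_card (Finset.filter_subset_filter _ Finset.sdiff_subset)).trans
        (hd x (Finset.sdiff_subset hx))) (by nlinarith)
    have hvI : v ∉ I := fun h => by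
      have := hI h
      simp [hR] at this
    have hvE : ∀ x ∈ I, ¬ E v x := fun x hx h => by
      have := hI hx
      simp only [hR, Finset.mem_sdiff, Finset.mem_insert, Finset.mem_filter] at this
      tauto
    refine ⟨insert v I, ?_, by rw [Finset.card_insert_of_notMem hvI, hc], ?_⟩
    · intro x hx
      rcases Finset.mem_insert.1 hx with rfl | hx
      · exact hv
      · exact Finset.sdiff_subset (hI hx)
    · intro x hx y hy hxy
      rcases Finset.mem_insert.1 hx with hx1 | hx1 <;>
        rcases Finset.mem_insert.1 hy with hy1 | hy1
      · exact absurd (hx1.trans hy1.symm) hxy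
      · rw [hx1]; exact hvE _ hy1
      · rw [hy1]; exact fun h => hvE _ hx1 (hsym _ _ h)
      · exact hE _ hx1 _ hy1 hxy

open Classical in
lemma turan_ind {V : Type*} (E : V → V → Prop) (hsym : ∀ x y, E x y → E y x) (k : ℕ) (hk : 0 < k)
    (W : Finset V) (h1 : 16 * k * ((W ×ˢ W).filter fun p => E p.1 p.2).card ≤ W.card ^ 2)
    (h2 : 4 * k ≤ W.card) :
    ∃ I ⊆ W, I.card = k ∧ ∀ x ∈ I, ∀ y ∈ I, x ≠ y → ¬ E x y := by
  set d := W.card / (8 * k) with hd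
  set W' := W.filter fun x => (W.filter (E x)).card ≤ d with hW'
  have he : ((W ×ˢ W).filter fun p => E p.1 p.2).card = ∑ x ∈ W, (W.filter (E x)).card := by
    rw [Finset.card_filter, Finset.sum_product]
    simp only [Finset.card_filter]
  have hbad : (W.filter fun x => ¬ (W.filter (E x)).card ≤ d).card * (d + 1) ≤
      ∑ x ∈ W, (W.filter (E x)).card := by
    calc _ = ∑ x ∈ W.filter fun x => ¬ (W.filter (E x)).card ≤ d, (d + 1) := by simp
      _ ≤ ∑ x ∈ W.filter fun x => ¬ (W.filter (E x)).card ≤ d, (W.filter (E x)).card := by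
        apply Finset.sum_le_sum
        intro x hx
        have := (Finset.mem_filter.1 hx).2
        omega
      _ ≤ _ := Finset.sum_le_sum_of_subset (Finset.filter_subset _ _)
  have hsplit : W'.card + (W.filter fun x => ¬ (W.filter (E x)).card ≤ d).card = W.card :=
    Finset.card_filter_add_card_filter_not _
  set b := (W.filter fun x => ¬ (W.filter (E x)).card ≤ d).card with hb
  rw [he] at h1
  have hdlt : W.card < 8 * k * (d + 1) := by
    have := Nat.lt_mul_div_succ W.card (show 0 < 8 * k by omega)
    simpa [hd] using this
  have hdle : 8 * k * d ≤ W.card := Nat.mul_div_le _ _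
  have hb2 : 2 * b ≤ W.card := by
    by_contra hcon
    push Not at hcon
    have : 16 * k * (b * (d + 1)) ≤ W.card ^ 2 := le_trans (Nat.mul_le_mul_left _ hbad) h1
    have h3 : W.card * (2 * b) ≤ W.card ^ 2 := by
      calc W.card * (2 * b) ≤ 8 * k * (d + 1) * (2 * b) := Nat.mul_le_mul_right _ hdlt.le
        _ = 16 * k * (b * (d + 1)) := by ring
        _ ≤ _ := this
    have : 0 < W.card := by omega
    nlinarith
  obtain ⟨I, hI, h⟩ := greedy_ind E hsym d k W'
    (fun x hx => (Finset.card_le_card (Finset.filter_subset_filter _ (Finset.filter_subset _ _))).trans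
      (Finset.mem_filter.1 hx).2) (by nlinarith)
  exact ⟨I, hI.trans (Finset.filter_subset _ _), h⟩

open Classical in
lemma count_pairs {N n : ℕ} (χ : Fin N → Fin N → Fin n) (K : Finset (Fin n)) (t B : ℕ)
    (Q P : Finset (Fin N))
    (h1 : ∀ c ∈ K, (c : ℕ) < t → ∀ y ∈ P, (Q.filter fun x => x < y ∧ χ x y = c).card ≤ B)
    (h2 : ∀ c ∈ K, t ≤ (c : ℕ) → ∀ x ∈ Q, (P.filter fun y => x < y ∧ χ x y = c).card ≤ B) :
    ((Q ×ˢ P).filter fun p => p.1 < p.2 ∧ χ p.1 p.2 ∈ K).card ≤ n * (B * (Q.card + P.card)) := by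
  have hsub : ((Q ×ˢ P).filter fun p => p.1 < p.2 ∧ χ p.1 p.2 ∈ K) ⊆
      K.biUnion fun c => (Q ×ˢ P).filter fun p => p.1 < p.2 ∧ χ p.1 p.2 = c := by
    intro p hp
    simp only [Finset.mem_filter, Finset.mem_biUnion] at hp ⊢
    exact ⟨_, hp.2.2, hp.1, hp.2.1, rfl⟩
  have hc : ∀ c ∈ K, ((Q ×ˢ P).filter fun p => p.1 < p.2 ∧ χ p.1 p.2 = c).card ≤
      B * (Q.card + P.card) := by
    intro c hc
    rcases lt_or_ge (c : ℕ) t with hct | hct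
    · rw [Finset.card_filter, Finset.sum_product_right]
      simp only [← Finset.card_filter]
      calc _ ≤ ∑ y ∈ P, B := Finset.sum_le_sum fun y hy => h1 c hc hct y hy
        _ = P.card * B := by simp
        _ ≤ _ := by nlinarith
    · rw [Finset.card_filter, Finset.sum_product]
      simp only [← Finset.card_filter]
      calc _ ≤ ∑ y ∈ Q, B := Finset.sum_le_sum fun y hy => h2 c hc hct y hy
        _ = Q.card * B := by simp
        _ ≤ _ := by nlinarith
  calc _ ≤ _ := Finset.card_le_card hsub
    _ ≤ K.card * (B * (Q.card + P.card)) := Finset.card_biUnion_le_card_mul _ _ _ hc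
    _ ≤ _ := Nat.mul_le_mul_right _ (by simpa using Finset.card_le_univ K)

open Classical in
lemma find_ind {N n : ℕ} (χ : Fin N → Fin N → Fin n) (K : Finset (Fin n)) (k : ℕ) (hk : 0 < k)
    (W : Finset (Fin N))
    (h1 : 32 * k * ((W ×ˢ W).filter fun p => p.1 < p.2 ∧ χ p.1 p.2 ∈ K).card ≤ W.card ^ 2)
    (h2 : 4 * k ≤ W.card) :
    ∃ I ⊆ W, I.card = k ∧ ∀ x ∈ I, ∀ y ∈ I, x < y → χ x y ∉ K := by
  set e := ((W ×ˢ W).filter fun p => p.1 < p.2 ∧ χ p.1 p.2 ∈ K).card with he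
  have hE : ((W ×ˢ W).filter fun p => (p.1 < p.2 ∧ χ p.1 p.2 ∈ K) ∨
      (p.2 < p.1 ∧ χ p.2 p.1 ∈ K)).card ≤ 2 * e := by
    rw [Finset.filter_or]
    refine (Finset.card_union_le _ _).trans ?_
    have : ((W ×ˢ W).filter fun p => p.2 < p.1 ∧ χ p.2 p.1 ∈ K).card = e := by
      rw [he, Finset.card_filter, Finset.card_filter, Finset.sum_product, Finset.sum_product_right]
    omega
  have hE' : 16 * k * (2 * e) ≤ W.card ^ 2 := by linarith
  obtain ⟨I, hI, hc, h⟩ := turan_ind (fun x y => (x < y ∧ χ x y ∈ K) ∨ (y < x ∧ χ y x ∈ K))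
    (fun x y h => h.symm) k hk W
    (by
      refine le_trans (Nat.mul_le_mul_left _ ?_) hE'
      convert hE) h2
  refine ⟨I, hI, hc, fun x hx y hy hxy hK => h x hx y hy hxy.ne (Or.inl ⟨hxy, hK⟩)⟩

open Classical in
/-- The main step. -/
lemma main_step {N n : ℕ} (hn : 1 ≤ n) (χ : Fin N → Fin N → Fin n) (K : Finset (Fin n))
    (S : Finset (Fin N)) (M : ℕ) (hM : 1 ≤ M) (l r : ℕ → Finset (Fin N) → Prop)
    (lsub : ∀ t, ∀ A B : Finset (Fin N), A ⊆ B → l t B → l t A)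
    (rsub : ∀ t, ∀ A B : Finset (Fin N), A ⊆ B → r t B → r t A)
    (lmono : ∀ t u A, t ≤ u → l u A → l t A)
    (rmono : ∀ t u A, t ≤ u → r t A → r u A)
    (l0 : ∀ A, l 0 A) (rn : ∀ A, r n A)
    (hl : ∀ v ∈ S, ∀ c ∈ K, l (c + 1) (S.filter fun w => v < w ∧ χ v w = c))
    (hr : ∀ v ∈ S, ∀ c ∈ K, r c (S.filter fun w => w < v ∧ χ w v = c))
    (hlr : ∀ t, ∀ T ⊆ S, l t T → r t T → T.card < M)
    (hind : ∀ T ⊆ S, (∀ x ∈ T, ∀ y ∈ T, x < y → χ x y ∉ K) → T.card < M) :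
    S.card < 2 ^ 20 * n ^ 5 * M ^ 3 := by
  by_contra hcon
  push Not at hcon
  set L := 1024 * n ^ 3 * M ^ 2 with hLdef
  have hL : 0 < L := by positivity
  have hLM : M ≤ L := by
    have : 1 ≤ n ^ 3 := Nat.one_le_pow _ _ hn
    nlinarith [Nat.mul_le_mul this (le_refl (M ^ 2))]
  have hSL : 1024 * n ^ 2 * L * M ≤ S.card := by
    rw [hLdef]; refine le_trans (le_of_eq ?_) hcon; ring
  -- the dichotomy for each threshold
  have hdich : ∀ t : ℕ, ∃ R1 R2 W : Finset (Fin N), S ⊆ R1 ∪ R2 ∪ W ∧ R1 ⊆ S ∧ R2 ⊆ S ∧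
      (∀ T ⊆ R1, T.card = L → ¬ l t T) ∧ (∀ T ⊆ R2, T.card = L → ¬ r t T) ∧
      W.card * (2 * (n + 1)) ≤ S.card := by
    intro t
    obtain ⟨F, hF1, hF2, hF3⟩ := packing (l t) L hL _ S le_rfl
    set X := F.biUnion id with hX
    have hXS : X ⊆ S := by
      intro x hx
      obtain ⟨Q, hQ, hxQ⟩ := Finset.mem_biUnion.1 hx
      exact (hF1 Q hQ).1 hxQ
    obtain ⟨G, hG1, hG2, hG3⟩ := packing (r t) L hL _ X le_rfl
    set W := G.biUnion id with hW
    have hWX : W ⊆ X := by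
      intro x hx
      obtain ⟨Q, hQ, hxQ⟩ := Finset.mem_biUnion.1 hx
      exact (hG1 Q hQ).1 hxQ
    refine ⟨S \ X, X \ W, W, ?_, Finset.sdiff_subset, Finset.sdiff_subset.trans hXS, hF3, hG3, ?_⟩
    · intro x hx
      simp only [Finset.mem_union, Finset.mem_sdiff]
      tauto
    by_contra hW2
    push Not at hW2
    -- count pairs in `W`
    have hpair : ∀ Q ∈ F, ∀ P ∈ G,
        ((Q ×ˢ P).filter fun p => p.1 < p.2 ∧ χ p.1 p.2 ∈ K).card ≤ n * (M * (L + L)) := by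
      intro Q hQ P hP
      obtain ⟨hQS, hQL, hQl⟩ := hF1 Q hQ
      obtain ⟨hPX, hPL, hPr⟩ := hG1 P hP
      have hPS := hPX.trans hXS
      have := count_pairs χ K t M Q P ?_ ?_
      · rwa [hQL, hPL] at this
      · intro c hc hct y hy
        refine (hlr t _ ((Finset.filter_subset _ _).trans hQS)
          (lsub t _ _ (Finset.filter_subset _ _) hQl) ?_).le
        exact rmono c t _ hct.le (rsub c _ _ (Finset.filter_subset_filter _ hQS)
          (hr y (hPS hy) c hc))
      · intro c hc hct x hx
        refine (hlr t _ ((Finset.filter_subset _ _).trans hPS) ?_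
          (rsub t _ _ (Finset.filter_subset _ _) hPr)).le
        exact lmono t (c + 1) _ (by omega) (lsub _ _ _ (Finset.filter_subset_filter _ hPS)
          (hl x (hQS hx) c hc))
    set e := ((W ×ˢ W).filter fun p => p.1 < p.2 ∧ χ p.1 p.2 ∈ K).card with he
    have hsub : ((W ×ˢ W).filter fun p => p.1 < p.2 ∧ χ p.1 p.2 ∈ K) ⊆
        (F ×ˢ G).biUnion fun q => (q.1 ×ˢ q.2).filter fun p => p.1 < p.2 ∧ χ p.1 p.2 ∈ K := by
      intro p hp
      obtain ⟨hp1, hp2⟩ := Finset.mem_filter.1 hp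
      obtain ⟨ha, hb⟩ := Finset.mem_product.1 hp1
      obtain ⟨Q, hQ, hxQ⟩ := Finset.mem_biUnion.1 (hWX ha)
      obtain ⟨P, hP, hxP⟩ := Finset.mem_biUnion.1 hb
      exact Finset.mem_biUnion.2 ⟨(Q, P), Finset.mem_product.2 ⟨hQ, hP⟩,
        Finset.mem_filter.2 ⟨Finset.mem_product.2 ⟨hxQ, hxP⟩, hp2⟩⟩
    have he1 : e ≤ F.card * G.card * (n * (M * (L + L))) := by
      refine (Finset.card_le_card hsub).trans ?_
      rw [← Finset.card_product]
      refine Finset.card_biUnion_le_card_mul _ _ _ ?_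
      rintro ⟨Q, P⟩ hq
      obtain ⟨hQ, hP⟩ := Finset.mem_product.1 hq
      exact hpair Q hQ P hP
    have hGS : G.card * L ≤ S.card := hG2.trans (Finset.card_le_card hXS)
    have he2 : e * L ≤ 2 * n * M * S.card ^ 2 := by
      calc e * L ≤ F.card * G.card * (n * (M * (L + L))) * L := Nat.mul_le_mul_right _ he1
        _ = 2 * n * M * ((F.card * L) * (G.card * L)) := by ring
        _ ≤ 2 * n * M * (S.card * S.card) := Nat.mul_le_mul_left _ (Nat.mul_le_mul hF2 hGS)
        _ = _ := by ring
    have hSW : S.card ≤ W.card * (4 * n) := hW2.le.trans (Nat.mul_le_mul_left _ (by omega))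
    have he3 : e * L ≤ 32 * n ^ 3 * M * W.card ^ 2 := by
      calc e * L ≤ 2 * n * M * S.card ^ 2 := he2
        _ ≤ 2 * n * M * (W.card * (4 * n)) ^ 2 :=
          Nat.mul_le_mul_left _ (Nat.pow_le_pow_left hSW 2)
        _ = _ := by ring
    have he4 : 32 * M * e ≤ W.card ^ 2 := by
      have h5 : (32 * n ^ 3 * M) * (32 * M * e) ≤ (32 * n ^ 3 * M) * W.card ^ 2 := by
        calc _ = e * L := by rw [hLdef]; ring
          _ ≤ _ := he3
      exact Nat.le_of_mul_le_mul_left h5 (by positivity)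
    have hW4 : 4 * M ≤ W.card := by
      have h6 : 4 * n * (4 * M) ≤ 4 * n * W.card := by
        calc 4 * n * (4 * M) ≤ 1024 * n ^ 2 * L * M := by
              have : n * M ≤ n ^ 2 * L * M := by
                apply Nat.mul_le_mul_right
                nlinarith
              nlinarith
          _ ≤ S.card := hSL
          _ ≤ _ := by linarith
      exact Nat.le_of_mul_le_mul_left h6 (by positivity)
    obtain ⟨I, hI, hIc, hIK⟩ := find_ind χ K M hM W he4 hW4
    have := hind I ((hI.trans hWX).trans hXS) hIK
    omega
  choose R1 R2 W hcov hR1S hR2S hR1 hR2 hWc using hdich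
  have hsmall : ∀ (p : Finset (Fin N) → Prop) (R : Finset (Fin N)), (∀ A, p A) →
      (∀ T ⊆ R, T.card = L → ¬ p T) → R.card < L := by
    intro p R hp hR
    by_contra h
    push Not at h
    obtain ⟨T, hT, hTc⟩ := Finset.exists_subset_card_eq h
    exact hR T hT hTc (hp T)
  have hA := hsmall (l 0) (R1 0) l0 (hR1 0)
  have hB := hsmall (r n) (R2 n) rn (hR2 n)
  set U := (Finset.range (n + 1)).biUnion W with hU
  have hUc : U.card * 2 ≤ S.card := by
    have h1 : U.card ≤ ∑ t ∈ Finset.range (n + 1), (W t).card := Finset.card_biUnion_le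
    have h2 : (∑ t ∈ Finset.range (n + 1), (W t).card) * (2 * (n + 1)) ≤ (n + 1) * S.card := by
      rw [Finset.sum_mul]
      calc _ ≤ ∑ t ∈ Finset.range (n + 1), S.card := Finset.sum_le_sum fun t _ => hWc t
        _ = _ := by simp
    have h3 : (n + 1) * (U.card * 2) ≤ (n + 1) * S.card := by
      refine le_trans ?_ h2
      calc _ = U.card * (2 * (n + 1)) := by ring
        _ ≤ _ := Nat.mul_le_mul_right _ h1
    exact Nat.le_of_mul_le_mul_left h3 (by positivity)
  -- pigeonhole
  have hcover : S ⊆ (Finset.range n).biUnion (fun t => R2 t ∩ R1 (t + 1)) ∪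
      (U ∪ (R1 0 ∪ R2 n)) := by
    intro v hv
    by_contra hno
    simp only [Finset.mem_union, not_or, Finset.mem_biUnion, hU, Finset.mem_range, not_exists,
      not_and, Finset.mem_inter] at hno
    obtain ⟨h1, h2, h3, h4⟩ := hno
    have key : ∀ t ≤ n, v ∈ R2 t := by
      intro t
      induction t with
      | zero =>
        intro _
        have := hcov 0 hv
        have := h2 0 (by omega)
        simp only [Finset.mem_union] at *
        tauto
      | succ t ih =>
        intro ht
        have a := ih (by omega)
        have b := h1 t (by omega) a
        have c := hcov (t + 1) hv
        have d := h2 (t + 1) (by omega)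
        simp only [Finset.mem_union] at c
        tauto
    exact h4 (key n le_rfl)
  have hpig : ∃ t, S.card ≤ (R2 t ∩ R1 (t + 1)).card * (4 * n) := by
    by_contra hno
    push Not at hno
    have h1 := Finset.card_le_card hcover
    have h2 := (Finset.card_union_le ((Finset.range n).biUnion (fun t => R2 t ∩ R1 (t + 1)))
      (U ∪ (R1 0 ∪ R2 n)))
    have h3 := Finset.card_union_le U (R1 0 ∪ R2 n)
    have h4 := Finset.card_union_le (R1 0) (R2 n)
    set Y := (Finset.range n).biUnion (fun t => R2 t ∩ R1 (t + 1)) with hY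
    have h5 : Y.card ≤ ∑ t ∈ Finset.range n, (R2 t ∩ R1 (t + 1)).card := Finset.card_biUnion_le
    have h6 : (∑ t ∈ Finset.range n, (R2 t ∩ R1 (t + 1)).card) * (4 * n) ≤ n * S.card := by
      rw [Finset.sum_mul]
      calc _ ≤ ∑ t ∈ Finset.range n, S.card := Finset.sum_le_sum fun t _ => (hno t).le
        _ = _ := by simp
    have h7 : Y.card * 4 ≤ S.card := by
      have : n * (Y.card * 4) ≤ n * S.card := by
        refine le_trans ?_ h6
        calc _ = Y.card * (4 * n) := by ring
          _ ≤ _ := Nat.mul_le_mul_right _ h5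
      exact Nat.le_of_mul_le_mul_left this (by omega)
    have h8 : 1024 * L ≤ S.card := by
      refine le_trans ?_ hSL
      have : 1 ≤ n ^ 2 * M := Nat.succ_le_of_lt (by positivity)
      nlinarith
    omega
  obtain ⟨t, ht⟩ := hpig
  set Z := R2 t ∩ R1 (t + 1) with hZ
  have hZ2 : Z ⊆ R2 t := Finset.inter_subset_left
  have hZ1 : Z ⊆ R1 (t + 1) := Finset.inter_subset_right
  have hZS : Z ⊆ S := hZ2.trans (hR2S t)
  have hlt : ∀ T ⊆ Z, l (t + 1) T → T.card < L := by
    intro T hT h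
    by_contra hc
    push Not at hc
    obtain ⟨T', hT', hTc⟩ := Finset.exists_subset_card_eq hc
    exact hR1 (t + 1) T' ((hT'.trans hT).trans hZ1) hTc (lsub _ _ _ hT' h)
  have hrt : ∀ T ⊆ Z, r t T → T.card < L := by
    intro T hT h
    by_contra hc
    push Not at hc
    obtain ⟨T', hT', hTc⟩ := Finset.exists_subset_card_eq hc
    exact hR2 t T' ((hT'.trans hT).trans hZ2) hTc (rsub _ _ _ hT' h)
  have hcount := count_pairs χ K (t + 1) L Z Z
    (fun c hc hct y hy => (hrt _ (Finset.filter_subset _ _)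
      (rmono c t _ (by omega) (rsub _ _ _ (Finset.filter_subset_filter _ hZS)
        (hr y (hZS hy) c hc)))).le)
    (fun c hc hct x hx => (hlt _ (Finset.filter_subset _ _)
      (lmono (t + 1) (c + 1) _ (by omega) (lsub _ _ _ (Finset.filter_subset_filter _ hZS)
        (hl x (hZS hx) c hc)))).le)
  have hZc : 64 * n * L * M ≤ Z.card := by
    have : 4 * n * (64 * n * L * M) ≤ 4 * n * Z.card := by
      calc _ ≤ 1024 * n ^ 2 * L * M := by nlinarith [Nat.zero_le (n ^ 2 * L * M)]
        _ ≤ S.card := hSL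
        _ ≤ _ := by linarith
    exact Nat.le_of_mul_le_mul_left this (by positivity)
  obtain ⟨I, hI, hIc, hIK⟩ := find_ind χ K M hM Z
    (by
      calc _ ≤ 32 * M * (n * (L * (Z.card + Z.card))) := Nat.mul_le_mul_left _ hcount
        _ = (64 * n * L * M) * Z.card := by ring
        _ ≤ Z.card * Z.card := Nat.mul_le_mul_right _ hZc
        _ = _ := by ring)
    (by
      refine le_trans ?_ hZc
      have : 1 ≤ n * L := Nat.succ_le_of_lt (by positivity)
      nlinarith)
  have := hind I (hI.trans hZS) hIK
  omega

/-- `S` is good for a list of triples `(a, b, K)`. -/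
def Good {N n : ℕ} (χ : Fin N → Fin N → Fin n) (E : List (ℕ × ℕ × Finset (Fin n)))
    (S : Finset (Fin N)) : Prop :=
  (∀ x ∈ S, ∀ y ∈ S, x < y → ∃ e ∈ E, χ x y ∈ e.2.2) ∧
  ∀ e ∈ E, ∀ c ∈ e.2.2, ¬ Fwd χ e.1 c S ∧ ¬ Bwd χ e.2.1 c S

lemma Good.sub {N n : ℕ} {χ : Fin N → Fin N → Fin n} {E : List (ℕ × ℕ × Finset (Fin n))}
    {S T : Finset (Fin N)} (h : Good χ E S) (hT : T ⊆ S) : Good χ E T :=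
  ⟨fun x hx y hy => h.1 x (hT hx) y (hT hy), fun e he c hc =>
    ⟨fun hh => (h.2 e he c hc).1 (hh.mono _ le_rfl hT),
     fun hh => (h.2 e he c hc).2 (hh.mono _ le_rfl hT)⟩⟩

/-- weight of a list of classes -/
def wt {n : ℕ} (E : List (ℕ × ℕ × Finset (Fin n))) : ℕ := (E.map fun e => 3 ^ (e.1 + e.2.1)).sum

open Classical in
lemma main_bound (w : ℕ) : ∃ C : ℕ, 2 ≤ C ∧ ∀ (n N : ℕ), 1 ≤ n →
    ∀ (χ : Fin N → Fin N → Fin n) (E : List (ℕ × ℕ × Finset (Fin n))) (S : Finset (Fin N)),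
      wt E ≤ w → Good χ E S → S.card < C * n ^ C := by
  have hnil : ∀ (n N : ℕ) (χ : Fin N → Fin N → Fin n) (S : Finset (Fin N)),
      Good χ [] S → S.card < 2 := by
    intro n N χ S hS
    by_contra h
    push Not at h
    obtain ⟨x, hx, y, hy, hxy⟩ := Finset.one_lt_card.1 (show 1 < S.card by omega)
    rcases lt_or_gt_of_ne hxy with h | h
    · simpa using hS.1 x hx y hy h
    · simpa using hS.1 y hy x hx h
  have hCpos : ∀ n C : ℕ, 1 ≤ n → 2 ≤ C → 2 ≤ C * n ^ C := by
    intro n C hn hC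
    have : 1 ≤ n ^ C := Nat.one_le_pow _ _ hn
    nlinarith
  induction w with
  | zero =>
    refine ⟨2, le_rfl, ?_⟩
    intro n N hn χ E S hE hS
    cases E with
    | nil => exact (hnil n N χ S hS).trans_le (hCpos n 2 hn le_rfl)
    | cons e E =>
      have : 0 < 3 ^ (e.1 + e.2.1) := by positivity
      simp [wt] at hE
  | succ w ih =>
    obtain ⟨C, hC2, hC⟩ := ih
    refine ⟨2 ^ 20 * C ^ 3 + 3 * C + 5, by omega, ?_⟩
    intro n N hn χ E S hE hS
    set C' := 2 ^ 20 * C ^ 3 + 3 * C + 5 with hC'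
    have hle : 2 ^ 20 * n ^ 5 * (C * n ^ C) ^ 3 ≤ C' * n ^ C' := by
      calc 2 ^ 20 * n ^ 5 * (C * n ^ C) ^ 3 = (2 ^ 20 * C ^ 3) * n ^ (3 * C + 5) := by ring
        _ ≤ C' * n ^ C' := Nat.mul_le_mul (by omega) (Nat.pow_le_pow_right hn (by omega))
    have hM1 : 1 ≤ C * n ^ C := by have := hCpos n C hn hC2; omega
    have hMle : C * n ^ C ≤ C' * n ^ C' := by
      refine le_trans ?_ hle
      have h5 : 1 ≤ 2 ^ 20 * n ^ 5 := Nat.succ_le_of_lt (by positivity)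
      calc C * n ^ C = 1 * (C * n ^ C) ^ 1 := by ring
        _ ≤ _ := Nat.mul_le_mul h5 (Nat.pow_le_pow_right hM1 (by norm_num))
    cases E with
    | nil => exact (hnil n N χ S hS).trans_le (hCpos n _ hn (by omega))
    | cons e E =>
      obtain ⟨a, b, K⟩ := e
      have hwt : 3 ^ (a + b) + wt E ≤ w + 1 := by simpa [wt] using hE
      have hpos : 0 < 3 ^ (a + b) := by positivity
      have hE1 : wt E ≤ w := by omega
      have hgood : ∀ T ⊆ S, (∀ x ∈ T, ∀ y ∈ T, x < y → χ x y ∉ K) → Good χ E T := by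
        intro T hT h
        have hG := hS.sub hT
        refine ⟨fun x hx y hy hxy => ?_, fun e he => hG.2 e (List.mem_cons_of_mem _ he)⟩
        obtain ⟨e, he, hc⟩ := hG.1 x hx y hy hxy
        rcases List.mem_cons.1 he with rfl | he
        · exact absurd hc (h x hx y hy hxy)
        · exact ⟨e, he, hc⟩
      have hab := hS.2 (a, b, K) List.mem_cons_self
      have hrec : ∀ T ⊆ S, (∀ x ∈ T, ∀ y ∈ T, x < y → χ x y ∉ K) → T.card < C * n ^ C :=
        fun T hT h => hC n N hn χ E T hE1 (hgood T hT h)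
      by_cases hab0 : a = 0 ∨ b = 0
      · refine (hrec S subset_rfl fun x _ y _ _ hK => ?_).trans_le hMle
        rcases hab0 with rfl | rfl
        · exact (hab _ hK).1 trivial
        · exact (hab _ hK).2 trivial
      push Not at hab0
      obtain ⟨a, rfl⟩ := Nat.exists_eq_succ_of_ne_zero hab0.1
      obtain ⟨b, rfl⟩ := Nat.exists_eq_succ_of_ne_zero hab0.2
      refine (main_step hn χ K S (C * n ^ C) hM1
        (fun t T => ∀ c ∈ K, (c : ℕ) < t → ¬ Fwd χ a c T)
        (fun t T => ∀ c ∈ K, t ≤ (c : ℕ) → ¬ Bwd χ b c T)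
        ?_ ?_ ?_ ?_ ?_ ?_ ?_ ?_ ?_ hrec).trans_le hle
      · intro t A B hAB h c hc hct hF
        exact h c hc hct (hF.mono _ le_rfl hAB)
      · intro t A B hAB h c hc hct hF
        exact h c hc hct (hF.mono _ le_rfl hAB)
      · intro t u A htu h c hc hct
        exact h c hc (by omega)
      · intro t u A htu h c hc hct
        exact h c hc (by omega)
      · intro A c _ h
        omega
      · intro A c _ h
        have := c.isLt
        omega
      · intro v hv c hc d hd hdc hF
        exact (hab c hc).1 ⟨v, hv, c, le_rfl,
          hF.mono _ (Fin.le_def.2 (by omega)) subset_rfl⟩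
      · intro v hv c hc d hd hdc hF
        exact (hab c hc).2 ⟨v, hv, c, le_rfl,
          hF.mono _ (Fin.le_def.2 hdc) subset_rfl⟩
      · intro t T hT hl hr
        refine hC n N hn χ ((a, b + 1, K.filter fun c => (c : ℕ) < t) ::
          (a + 1, b, K.filter fun c => t ≤ (c : ℕ)) :: E) T ?_ ?_
        · have h3 : 3 ^ (a + 1 + (b + 1)) = 3 * 3 ^ (a + (b + 1)) := by ring
          have h4 : 3 ^ (a + 1 + b) = 3 ^ (a + (b + 1)) := by ring
          have h5 : 0 < 3 ^ (a + (b + 1)) := by positivity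
          simp only [wt, List.map_cons, List.sum_cons, Nat.succ_eq_add_one] at hwt ⊢
          omega
        · have hG := hS.sub hT
          constructor
          · intro x hx y hy hxy
            obtain ⟨e, he, hc⟩ := hG.1 x hx y hy hxy
            rcases List.mem_cons.1 he with rfl | he
            · rcases lt_or_ge (χ x y : ℕ) t with h | h
              · exact ⟨_, List.mem_cons_self, Finset.mem_filter.2 ⟨hc, h⟩⟩
              · exact ⟨_, List.mem_cons_of_mem _ List.mem_cons_self,
                  Finset.mem_filter.2 ⟨hc, h⟩⟩
            · exact ⟨e, List.mem_cons_of_mem _ (List.mem_cons_of_mem _ he), hc⟩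
          · intro e he c hc
            have hK := hG.2 _ List.mem_cons_self
            rcases List.mem_cons.1 he with rfl | he
            · obtain ⟨hc1, hc2⟩ := Finset.mem_filter.1 hc
              exact ⟨hl c hc1 hc2, (hK c hc1).2⟩
            rcases List.mem_cons.1 he with rfl | he
            · obtain ⟨hc1, hc2⟩ := Finset.mem_filter.1 hc
              exact ⟨(hK c hc1).1, hr c hc1 hc2⟩
            · exact hG.2 e (List.mem_cons_of_mem _ he) c hc

/-- ordered canonical Ramsey theorem: for every `s ≥ 2` there is a
constant `C = C(s)` such that for every `n ≥ 1` and every coloring `χ` of the pairs of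
`{1, …, N}` (given as `χ x y` for `x < y`) by colors in `{1, …, n}` (modeled as `Fin n`),
with `N ≥ C · n^C`, there is a lexicographic set `x_1 < … < x_s` (given by a strictly
monotone `f`) with colors `c_1 ≥ c_2 ≥ … ≥ c_{s−1}`: either `χ(x_i, x_j) = c_i` for all
`i < j` (forward) or `χ(x_i, x_j) = c_{j−1}` for all `i < j` (backward).
Here the colors are modeled as a non-increasing `c : Fin s → Fin n`, where in 0-indexed
form the forward condition reads `χ (f i) (f j) = c i` and the backward condition reads
`χ (f i) (f j) = c (j − 1)`; the value of `c` at the last index is unconstrained. -/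
theorem stmt4 (s : ℕ) (hs : 2 ≤ s) :
    ∃ C : ℕ, ∀ n N : ℕ, 1 ≤ n → C * n ^ C ≤ N →
      ∀ χ : Fin N → Fin N → Fin n,
        ∃ f : Fin s → Fin N, StrictMono f ∧
          ∃ c : Fin s → Fin n,
            (∀ i j : Fin s, i ≤ j → c j ≤ c i) ∧
            ((∀ i j : Fin s, i < j → χ (f i) (f j) = c i) ∨
             (∀ i j : Fin s, i < j →
                χ (f i) (f j) = c ⟨(j : ℕ) - 1, lt_of_le_of_lt (Nat.sub_le _ _) j.isLt⟩)) := by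
  obtain ⟨C, hC2, hC⟩ := main_bound (3 ^ (s + s))
  refine ⟨C, ?_⟩
  intro n N hn hN χ
  have h1 : 1 ≤ n ^ C := Nat.one_le_pow _ _ hn
  have hNpos : 0 < N := by nlinarith
  have hne : Nonempty (Fin N) := ⟨⟨0, hNpos⟩⟩
  have hbad : ¬ Good χ [(s, s, Finset.univ)] Finset.univ := by
    intro hG
    have := hC n N hn χ _ _ (by simp [wt]) hG
    rw [Finset.card_univ, Fintype.card_fin] at this
    omega
  have hex : ∃ c, Fwd χ s c Finset.univ ∨ Bwd χ s c Finset.univ := by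
    by_contra hno
    push Not at hno
    apply hbad
    refine ⟨fun x _ y _ _ => ⟨_, List.mem_cons_self, Finset.mem_univ _⟩, ?_⟩
    intro e he c _
    rw [List.mem_singleton] at he
    subst he
    exact hno c
  obtain ⟨c, hF | hB⟩ := hex
  · obtain ⟨f, d, -, -, hfd, had⟩ := hF.extract hne
    refine ⟨fun i => f i, fun i j hij => (hfd i j hij j.isLt).1, fun i => d i,
      fun i j hij => had _ _ hij, Or.inl fun i j hij => (hfd i j hij j.isLt).2⟩
  · obtain ⟨f, d, -, -, hfd, had⟩ := hB.extract hne
    refine ⟨fun i => f i, fun i j hij => (hfd i j hij j.isLt).1, fun i => d (i + 1),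
      fun i j hij => had _ _ (Nat.succ_le_succ hij), Or.inr fun i j hij => ?_⟩
    have hj : ((j : ℕ) - 1) + 1 = j := by
      have : (i : ℕ) < j := hij
      omega
    show _ = d ((j : ℕ) - 1 + 1)
    rw [hj]
    exact (hfd i j hij j.isLt).2
end

section
/- For all integers s ≥ 2 and n ≥ 3, the ordered Ramsey number satisfies R_<(K_s^{(3)}, P_n^{(3)}) ≤ g(n−2, s). -/
/-- A triple `x < y < z` is non-increasing (w.r.t. a pair-coloring `χ`, queried as
`χ x y` for `x < y`) if `χ(x,y) ≥ χ(y,z)` and moreover `χ(x,z) = χ(x,y)` or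
`χ(x,z) = χ(y,z)`. -/
def NonIncTriple {N n : ℕ} (χ : Fin N → Fin N → Fin n) (x y z : Fin N) : Prop :=
  χ y z ≤ χ x y ∧ (χ x z = χ x y ∨ χ x z = χ y z)

/-- Every coloring of the pairs of `{1, …, N}` by `n` colors admits a non-increasing
set of size `s`. -/
def HasNonIncSet (n N s : ℕ) : Prop :=
  ∀ χ : Fin N → Fin N → Fin n,
    ∃ f : Fin s → Fin N, StrictMono f ∧
      ∀ i j k : Fin s, i < j → j < k → NonIncTriple χ (f i) (f j) (f k)

/-- `g(n, s)`: the minimum `N` such that every coloring of the pairs of `{1, …, N}` by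
`n` colors admits a non-increasing set of size `s`. -/
noncomputable def gFun (n s : ℕ) : ℕ := sInf {N | HasNonIncSet n N s}

/-- Multicolour graph Ramsey theorem (finite form). -/
theorem ramsey_aux_s5 (m : ℕ) (t : ℕ) : ∀ k : Fin m → ℕ, ∑ a, k a = t →
    ∃ M : ℕ, ∀ (N : ℕ) (c : Fin N → Fin N → Fin m) (S : Finset (Fin N)), M < S.card →
      ∃ (a : Fin m) (T : Finset (Fin N)), T ⊆ S ∧ k a ≤ T.card ∧
        ∀ x ∈ T, ∀ y ∈ T, x < y → c x y = a := by
  induction t with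
  | zero =>
    intro k hk
    refine ⟨1, fun N c S hS => ?_⟩
    obtain ⟨x, -⟩ : S.Nonempty := Finset.card_pos.mp (by omega)
    refine ⟨c x x, ∅, by simp, ?_, by simp⟩
    have := Finset.single_le_sum (f := k) (fun i _ => Nat.zero_le _) (Finset.mem_univ (c x x))
    simp only [Finset.card_empty]
    omega
  | succ t ih =>
    intro k hk
    by_cases h0 : ∃ a, k a = 0
    · obtain ⟨a, ha⟩ := h0
      exact ⟨0, fun N c S hS => ⟨a, ∅, by simp, by simp [ha], by simp⟩⟩
    push Not at h0
    have key : ∀ a, ∃ M : ℕ, ∀ (N : ℕ) (c : Fin N → Fin N → Fin m) (S : Finset (Fin N)),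
        M < S.card → ∃ (b : Fin m) (T : Finset (Fin N)), T ⊆ S ∧
          (Function.update k a (k a - 1)) b ≤ T.card ∧
          ∀ x ∈ T, ∀ y ∈ T, x < y → c x y = b := by
      intro a
      apply ih
      rw [Finset.sum_update_of_mem (Finset.mem_univ a)]
      have h1 := Finset.add_sum_erase Finset.univ k (Finset.mem_univ a)
      rw [Finset.sdiff_singleton_eq_erase]
      have := h0 a
      omega
    choose M hM using key
    refine ⟨m * (∑ a, M a) + 1, fun N c S hS => ?_⟩
    have hne : S.Nonempty := Finset.card_pos.mp (by omega)
    set x := S.min' hne with hx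
    have hcard : (S.erase x).card = S.card - 1 := Finset.card_erase_of_mem (S.min'_mem hne)
    obtain ⟨a, -, ha⟩ := Finset.exists_lt_card_fiber_of_mul_lt_card_of_maps_to
      (s := S.erase x) (t := (Finset.univ : Finset (Fin m))) (f := c x) (n := ∑ a, M a)
      (fun _ _ => Finset.mem_univ _) (by simp only [Finset.card_univ, Fintype.card_fin]; omega)
    have hle := Finset.single_le_sum (f := M) (fun i _ => Nat.zero_le _) (Finset.mem_univ a)
    obtain ⟨b, T, hT, hTc, hmono⟩ := hM a N c _ (lt_of_le_of_lt hle ha)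
    have hTS : T ⊆ S := fun y hy =>
      Finset.mem_of_mem_erase (Finset.mem_filter.mp (hT hy)).1
    by_cases hb : b = a
    · subst hb
      have hxT : x ∉ T := fun h => by
        have := (Finset.mem_filter.mp (hT h)).1
        simp at this
      refine ⟨b, insert x T, ?_, ?_, ?_⟩
      · exact Finset.insert_subset (S.min'_mem hne) hTS
      · rw [Finset.card_insert_of_notMem hxT]
        simp at hTc
        omega
      · intro y hy z hz hyz
        rw [Finset.mem_insert] at hy hz
        rcases hz with rfl | hz
        · exfalso
          have hyS : y ∈ S := by
            rcases hy with rfl | hy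
            · exact S.min'_mem hne
            · exact hTS hy
          exact absurd (S.min'_le y hyS) (not_le.mpr hyz)
        · rcases hy with rfl | hy
          · exact (Finset.mem_filter.mp (hT hz)).2
          · exact hmono y hy z hz hyz
    · refine ⟨b, T, hTS, ?_, hmono⟩
      simpa [Function.update_of_ne hb] using hTc

theorem exists_hasNonIncSet (m s : ℕ) : ∃ N, HasNonIncSet m N s := by
  obtain ⟨M, hM⟩ := ramsey_aux_s5 m _ (fun _ => s) rfl
  refine ⟨M + 1, fun χ => ?_⟩
  obtain ⟨a, T, -, hT, hm⟩ := hM (M + 1) χ Finset.univ (by simp)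
  obtain ⟨U, hUT, hU⟩ := Finset.exists_subset_card_eq hT
  refine ⟨U.orderEmbOfFin hU, (U.orderEmbOfFin hU).strictMono, fun i j k hij hjk => ?_⟩
  have hmem : ∀ i, U.orderEmbOfFin hU i ∈ T := fun i => hUT (U.orderEmbOfFin_mem hU i)
  have h : ∀ i j, i < j → χ (U.orderEmbOfFin hU i) (U.orderEmbOfFin hU j) = a := fun i j hij =>
    hm _ (hmem i) _ (hmem j) ((U.orderEmbOfFin hU).strictMono hij)
  unfold NonIncTriple
  rw [h i j hij, h j k hjk, h i k (hij.trans hjk)]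
  simp

/-- There is a blue monotone tight path with `k` edges whose last two vertices are `x, y`. -/
def BluePathTo {N : ℕ} (χ : Fin N → Fin N → Fin N → Bool) (x y : Fin N) (k : ℕ) : Prop :=
  ∃ f : ℕ → Fin N, (∀ i ≤ k, f i < f (i + 1)) ∧
    (∀ i < k, χ (f i) (f (i + 1)) (f (i + 2)) = false) ∧ f k = x ∧ f (k + 1) = y

theorem BluePathTo.zero {N : ℕ} (χ : Fin N → Fin N → Fin N → Bool) {x y : Fin N}
    (h : x < y) : BluePathTo χ x y 0 :=
  ⟨fun i => if i = 0 then x else y, by intro i hi; obtain rfl : i = 0 := by omega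
                                       simpa using h, by simp, by simp, by simp⟩

theorem BluePathTo.extend {N : ℕ} {χ : Fin N → Fin N → Fin N → Bool} {x y z : Fin N} {k : ℕ}
    (h : BluePathTo χ x y k) (hyz : y < z) (hb : χ x y z = false) :
    BluePathTo χ y z (k + 1) := by
  obtain ⟨f, h1, h2, rfl, rfl⟩ := h
  refine ⟨fun i => if i ≤ k + 1 then f i else z, ?_, ?_, by simp, by simp⟩
  · intro i hi
    rcases Nat.lt_or_ge i (k + 1) with h | h
    · simpa [show i ≤ k + 1 by omega, show i ≤ k by omega] using h1 i (by omega)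
    · obtain rfl : i = k + 1 := by omega
      simpa using hyz
  · intro i hi
    rcases Nat.lt_or_ge i k with h | h
    · simpa [show i ≤ k + 1 by omega, show i ≤ k by omega, show i + 2 ≤ k + 1 by omega]
        using h2 i h
    · obtain rfl : i = k := by omega
      simpa using hb

theorem BluePathTo.contains {N n : ℕ} {χ : Fin N → Fin N → Fin N → Bool} {x y : Fin N}
    (hn : 3 ≤ n) (h : BluePathTo χ x y (n - 2)) : ContainsBlueTightPath N n χ := by
  obtain ⟨f, h1, h2, -, -⟩ := h
  refine ⟨fun i => f i, ?_, fun i hi => h2 i (by omega)⟩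
  have key : ∀ d i : ℕ, i + d + 1 < n → f i < f (i + d + 1) := by
    intro d
    induction d with
    | zero => intro i hi; exact h1 i (by omega)
    | succ d ih => intro i hi; exact (ih i (by omega)).trans (h1 (i + d + 1) (by omega))
  intro i j hij
  have hij' : (i : ℕ) < j := hij
  have := key (j - i - 1) i (by omega)
  rwa [show (i : ℕ) + (j - i - 1) + 1 = j by omega] at this

/-- `R_<(K_s^(3), P_n^(3)) ≤ g(n − 2, s)` for `s ≥ 2`, `n ≥ 3`. -/
theorem stmt5 (s n : ℕ) (hs : 2 ≤ s) (hn : 3 ≤ n) :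
    ordRamsey3 s n ≤ gFun (n - 2) s := by
  have hg : HasNonIncSet (n - 2) (gFun (n - 2) s) s :=
    Nat.sInf_mem (s := {N | HasNonIncSet (n - 2) N s}) (exists_hasNonIncSet (n - 2) s)
  apply Nat.sInf_le
  intro χ
  by_cases hP : ContainsBlueTightPath (gFun (n - 2) s) n χ
  · exact Or.inr hP
  left
  classical
  obtain ⟨f, hf, hinc⟩ := hg (fun x y => ⟨Nat.findGreatest (BluePathTo χ x y) (n - 3), by
    have := Nat.findGreatest_le (P := BluePathTo χ x y) (n - 3)
    omega⟩)
  refine ⟨f, hf, fun i j k hij hjk => ?_⟩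
  by_contra hred
  have hblue : χ (f i) (f j) (f k) = false := by simpa using hred
  have hle := (hinc i j k hij hjk).1
  simp only [Fin.mk_le_mk] at hle
  have hspec : BluePathTo χ (f i) (f j) (Nat.findGreatest (BluePathTo χ (f i) (f j)) (n - 3)) :=
    Nat.findGreatest_spec (Nat.zero_le _) (BluePathTo.zero χ (hf hij))
  have hle' := Nat.findGreatest_le (P := BluePathTo χ (f i) (f j)) (n - 3)
  have hext := hspec.extend (hf hjk) hblue
  rcases Nat.lt_or_ge (Nat.findGreatest (BluePathTo χ (f i) (f j)) (n - 3)) (n - 3) with h | h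
  · have := Nat.le_findGreatest (n := n - 3) h hext
    omega
  · apply hP
    refine BluePathTo.contains (x := f j) (y := f k) hn ?_
    have e : n - 2 = Nat.findGreatest (BluePathTo χ (f i) (f j)) (n - 3) + 1 := by omega
    convert hext using 1
end

section
/- For every integer s ≥ 2, there is a constant C = C(s) such that g(n, s) ≤ C · n^C for every n ≥ 1. -/
/-- `W` is a non-increasing set all of whose colors satisfy `A`. -/
def NISet {N n : ℕ} (χ : Fin N → Fin N → Fin n) (A : Fin n → Prop) (W : Finset (Fin N)) : Prop :=
  (∀ x ∈ W, ∀ y ∈ W, x < y → A (χ x y)) ∧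
    ∀ x ∈ W, ∀ y ∈ W, ∀ z ∈ W, x < y → y < z → NonIncTriple χ x y z

theorem NISet.insert_left {N n : ℕ} {χ : Fin N → Fin N → Fin n} {A : Fin n → Prop}
    {W : Finset (Fin N)} {x : Fin N} {a : Fin n} (h : NISet χ A W) (ha : A a)
    (hx : ∀ y ∈ W, x < y ∧ χ x y = a) (hle : ∀ c, A c → c ≤ a) :
    NISet χ A (insert x W) := by
  obtain ⟨h1, h2⟩ := h
  have h1' : ∀ u ∈ insert x W, ∀ y ∈ insert x W, u < y → A (χ u y) := by
    intro u hu y hy huy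
    rcases Finset.mem_insert.1 hu with rfl | hu' <;> rcases Finset.mem_insert.1 hy with rfl | hy'
    · exact absurd huy (lt_irrefl _)
    · rw [(hx y hy').2]; exact ha
    · exact absurd huy (not_lt.2 (hx u hu').1.le)
    · exact h1 u hu' y hy' huy
  refine ⟨h1', ?_⟩
  intro u hu y hy z hz huy hyz
  have hyW : y ∈ W := by
    rcases Finset.mem_insert.1 hy with rfl | hy
    · rcases Finset.mem_insert.1 hu with rfl | hu
      · exact absurd huy (lt_irrefl _)
      · exact absurd huy (not_lt.2 (hx u hu).1.le)
    · exact hy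
  have hzW : z ∈ W := by
    rcases Finset.mem_insert.1 hz with rfl | hz
    · exact absurd hyz (not_lt.2 (hx y hyW).1.le)
    · exact hz
  rcases Finset.mem_insert.1 hu with rfl | hu
  · refine ⟨?_, Or.inl ?_⟩
    · rw [(hx y hyW).2]; exact hle _ (h1 y hyW z hzW hyz)
    · rw [(hx y hyW).2, (hx z hzW).2]
  · exact h2 u hu y hyW z hzW huy hyz

theorem NISet.insert_right {N n : ℕ} {χ : Fin N → Fin N → Fin n} {A : Fin n → Prop}
    {W : Finset (Fin N)} {z : Fin N} {b : Fin n} (h : NISet χ A W) 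
    (hz : ∀ y ∈ W, y < z ∧ χ y z = b) (hle : ∀ c, A c → b ≤ c) {B : Fin n → Prop}
    (hAB : ∀ c, A c → B c) (hb : B b) :
    NISet χ B (insert z W) := by
  obtain ⟨h1, h2⟩ := h
  refine ⟨?_, ?_⟩
  · intro u hu y hy huy
    rcases Finset.mem_insert.1 hu with rfl | hu' <;> rcases Finset.mem_insert.1 hy with rfl | hy'
    · exact absurd huy (lt_irrefl _)
    · exact absurd huy (not_lt.2 (hz y hy').1.le)
    · rw [(hz u hu').2]; exact hb
    · exact hAB _ (h1 u hu' y hy' huy)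
  intro u hu y hy v hv huy hyv
  have hyW : y ∈ W := by
    rcases Finset.mem_insert.1 hy with rfl | hy
    · rcases Finset.mem_insert.1 hv with rfl | hv
      · exact absurd hyv (lt_irrefl _)
      · exact absurd hyv (not_lt.2 (hz v hv).1.le)
    · exact hy
  have huW : u ∈ W := by
    rcases Finset.mem_insert.1 hu with rfl | hu
    · exact absurd huy (not_lt.2 (hz y hyW).1.le)
    · exact hu
  rcases Finset.mem_insert.1 hv with rfl | hv
  · refine ⟨?_, Or.inr ?_⟩
    · rw [(hz y hyW).2]; exact hle _ (h1 u huW y hyW huy)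
    · rw [(hz y hyW).2, (hz u huW).2]
  · exact h2 u huW y hyW v hv huy hyv

theorem NISet.mono {N n : ℕ} {χ : Fin N → Fin N → Fin n} {A B : Fin n → Prop}
    {W : Finset (Fin N)} (h : NISet χ A W) (hAB : ∀ c, A c → B c) : NISet χ B W :=
  ⟨fun x hx y hy hxy => hAB _ (h.1 x hx y hy hxy), h.2⟩

open Classical in
theorem exists_nest {ι : Type} [Fintype ι] {n N : ℕ} (χ : Fin N → Fin N → Fin n)
    (cls : Fin n → ι) (t E : ℕ) (ht : 1 ≤ t)
    (hE : E = (n + 1) ^ (Fintype.card ι + 2) * (Fintype.card ι + 2) * t)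
    (Y : Finset (Fin N))
    (hY : Y.card = (n + 1) ^ (Fintype.card ι) * ((Fintype.card ι + 1) * E + 1)) :
    ∃ x z : Fin N, ∃ a b : Fin n, ∃ T ⊆ Y, x ∈ Y ∧ z ∈ Y ∧ cls a = cls b ∧ b ≤ a ∧ t ≤ T.card ∧
      ∀ y ∈ T, x < y ∧ y < z ∧ χ x y = a ∧ χ y z = b := by
  have hEpos : 0 < E := by rw [hE]; positivity
  set k := Fintype.card ι with hk
  let out : Fin N → ι → ℕ → Finset (Fin N) := fun y i m =>
    Y.filter (fun z => y < z ∧ cls (χ y z) = i ∧ (χ y z).val < m)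
  let m : Fin N → ι → ℕ := fun y i => Nat.findGreatest (fun m => (out y i m).card < E) n
  have hm1 : ∀ y i, (out y i (m y i)).card < E := by
    intro y i
    have : (out y i 0).card < E := by simpa [out] using hEpos
    exact Nat.findGreatest_spec (P := fun m => (out y i m).card < E) (Nat.zero_le n) this
  have hmn : ∀ y i, m y i ≤ n := fun y i => Nat.findGreatest_le n
  have hm2 : ∀ y i, m y i < n → E ≤ (out y i (m y i + 1)).card := by
    intro y i h
    have := Nat.findGreatest_is_greatest (P := fun m => (out y i m).card < E) 
      (Nat.lt_succ_self (m y i)) h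
    simpa using this
  let vec : Fin N → (ι → Fin (n + 1)) := fun y i => ⟨m y i, Nat.lt_succ_of_le (hmn y i)⟩
  obtain ⟨v, -, hv⟩ := Finset.exists_le_card_fiber_of_mul_le_card_of_maps_to
    (s := Y) (t := (Finset.univ : Finset (ι → Fin (n + 1)))) (f := vec)
    (n := (k + 1) * E + 1) (fun _ _ => Finset.mem_univ _) Finset.univ_nonempty
    (by rw [hY]; simp [hk])
  set V := Y.filter (fun y => vec y = v) with hV
  have hVne : V.Nonempty := Finset.card_pos.1 (by omega)
  set x := V.min' hVne with hx
  have hxV : x ∈ V := Finset.min'_mem _ _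
  have hveq : ∀ y ∈ V, ∀ i, m y i = (v i).val := by
    intro y hy i
    have := (Finset.mem_filter.1 hy).2
    rw [← this]
  let bad : Finset (Fin N) := Finset.univ.biUnion (fun i => out x i (m x i))
  have hbad : bad.card ≤ k * E := by
    refine Finset.card_biUnion_le.trans ?_
    refine (Finset.sum_le_sum (fun i _ => (hm1 x i).le)).trans ?_
    simp [hk]
  let good := (V.erase x) \ bad
  have hgood : E ≤ good.card := by
    have h1 := Finset.le_card_sdiff bad (V.erase x)
    have h2 := Finset.card_erase_of_mem hxV
    have h3 : (k + 1) * E = k * E + E := by ring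
    have h4 : (V.erase x).card - bad.card ≤ good.card := h1
    omega
  have hg : ∀ y ∈ good, x < y ∧ y ∈ Y ∧ 
      E ≤ (Y.filter (fun z => y < z ∧ cls (χ y z) = cls (χ x y) ∧ χ y z ≤ χ x y)).card := by
    intro y hy
    obtain ⟨hy1, hy2⟩ := Finset.mem_sdiff.1 hy
    obtain ⟨hne, hyV⟩ := Finset.mem_erase.1 hy1
    have hxy : x < y := lt_of_le_of_ne (Finset.min'_le _ _ hyV) (Ne.symm hne)
    have hyY := (Finset.mem_filter.1 hyV).1
    refine ⟨hxy, hyY, ?_⟩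
    have hc : m y (cls (χ x y)) ≤ (χ x y).val := by
      by_contra hlt
      apply hy2
      refine Finset.mem_biUnion.2 ⟨cls (χ x y), Finset.mem_univ _, ?_⟩
      refine Finset.mem_filter.2 ⟨hyY, hxy, rfl, ?_⟩
      rw [hveq x hxV, ← hveq y hyV]; omega
    refine (hm2 y (cls (χ x y)) (lt_of_le_of_lt hc (χ x y).isLt)).trans (Finset.card_le_card ?_)
    intro z hz
    obtain ⟨hz1, hz2, hz3, hz4⟩ := Finset.mem_filter.1 hz
    refine Finset.mem_filter.2 ⟨hz1, hz2, hz3, ?_⟩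
    rw [Fin.le_def]; omega
  let P : Finset (Σ _ : Fin N, Fin N) := good.sigma (fun y => 
    Y.filter (fun z => y < z ∧ cls (χ y z) = cls (χ x y) ∧ χ y z ≤ χ x y))
  have hP : E * E ≤ P.card := by
    rw [Finset.card_sigma]
    calc E * E ≤ good.card * E := Nat.mul_le_mul_right _ hgood
      _ ≤ _ := by
        rw [← smul_eq_mul]
        exact Finset.card_nsmul_le_sum _ _ _ (fun y hy => (hg y hy).2.2)
  let F : (Σ _ : Fin N, Fin N) → Fin N × Fin n × Fin n := fun w => (w.2, χ x w.1, χ w.1 w.2)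
  have hmaps : ∀ w ∈ P, F w ∈ Y ×ˢ (Finset.univ : Finset (Fin n × Fin n)) := by
    intro w hw
    have := (Finset.mem_filter.1 (Finset.mem_sigma.1 hw).2).1
    simpa [F] using this
  have hPne : P.Nonempty := Finset.card_pos.1 (lt_of_lt_of_le (Nat.mul_pos hEpos hEpos) hP)
  have hbound : (Y ×ˢ (Finset.univ : Finset (Fin n × Fin n))).card * t ≤ P.card := by
    refine le_trans ?_ hP
    have h1 : (Y ×ˢ (Finset.univ : Finset (Fin n × Fin n))).card = Y.card * (n * n) := by
      simp [Finset.card_product]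
    rw [h1, hY]
    calc (n + 1) ^ k * ((k + 1) * E + 1) * (n * n) * t 
        ≤ (n + 1) ^ k * ((k + 1) * E + E) * ((n + 1) * (n + 1)) * t := by
          gcongr <;> omega
      _ = ((n + 1) ^ (k + 2) * (k + 2) * t) * E := by ring
      _ = E * E := by rw [← hE]
  obtain ⟨⟨z, a, b⟩, hzab, hT⟩ := Finset.exists_le_card_fiber_of_mul_le_card_of_maps_to
    hmaps (hPne.elim (fun w hw => ⟨_, hmaps w hw⟩)) hbound
  set Q := P.filter (fun w => F w = (z, a, b)) with hQ
  have hQp : ∀ w ∈ Q, w.1 ∈ good ∧ w.2 = z ∧ χ x w.1 = a ∧ χ w.1 z = b ∧ w.1 < z ∧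
      cls b = cls a ∧ b ≤ a := by
    intro w hw
    obtain ⟨hw1, hw2⟩ := Finset.mem_filter.1 hw
    obtain ⟨hw3, hw4⟩ := Finset.mem_sigma.1 hw1
    obtain ⟨hw5, hw6, hw7, hw8⟩ := Finset.mem_filter.1 hw4
    simp only [F, Prod.mk.injEq] at hw2
    obtain ⟨e1, e2, e3⟩ := hw2
    rw [e2, e3] at hw7 hw8
    rw [e1] at hw6 e3
    exact ⟨hw3, e1, e2, e3, hw6, hw7, hw8⟩
  have hQne : Q.Nonempty := Finset.card_pos.1 (by omega)
  obtain ⟨w0, hw0⟩ := hQne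
  have h0 := hQp w0 hw0
  refine ⟨x, z, a, b, Q.image Sigma.fst, ?_, (Finset.mem_filter.1 hxV).1, 
    (Finset.mem_product.1 hzab).1, h0.2.2.2.2.2.1.symm, h0.2.2.2.2.2.2, ?_, ?_⟩
  · intro y hy
    obtain ⟨w, hw, rfl⟩ := Finset.mem_image.1 hy
    exact (hg _ (hQp w hw).1).2.1
  · rw [Finset.card_image_of_injOn]
    · exact hT
    · rintro ⟨y1, z1⟩ h1 ⟨y2, z2⟩ h2 h
      have e1 := (hQp _ h1).2.1
      have e2 := (hQp _ h2).2.1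
      simp only at e1 e2 h
      subst e1 e2 h
      rfl
  · intro y hy
    obtain ⟨w, hw, rfl⟩ := Finset.mem_image.1 hy
    have := hQp w hw
    exact ⟨(hg _ this.1).1, this.2.2.2.2.1, this.2.2.1, this.2.2.2.1⟩

open Classical in
theorem main_aux (M : ℕ) : ∀ (ι : Type) [Fintype ι] (sz : ι → ℕ), ∑ i, 3 ^ sz i = M →
    ∃ C D : ℕ, ∀ (n N : ℕ) (χ : Fin N → Fin N → Fin n) (cls : Fin n → ι) (Y : Finset (Fin N)),
      C * (n + 1) ^ D ≤ Y.card → 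
        ∃ i, ∃ W ⊆ Y, W.card = sz i ∧ NISet χ (fun c => cls c = i) W := by
  induction M using Nat.strong_induction_on with
  | _ M ih =>
  intro ι _ sz hM
  by_cases h0 : ∃ i, sz i = 0
  · obtain ⟨i, hi⟩ := h0
    exact ⟨0, 0, fun n N χ cls Y _ => ⟨i, ∅, by simp, by simp [hi], by simp [NISet]⟩⟩
  push Not at h0
  let sz' : ι → Option ι → ℕ := fun i o => 
    o.elim (sz i - 1) (fun j => if j = i then sz i - 1 else sz j)
  have hlt : ∀ i, ∑ o, 3 ^ sz' i o < M := by
    intro i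
    rw [Fintype.sum_option, ← hM]
    rw [← Finset.add_sum_erase _ _ (Finset.mem_univ i), 
      ← Finset.add_sum_erase (Finset.univ) (fun i => 3 ^ sz i) (Finset.mem_univ i)]
    have he : ∑ j ∈ Finset.univ.erase i, 3 ^ sz' i (some j) = 
        ∑ j ∈ Finset.univ.erase i, 3 ^ sz j := by
      refine Finset.sum_congr rfl (fun j hj => ?_)
      simp [sz', Finset.ne_of_mem_erase hj]
    rw [he]
    have h1 : (3:ℕ) ^ sz i = 3 * 3 ^ (sz i - 1) := by
      rw [← pow_succ']; congr 1; have := h0 i; omega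
    have h2 : 0 < (3:ℕ) ^ (sz i - 1) := by positivity
    simp only [sz', Option.elim, if_true]
    omega
  have hih := fun i => ih _ (hlt i) (Option ι) (sz' i) rfl
  choose Cf Df hCD using hih
  set k := Fintype.card ι with hk
  let C0 := ∑ i, Cf i + 1
  let D0 := ∑ i, Df i
  -- target size t = C0 * (n+1)^D0
  refine ⟨(k + 2) * ((k + 2) * C0), k + (k + 2 + D0), ?_⟩
  intro n N χ cls Y hY
  set t := C0 * (n + 1) ^ D0 with ht
  set E := (n + 1) ^ (k + 2) * (k + 2) * t with hE
  have ht1 : 1 ≤ t := Nat.mul_pos (Nat.succ_pos _) (by positivity)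
  have hE1 : 0 < E := Nat.mul_pos (by positivity) ht1
  have hle : (n + 1) ^ k * ((k + 1) * E + 1) ≤ Y.card := by
    refine le_trans ?_ hY
    calc (n + 1) ^ k * ((k + 1) * E + 1) ≤ (n + 1) ^ k * ((k + 1) * E + E) := by gcongr; omega
      _ = _ := by rw [hE, ht]; ring
  obtain ⟨Y', hY'Y, hY'c⟩ := Finset.exists_subset_card_eq hle
  obtain ⟨x, z, a, b, T, hTY, hxY, hzY, hab, hba, hTc, hT⟩ := 
    exists_nest χ cls t E ht1 hE Y' hY'c
  set i := cls a with hi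
  let cls' : Fin n → Option ι := fun c => if cls c = i ∧ a < c then none else some (cls c)
  have hTc' : Cf i * (n + 1) ^ Df i ≤ T.card := by
    refine le_trans ?_ hTc
    have h1 : Cf i ≤ C0 := 
      (Finset.single_le_sum (f := Cf) (fun _ _ => Nat.zero_le _) (Finset.mem_univ i)).trans
        (Nat.le_succ _)
    have h2 : Df i ≤ D0 := 
      Finset.single_le_sum (f := Df) (fun _ _ => Nat.zero_le _) (Finset.mem_univ i)
    exact Nat.mul_le_mul h1 (Nat.pow_le_pow_right (Nat.succ_pos _) h2)
  obtain ⟨o, W, hWT, hWc, hW⟩ := hCD i n N χ cls' T hTc'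
  have hWY : W ⊆ Y := hWT.trans (hTY.trans hY'Y)
  have hsi := h0 i
  rcases o with _ | j
  · refine ⟨i, insert z W, Finset.insert_subset (hY'Y hzY) hWY, ?_, ?_⟩
    · rw [Finset.card_insert_of_notMem, hWc]
      · simp only [sz', Option.elim]; omega
      · intro hz; exact lt_irrefl _ (hT z (hWT hz)).2.1
    · have key : ∀ c, cls' c = none → cls c = i ∧ a < c := by
        intro c hc
        by_contra hcon
        simp [cls', hcon] at hc
      refine hW.insert_right (b := b) (fun y hy => ?_) (fun c hc => ?_) (fun c hc => (key c hc).1) hab.symm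
      · exact ⟨(hT y (hWT hy)).2.1, (hT y (hWT hy)).2.2.2⟩
      · exact hba.trans (key c hc).2.le
  · have key : ∀ c, cls' c = some j → cls c = j ∧ (j = i → c ≤ a) := by
      intro c hc
      by_cases hcon : cls c = i ∧ a < c
      · simp [cls', hcon] at hc
      · have : cls c = j := by
          simp only [cls', if_neg hcon] at hc
          exact Option.some.inj hc
        exact ⟨this, fun hj => not_lt.1 (fun hac => hcon ⟨this.trans hj, hac⟩)⟩
    by_cases hj : j = i
    · refine ⟨i, insert x W, Finset.insert_subset (hY'Y hxY) hWY, ?_, ?_⟩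
      · rw [Finset.card_insert_of_notMem, hWc]
        · simp only [sz', Option.elim, if_pos hj]; omega
        · intro hz; exact lt_irrefl _ (hT x (hWT hz)).1
      · refine (hW.mono (B := fun c => cls c = i ∧ c ≤ a) 
          (fun c hc => ⟨(key c hc).1.trans hj, (key c hc).2 hj⟩) |>.insert_left (x := x) (a := a)
          ⟨rfl, le_rfl⟩ (fun y hy => ?_) (fun c hc => hc.2)).mono (fun c hc => hc.1)
        exact ⟨(hT y (hWT hy)).1, (hT y (hWT hy)).2.2.1⟩
    · refine ⟨j, W, hWY, ?_, hW.mono (fun c hc => (key c hc).1)⟩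
      rw [hWc]; simp [sz', hj]

/-- for every `s ≥ 2` there is a constant `C = C(s)` such that
`g(n, s) ≤ C · n^C` for every `n ≥ 1`. -/
theorem stmt6 (s : ℕ) (hs : 2 ≤ s) :
    ∃ C : ℕ, ∀ n : ℕ, 1 ≤ n → gFun n s ≤ C * n ^ C := by
  obtain ⟨C, D, h⟩ := main_aux _ Unit (fun _ => s) rfl
  refine ⟨C * 2 ^ D + D, fun n hn => ?_⟩
  have h1 : gFun n s ≤ C * (n + 1) ^ D := by
    refine Nat.sInf_le ?_
    intro χ
    obtain ⟨_, W, -, hWc, hW⟩ := h n _ χ (fun _ => ()) Finset.univ (by simp)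
    refine ⟨W.orderEmbOfFin hWc, (W.orderEmbOfFin hWc).strictMono, fun i j k hij hjk => ?_⟩
    exact hW.2 _ (W.orderEmbOfFin_mem hWc i) _ (W.orderEmbOfFin_mem hWc j) _
      (W.orderEmbOfFin_mem hWc k) ((W.orderEmbOfFin hWc).strictMono hij)
      ((W.orderEmbOfFin hWc).strictMono hjk)
  refine h1.trans ?_
  calc C * (n + 1) ^ D ≤ C * (2 * n) ^ D := by gcongr; omega
    _ = C * 2 ^ D * n ^ D := by ring
    _ ≤ (C * 2 ^ D + D) * n ^ (C * 2 ^ D + D) := by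
        gcongr
        · omega
        · omega
end
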